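/- Let H : 𝕋^d × ℝ^d → ℝ be a C² Tonelli Hamiltonian and u_∞ a C¹ (hence C^{1,1}) upper Green regular weak K.A.M. solution. For every sufficiently small ε > 0, every semi-concave approximated solution u (a discounted solution u_λ with λ > 0 small enough, an iterate T_t U of the Lax–Oleinik semigroup with t large enough, or a weak K.A.M. solution u_c for a cohomology class c close enough to 0) that is sufficiently close to u_∞ in the uniform C¹ topology satisfies Leb{ θ ∈ 𝕋^d : D²u(θ) − D²u_∞(θ) ≮ ε·Id } < ε. -/

import Mathlib

/-!
Throughout, the closed manifold `M = 𝕋^d = ℝ^d/ℤ^d` is modelled by `ℤ^d`-periodic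
functions on `ℝ^d` (with the Euclidean structure), and its (co)tangent bundle
`T^*𝕋^d = 𝕋^d × ℝ^d` by `ℤ^d`-periodic (in the base variable) data on `ℝ^d × ℝ^d`.
-/

open scoped RealInnerProductSpace
open Filter MeasureTheory Metric Set Asymptotics

noncomputable section

/-- The universal cover `ℝ^d` of the torus `𝕋^d`. -/
abbrev Euc (d : ℕ) : Type := EuclideanSpace ℝ (Fin d)

/-- The phase space `T^*𝕋^d`, modelled as `ℝ^d × ℝ^d` with `ℤ^d`-periodic data. -/
abbrev Phase (d : ℕ) : Type := Euc d × Euc d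

/-- An integer vector, viewed in `ℝ^d`. -/
def intVec {d : ℕ} (k : Fin d → ℤ) : Euc d := WithLp.toLp 2 fun i => (k i : ℝ)

/-- `f` descends to the torus `𝕋^d = ℝ^d/ℤ^d`. -/
def PerFun {d : ℕ} {α : Type*} (f : Euc d → α) : Prop :=
  ∀ (k : Fin d → ℤ) (x : Euc d), f (x + intVec k) = f x

/-- `H` descends to `T^*𝕋^d = 𝕋^d × ℝ^d`. -/
def PerPhase {d : ℕ} {α : Type*} (H : Phase d → α) : Prop :=
  ∀ (k : Fin d → ℤ) (q p : Euc d), H (q + intVec k, p) = H (q, p)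

/-- Positive definiteness of the fiberwise Hessian. -/
def ConvexInFiber {d : ℕ} (H : Phase d → ℝ) : Prop :=
  ∀ q p v, v ≠ 0 → 0 < iteratedFDeriv ℝ 2 (fun p' => H (q, p')) p ![v, v]

/-- A `C²` Tonelli Hamiltonian on `T^*𝕋^d`. -/
structure TonelliHam {d : ℕ} (H : Phase d → ℝ) : Prop where
  periodic : PerPhase H
  smooth : ContDiff ℝ 2 H
  convex : ConvexInFiber H
  superlinear : ∀ A : ℝ, ∃ B : ℝ, ∀ q p, A * ‖p‖ + B ≤ H (q, p)

/-- A `C²` Tonelli Lagrangian on `T𝕋^d`. -/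
structure TonelliLag {d : ℕ} (L : Phase d → ℝ) : Prop where
  periodic : PerPhase L
  smooth : ContDiff ℝ 2 L
  convex : ConvexInFiber L
  superlinear : ∀ A : ℝ, ∃ B : ℝ, ∀ q v, A * ‖v‖ + B ≤ L (q, v)

/-- The Lagrangian associated to `H` by Legendre duality. -/
def LegendreL {d : ℕ} (H : Phase d → ℝ) (x : Phase d) : ℝ :=
  sSup {r | ∃ p : Euc d, r = ⟪p, x.2⟫ - H (x.1, p)}

/-- The Mañé critical value `α(H)`. -/
def maneCritical {d : ℕ} (H : Phase d → ℝ) : ℝ :=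
  sInf {c | ∃ u : Euc d → ℝ, ContDiff ℝ (⊤ : ℕ∞) u ∧ PerFun u ∧ ∀ q, H (q, gradient u q) ≤ c}

/-- The Mañé critical value `α(c)` of the cohomology class of the constant form `cf`. -/
def maneCriticalOf {d : ℕ} (H : Phase d → ℝ) (cf : Euc d) : ℝ :=
  maneCritical fun x : Phase d => H (x.1, cf + x.2)

/-- `γ` is absolutely continuous on `[a,b]` with a.e. derivative `γ'`. -/
def ACOn {d : ℕ} (γ γ' : ℝ → Euc d) (a b : ℝ) : Prop :=
  IntervalIntegrable γ' volume a b ∧ ∀ t ∈ Icc a b, γ t = γ a + ∫ s in a..t, γ' s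

/-- Values entering the (discounted, cohomologically twisted) Lax–Oleinik infimum. -/
def LOvals {d : ℕ} (L : Phase d → ℝ) (cf : Euc d) (av lam : ℝ) (u : Euc d → ℝ) (t : ℝ)
    (q : Euc d) : Set ℝ :=
  {r | ∃ γ γ' : ℝ → Euc d, ACOn γ γ' (-t) 0 ∧ γ 0 = q ∧
     IntervalIntegrable (fun s => Real.exp (lam * s) * (L (γ s, γ' s) - ⟪cf, γ' s⟫ + av))
       volume (-t) 0 ∧
     r = Real.exp (-(lam * t)) * u (γ (-t)) +
         ∫ s in (-t)..0, Real.exp (lam * s) * (L (γ s, γ' s) - ⟪cf, γ' s⟫ + av)}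

/-- The (discounted, twisted) Lax–Oleinik semigroup `T^{cf,λ}_t u (q)`. -/
def LaxOleinik {d : ℕ} (L : Phase d → ℝ) (cf : Euc d) (av lam : ℝ) (u : Euc d → ℝ) (t : ℝ)
    (q : Euc d) : ℝ :=
  sInf (LOvals L cf av lam u t q)

/-- A weak K.A.M. solution: a fixed point of the Lax–Oleinik semigroup. -/
def IsWeakKAM {d : ℕ} (H : Phase d → ℝ) (u : Euc d → ℝ) : Prop :=
  Continuous u ∧ PerFun u ∧
    ∀ t > (0:ℝ), ∀ q, LaxOleinik (LegendreL H) 0 (maneCritical H) 0 u t q = u q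

/-- A fixed point of the modified Lax–Oleinik semigroup `T^c_t` for the class `cf`. -/
def IsFixedPtModified {d : ℕ} (H : Phase d → ℝ) (cf : Euc d) (u : Euc d → ℝ) : Prop :=
  Continuous u ∧ PerFun u ∧
    ∀ t > (0:ℝ), ∀ q, LaxOleinik (LegendreL H) cf (maneCriticalOf H cf) 0 u t q = u q

/-- The discounted solution `u_λ` of `λu + H(x,du) = α(H)`, via its variational formula. -/
def IsDiscountedSol {d : ℕ} (H : Phase d → ℝ) (lam : ℝ) (u : Euc d → ℝ) : Prop :=
  Continuous u ∧ PerFun u ∧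
    ∀ q, u q = sInf {r | ∃ γ γ' : ℝ → Euc d, (∀ a ≤ (0:ℝ), ACOn γ γ' a 0) ∧ γ 0 = q ∧
      IntegrableOn (fun s => Real.exp (lam * s) * (LegendreL H (γ s, γ' s) + maneCritical H))
        (Iic 0) volume ∧
      r = ∫ s in Iic (0:ℝ), Real.exp (lam * s) * (LegendreL H (γ s, γ' s) + maneCritical H)}

/-- The `λ`-discounted Hamiltonian vector field `(∂H/∂p, -∂H/∂q - λp)`. -/
def hamVF {d : ℕ} (H : Phase d → ℝ) (lam : ℝ) (x : Phase d) : Phase d :=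
  (gradient (fun p => H (x.1, p)) x.2, -gradient (fun q => H (q, x.2)) x.1 - lam • x.2)

/-- `φ` is the (conformally) Hamiltonian flow of equation (1) for `(H, λ)`. -/
def IsConformalFlow {d : ℕ} (H : Phase d → ℝ) (lam : ℝ) (φ : ℝ → Phase d → Phase d) : Prop :=
  (∀ x, φ 0 x = x) ∧ (∀ s t x, φ s (φ t x) = φ (s + t) x) ∧
    ∀ x t, HasDerivAt (fun τ => φ τ x) (hamVF H lam (φ t x)) t

/-- The vertical subspace `V = ker Dπ`. -/
def Vert (d : ℕ) : Submodule ℝ (Phase d) :=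
  Submodule.prod (⊥ : Submodule ℝ (Euc d)) (⊤ : Submodule ℝ (Euc d))

/-- The image `Dφ_t(y) V(y)` of the vertical at `y` by the linearized flow. -/
def pushV {d : ℕ} (φ : ℝ → Phase d → Phase d) (t : ℝ) (y : Phase d) : Submodule ℝ (Phase d) :=
  Submodule.map (fderiv ℝ (φ t) y).toLinearMap (Vert d)

/-- `G_t(x) = Dφ_t V(φ_{-t} x)`. -/
def GreenT {d : ℕ} (φ : ℝ → Phase d → Phase d) (t : ℝ) (x : Phase d) : Submodule ℝ (Phase d) :=
  pushV φ t (φ (-t) x)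

/-- The piece of orbit `(φ_t x)_{t ∈ I}` has no conjugate points. -/
def NoConjPts {d : ℕ} (φ : ℝ → Phase d → Phase d) (x : Phase d) (I : Set ℝ) : Prop :=
  ∀ s ∈ I, ∀ t ∈ I, s ≠ t → pushV φ (t - s) (φ s x) ⊓ Vert d = ⊥

/-- `S` is the height `ℋ(G)` of the Lagrangian subspace `G`:
`G` is the graph `{(δθ, S δθ)}` of the symmetric map `S`. -/
def IsHeight {d : ℕ} (G : Submodule ℝ (Phase d)) (S : Euc d →L[ℝ] Euc d) : Prop :=
  (∀ v w, ⟪S v, w⟫ = ⟪v, S w⟫) ∧ G = LinearMap.graph (S : Euc d →ₗ[ℝ] Euc d)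

open Classical in
/-- The height of a subspace transverse to the vertical (junk value `0` otherwise). -/
def heightOf {d : ℕ} (G : Submodule ℝ (Phase d)) : Euc d →L[ℝ] Euc d :=
  if h : ∃ S, IsHeight G S then h.choose else 0

/-- Order of symmetric operators as quadratic forms. -/
def SymLE {d : ℕ} (S T : Euc d →L[ℝ] Euc d) : Prop := ∀ v, ⟪S v, v⟫ ≤ ⟪T v, v⟫

/-- Strict order of symmetric operators as quadratic forms (positive definite difference). -/
def SymLT {d : ℕ} (S T : Euc d →L[ℝ] Euc d) : Prop := ∀ v, v ≠ 0 → ⟪S v, v⟫ < ⟪T v, v⟫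

/-- `u` has (Alexandrov) derivative `p` and second derivative `S` at `θ`. -/
def HasAlexandrovAt {d : ℕ} (u : Euc d → ℝ) (p : Euc d) (S : Euc d →L[ℝ] Euc d)
    (θ : Euc d) : Prop :=
  HasGradientAt u p θ ∧
    (fun y => u y - u θ - ⟪p, y - θ⟫ - (1/2) * ⟪S (y - θ), y - θ⟫)
      =o[nhds θ] fun y => ‖y - θ‖ ^ 2

open Classical in
/-- The Alexandrov second derivative `D²u(θ)` (junk value `0` where it does not exist). -/
def D2 {d : ℕ} (u : Euc d → ℝ) (θ : Euc d) : Euc d →L[ℝ] Euc d :=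
  if h : ∃ pS : Euc d × (Euc d →L[ℝ] Euc d), HasAlexandrovAt u pS.1 pS.2 θ then h.choose.2 else 0

/-- `‖S‖ = sup_{‖v‖=1} |S(v,v)|`. -/
def qNorm {d : ℕ} (S : Euc d →L[ℝ] Euc d) : ℝ :=
  ⨆ v : (sphere (0 : Euc d) 1 : Set (Euc d)), |⟪S v.1, v.1⟫|

/-- A fundamental domain of `𝕋^d` in `ℝ^d`. -/
def fundCube (d : ℕ) : Set (Euc d) := {x | ∀ i, x i ∈ Ico (0:ℝ) 1}

/-- The distance `d_{2,1}(u,v) = ∫_{𝕋^d} ‖D²u - D²v‖`. -/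
def d21 {d : ℕ} (u v : Euc d → ℝ) : ℝ := ∫ θ in fundCube d, qNorm (D2 u θ - D2 v θ)

/-- Semi-concavity. -/
def SemiConcave {d : ℕ} (u : Euc d → ℝ) : Prop :=
  ∃ K : ℝ, ∀ x, ∃ p, ∀ y, u y ≤ u x + ⟪p, y - x⟫ + K * ‖y - x‖ ^ 2

/-- `u` is upper Green regular: at Lebesgue-a.e. `θ`, `ℋ(G₊(θ, du(θ))) = D²u(θ)`. -/
def UpperGreenRegular {d : ℕ} (φ : ℝ → Phase d → Phase d) (u : Euc d → ℝ) : Prop :=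
  ∀ᵐ θ ∂(volume : Measure (Euc d)), ∃ p S, HasGradientAt u p θ ∧
    (∀ t > (0:ℝ), ∃ S', IsHeight (GreenT φ t (θ, p)) S') ∧
    Tendsto (fun t : ℝ => heightOf (GreenT φ t (θ, p))) atTop (nhds S) ∧
    HasAlexandrovAt u p S θ

/-- The graph `𝒢(du) ⊂ T^*𝕋^d` of the differential of `u`. -/
def gradGraph {d : ℕ} (u : Euc d → ℝ) : Set (Phase d) := {x | HasGradientAt u x.2 x.1}

/-- The graph `𝒢(η_c + du)` where `η_c` is the constant form `cf`. -/
def gradGraphShift {d : ℕ} (cf : Euc d) (u : Euc d → ℝ) : Set (Phase d) :=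
  {x | ∃ p, HasGradientAt u p x.1 ∧ x.2 = cf + p}

/-!
Let `θ` be an Alexandrov point of an approximated solution `u`, and `p = du(θ)`. Up to a linear
form, `u` is nearly minimized on `[-T, 0]` by curves. A graph which stays transverse to the vertical
along the orbit of `(θ, p)` has slopes solving a Riccati equation. If its slope at time `0` lies
below `D²u(θ)`, a strict subsolution close to it calibrates the action from below and confines the
near-minimizers ending near `θ` to a neighbourhood of the orbit. Comparing them with perturbed
orbits through their endpoints at time `-T` gives `D²u(θ) ≤ Z_T`, where the graph of `Z_T` is the
image of the vertical at time `-T`.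

The graph of `-K · Id` with `K` large is such a graph as long as the orbit has no conjugate points:
fiberwise convexity takes care of small times, compactness of the others. Both transversality and
`Z_T` are stable under perturbations of the orbit and of the discount, and for `T` large `Z_T` is
close to the height of the positive Green bundle, which is `D²u_∞(θ)` for almost every `θ`. Since
this holds uniformly near almost every point, Alexandrov's theorem, which provides `D²u(θ)`, and
continuity of the measure from above leave an exceptional set of measure less than `ε`.
-/

/-! ### Alexandrov's theorem -/

section Subgradient

variable {E : Type*} [NormedAddCommGroup E] [InnerProductSpace ℝ E]

/-- `p` is a subgradient of `φ` at `x`, i.e. `p ∈ ∂φ(x)` in the sense of convex analysis. -/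
def IsSubgradient (φ : E → ℝ) (p x : E) : Prop := ∀ y, φ x + ⟪p, y - x⟫ ≤ φ y

variable {φ : E → ℝ} {q J : E → E}

theorem convexOn_univ_of_isSubgradient (hq : ∀ x, IsSubgradient φ (q x) x) :
    ConvexOn ℝ univ φ := by
  refine ⟨convex_univ, fun x _ y _ a b ha hb hab => ?_⟩
  set z := a • x + b • y with hz
  have balance : a * ⟪q z, x - z⟫ + b * ⟪q z, y - z⟫ = 0 := by
    rw [← real_inner_smul_right, ← real_inner_smul_right, ← inner_add_right,
      show a • (x - z) + b • (y - z) = z - (a + b) • z by rw [hz]; module, hab, one_smul,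
      sub_self, inner_zero_right]
  calc φ z = a * (φ z + ⟪q z, x - z⟫) + b * (φ z + ⟪q z, y - z⟫) := by
        linear_combination (-φ z) * hab - balance
    _ ≤ a • φ x + b • φ y := by
        simp only [smul_eq_mul]; gcongr <;> exact hq z _

theorem IsSubgradient.tendsto_half_sq_add_cocompact [ProperSpace E] {p : E}
    (hp : IsSubgradient φ p 0) (z : E) :
    Tendsto (fun x => 1 / 2 * ‖x‖ ^ 2 + φ x - ⟪z, x⟫) (cocompact E) atTop := by
  set C := ‖p‖ + ‖z‖ with hC
  have lower_bound (x : E) :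
      ‖x‖ * (1 / 2 * ‖x‖ - C) + φ 0 ≤ 1 / 2 * ‖x‖ ^ 2 + φ x - ⟪z, x⟫ := by
    have h_sub := hp x
    rw [sub_zero] at h_sub
    have h_px : -(‖p‖ * ‖x‖) ≤ ⟪p, x⟫ := neg_le_of_abs_le (abs_real_inner_le_norm _ _)
    have h_zx : ⟪z, x⟫ ≤ ‖z‖ * ‖x‖ := real_inner_le_norm _ _
    rw [hC]
    linarith
  have quadratic : Tendsto (fun r : ℝ => r * (1 / 2 * r - C) + φ 0) atTop atTop :=
    tendsto_atTop_add_const_right _ _ <| tendsto_id.atTop_mul_atTop₀ <|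
      tendsto_atTop_add_const_right _ _ (tendsto_id.const_mul_atTop (by norm_num))
  exact tendsto_atTop_mono lower_bound (quadratic.comp (tendsto_norm_cocompact_atTop))

theorem isSubgradient_of_isMinOn_half_sq_add (hφ : ConvexOn ℝ univ φ) {x z : E}
    (hx : ∀ y, 1 / 2 * ‖x‖ ^ 2 + φ x - ⟪z, x⟫ ≤ 1 / 2 * ‖y‖ ^ 2 + φ y - ⟪z, y⟫) :
    IsSubgradient φ (z - x) x := by
  intro y
  have first_order : ∀ t ∈ Ioc (0 : ℝ) 1,
      φ x + ⟪z - x, y - x⟫ - φ y ≤ 1 / 2 * ‖y - x‖ ^ 2 * t := by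
    rintro t ⟨ht, ht1⟩
    have h_min := hx (x + t • (y - x))
    have h_conv := hφ.2 (mem_univ x) (mem_univ y) (sub_nonneg.2 ht1) ht.le (by ring)
    rw [show (1 - t) • x + t • y = x + t • (y - x) by module] at h_conv
    rw [norm_add_sq_real, inner_add_right, inner_smul_right, inner_smul_right, norm_smul,
      mul_pow, Real.norm_eq_abs, sq_abs] at h_min
    simp only [smul_eq_mul] at h_conv
    rw [inner_sub_left]
    refine le_of_mul_le_mul_left ?_ ht
    linarith
  have h_lim : Tendsto (fun t : ℝ => 1 / 2 * ‖y - x‖ ^ 2 * t) (nhdsWithin 0 (Ioi 0))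
      (nhds 0) := by
    have : Continuous fun t : ℝ => 1 / 2 * ‖y - x‖ ^ 2 * t := by fun_prop
    simpa only [mul_zero] using (this.tendsto 0).mono_left nhdsWithin_le_nhds
  have := ge_of_tendsto h_lim <|
    mem_of_superset (Ioc_mem_nhdsGT one_pos) first_order
  linarith

theorem exists_isSubgradient_sub [FiniteDimensional ℝ E] (hq : ∀ x, IsSubgradient φ (q x) x)
    (z : E) : ∃ x, IsSubgradient φ (z - x) x := by
  have : ProperSpace E := FiniteDimensional.proper_real E
  have hφ := convexOn_univ_of_isSubgradient hq
  have hφ_cont : Continuous φ := continuousOn_univ.1 (hφ.continuousOn isOpen_univ)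
  have h_cont : Continuous fun x => 1 / 2 * ‖x‖ ^ 2 + φ x - ⟪z, x⟫ := by fun_prop
  obtain ⟨x, hx⟩ := h_cont.exists_forall_le ((hq 0).tendsto_half_sq_add_cocompact z)
  exact ⟨x, isSubgradient_of_isMinOn_half_sq_add hφ hx⟩

theorem IsSubgradient.norm_sub_sq_le_inner {x y z w : E} (hx : IsSubgradient φ (z - x) x)
    (hy : IsSubgradient φ (w - y) y) : ‖x - y‖ ^ 2 ≤ ⟪z - w, x - y⟫ := by
  have hxy := hx y
  have hyx := hy x
  rw [← neg_sub x y, inner_neg_right] at hxy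
  have expand : ⟪z - w, x - y⟫ - ‖x - y‖ ^ 2 = ⟪z - x, x - y⟫ - ⟪w - y, x - y⟫ := by
    rw [← real_inner_self_eq_norm_sq, ← inner_sub_left, ← inner_sub_left]; congr 1; abel
  linarith

theorem lipschitzWith_one_of_norm_sub_sq_le_inner
    (hJ : ∀ z w, ‖J z - J w‖ ^ 2 ≤ ⟪z - w, J z - J w⟫) : LipschitzWith 1 J := by
  refine LipschitzWith.of_dist_le_mul fun z w => ?_
  rw [dist_eq_norm, dist_eq_norm, NNReal.coe_one, one_mul]
  have h_sq := (hJ z w).trans (real_inner_le_norm _ _)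
  rcases (norm_nonneg (J z - J w)).eq_or_lt with h | h
  · rw [← h]; positivity
  · exact le_of_mul_le_mul_right (sq ‖J z - J w‖ ▸ h_sq) h

/-- A firmly nonexpansive map that expands near `z` cannot bring far away points close to `J z`:
the segment from `z` to `z'` leaves `ball z r` at a point `w`, and monotonicity along
`z, w, z'` propagates the separation of `J w` from `J z` to `J z'`. -/
theorem sq_mul_le_norm_sub_of_le_norm_sub (hJ : ∀ z w, ‖J z - J w‖ ^ 2 ≤ ⟪z - w, J z - J w⟫)
    {z z' : E} {c r : ℝ} (hc : 0 ≤ c) (hr : 0 < r)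
    (h_lower : ∀ w, ‖w - z‖ ≤ r → c * ‖w - z‖ ≤ ‖J w - J z‖) (hz' : r < ‖z' - z‖) :
    c ^ 2 * r ≤ ‖J z' - J z‖ := by
  have h_pos : 0 < ‖z' - z‖ := hr.trans hz'
  set t := r / ‖z' - z‖ with ht
  have ht0 : 0 < t := by positivity
  have ht1 : t < 1 := (div_lt_one h_pos).2 hz'
  set w := z + t • (z' - z) with hw
  have hwz : w - z = t • (z' - z) := add_sub_cancel_left _ _
  have hz'w : z' - w = (1 - t) • (z' - z) := by rw [hw]; module
  have h_norm : ‖w - z‖ = r := by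
    rw [hwz, norm_smul, Real.norm_of_nonneg ht0.le, ht, div_mul_cancel₀ _ h_pos.ne']
  have h_outer : 0 ≤ ⟪z' - z, J z' - J w⟫ := by
    have := (sq_nonneg _).trans (hJ z' w)
    rw [hz'w, real_inner_smul_left] at this
    exact nonneg_of_mul_nonneg_right this (by linarith)
  have h_total : ⟪w - z, J w - J z⟫ ≤ ⟪w - z, J z' - J z⟫ := by
    rw [hwz, real_inner_smul_left, real_inner_smul_left, ← sub_add_sub_cancel (J z') (J w),
      inner_add_right]
    exact mul_le_mul_of_nonneg_left (le_add_of_nonneg_left h_outer) ht0.le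
  refine le_of_mul_le_mul_left ?_ hr
  calc r * (c ^ 2 * r) = (c * ‖w - z‖) ^ 2 := by rw [h_norm]; ring
    _ ≤ ‖J w - J z‖ ^ 2 := by gcongr; exact h_lower w h_norm.le
    _ ≤ ⟪w - z, J z' - J z⟫ := (hJ w z).trans h_total
    _ ≤ r * ‖J z' - J z‖ := h_norm ▸ real_inner_le_norm _ _

theorem continuousAt_leftInverse_of_norm_sub_sq_le_inner
    (hJ : ∀ z w, ‖J z - J w‖ ^ 2 ≤ ⟪z - w, J z - J w⟫) {g : E → E}
    (hg : Function.LeftInverse J g) {A : E ≃L[ℝ] E} {x : E}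
    (hA : HasFDerivAt J (A : E →L[ℝ] E) (g x)) : ContinuousAt g x := by
  obtain ⟨K, hK, h_expand⟩ := (hA.isTheta_sub A.toHomeomorph.isInducing).isBigO_symm.exists_pos
  obtain ⟨r, hr, h_ball⟩ := Metric.eventually_nhds_iff_ball.1 h_expand.bound
  have h_lower (w : E) (hw : ‖w - g x‖ ≤ r / 2) : K⁻¹ * ‖w - g x‖ ≤ ‖J w - J (g x)‖ := by
    rw [inv_mul_le_iff₀ hK]
    exact h_ball w (by rw [mem_ball_iff_norm]; linarith)
  rw [Metric.continuousAt_iff]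
  intro ε hε
  refine ⟨min (K⁻¹ ^ 2 * (r / 2)) (K⁻¹ * ε), by positivity, fun {y} hy => ?_⟩
  rw [dist_eq_norm, lt_min_iff] at hy
  have h_near : ‖g y - g x‖ ≤ r / 2 := by
    by_contra! h_far
    have := sq_mul_le_norm_sub_of_le_norm_sub hJ (by positivity) (by positivity) h_lower h_far
    rw [hg, hg] at this
    linarith [hy.1]
  have := h_lower _ h_near
  rw [hg, hg] at this
  rw [dist_eq_norm]
  exact lt_of_mul_lt_mul_left (this.trans_lt hy.2) (by positivity)

end Subgradient

section AlmostEverywhere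

open Measure

variable {E : Type*} [NormedAddCommGroup E] [InnerProductSpace ℝ E] [FiniteDimensional ℝ E]
  [MeasurableSpace E] [BorelSpace E] (μ : Measure E) [μ.IsAddHaarMeasure]

theorem addHaar_image_eq_zero_of_lipschitzWith_one {J : E → E} (hJ : LipschitzWith 1 J) {s : Set E}
    (hs : μ s = 0) : μ (J '' s) = 0 := by
  let ν : Measure E := μH[Module.finrank ℝ E]
  have h_image : ν (J '' s) ≤ ν s := by
    simpa using hJ.hausdorffMeasure_image_le (d := Module.finrank ℝ E) (by positivity) s
  have h_null : ν s = 0 := absolutelyContinuous_isAddHaarMeasure ν μ hs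
  exact absolutelyContinuous_isAddHaarMeasure μ ν (le_antisymm (h_null ▸ h_image) bot_le)

variable {φ : E → ℝ} {q : E → E}

/-- Minty's trick: `J = (id + ∂φ)⁻¹` is `1`-Lipschitz, hence differentiable with invertible
derivative off a set with null image, and `q` inherits differentiability from
`q = J⁻¹ - id`. -/
theorem ae_differentiableAt_of_isSubgradient (hq : ∀ x, IsSubgradient φ (q x) x) :
    ∀ᵐ x ∂μ, DifferentiableAt ℝ q x := by
  choose J hJ using exists_isSubgradient_sub hq
  have h_firm (z w : E) : ‖J z - J w‖ ^ 2 ≤ ⟪z - w, J z - J w⟫ :=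
    (hJ z).norm_sub_sq_le_inner (hJ w)
  have h_lip : LipschitzWith 1 J := lipschitzWith_one_of_norm_sub_sq_le_inner h_firm
  have h_inv : Function.LeftInverse J fun x => x + q x := fun x => by
    have h_sub : IsSubgradient φ ((x + q x) - x) x := by simpa only [add_sub_cancel_left] using hq x
    have := (hJ (x + q x)).norm_sub_sq_le_inner h_sub
    rw [sub_self, inner_zero_left] at this
    exact sub_eq_zero.1 (norm_eq_zero.1 (pow_eq_zero_iff two_ne_zero |>.1
      (le_antisymm this (sq_nonneg _))))
  have h_nondiff : μ (J '' {z | ¬ DifferentiableAt ℝ J z}) = 0 :=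
    addHaar_image_eq_zero_of_lipschitzWith_one μ h_lip (ae_iff.1 h_lip.ae_differentiableAt)
  have h_crit : μ (J '' {z | DifferentiableAt ℝ J z ∧ (fderiv ℝ J z).det = 0}) = 0 :=
    addHaar_image_eq_zero_of_det_fderivWithin_eq_zero μ (f' := fderiv ℝ J)
      (fun z hz => hz.1.hasFDerivAt.hasFDerivWithinAt) (fun z hz => hz.2)
  filter_upwards [measure_eq_zero_iff_ae_notMem.1 h_nondiff,
    measure_eq_zero_iff_ae_notMem.1 h_crit] with x hx_diff hx_crit
  have hJ_diff : DifferentiableAt ℝ J (x + q x) := by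
    by_contra h; exact hx_diff ⟨_, h, h_inv x⟩
  have h_det : (fderiv ℝ J (x + q x)).det ≠ 0 := fun h => hx_crit ⟨_, ⟨hJ_diff, h⟩, h_inv x⟩
  have hA : HasFDerivAt J
      ((fderiv ℝ J (x + q x)).toContinuousLinearEquivOfDetNeZero h_det : E →L[ℝ] E) (x + q x) :=
    hJ_diff.hasFDerivAt
  have h_diff := (HasFDerivAt.of_local_left_inverse
    (continuousAt_leftInverse_of_norm_sub_sq_le_inner h_firm h_inv hA) hA
    (Eventually.of_forall h_inv)).differentiableAt.sub differentiableAt_id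
  exact h_diff.congr_of_eventuallyEq (Eventually.of_forall fun y => by simp)

end AlmostEverywhere

theorem sub_le_of_forall_sub_le_mul_add_sq {F : ℝ → ℝ} {c C : ℝ}
    (h : ∀ a b, 0 ≤ a → a ≤ b → b ≤ 1 → F b - F a ≤ c * (b - a) + C * (b - a) ^ 2) :
    F 1 - F 0 ≤ c := by
  have telescope (n : ℕ) : F 1 - F 0 ≤ c + C * (1 / ((n : ℝ) + 1)) := by
    have hn : (0 : ℝ) < n + 1 := by positivity
    have h_step : ∀ i ∈ Finset.range (n + 1),
        F ((i + 1 : ℕ) / ((n : ℝ) + 1)) - F (i / ((n : ℝ) + 1))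
        ≤ c * (1 / ((n : ℝ) + 1)) + C * (1 / ((n : ℝ) + 1)) ^ 2 := by
      intro i hi
      have hi' : ((i + 1 : ℕ) : ℝ) ≤ n + 1 := by exact_mod_cast Finset.mem_range.1 hi
      have h_width : ((i + 1 : ℕ) : ℝ) / (n + 1) - i / (n + 1) = 1 / (n + 1) := by
        push_cast; ring
      have := h (i / ((n : ℝ) + 1)) ((i + 1 : ℕ) / ((n : ℝ) + 1)) (by positivity)
        (by gcongr; exact i.le_succ) ((div_le_one hn).2 hi')
      rwa [h_width] at this
    have h_sum := Finset.sum_le_sum h_step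
    rw [Finset.sum_range_sub fun i : ℕ => F (i / ((n : ℝ) + 1)), Finset.sum_const,
      Finset.card_range, nsmul_eq_mul] at h_sum
    calc F 1 - F 0 = F ((n + 1 : ℕ) / ((n : ℝ) + 1)) - F ((0 : ℕ) / ((n : ℝ) + 1)) := by
          push_cast; rw [div_self hn.ne', zero_div]
      _ ≤ _ := h_sum
      _ = c + C * (1 / ((n : ℝ) + 1)) := by push_cast; field_simp
  have h_lim : Tendsto (fun n : ℕ => c + C * (1 / ((n : ℝ) + 1))) atTop (nhds (c + C * 0)) :=
    (tendsto_one_div_add_atTop_nhds_zero_nat.const_mul C).const_add c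
  simpa using ge_of_tendsto' h_lim telescope

section SecondOrder

variable {E : Type*} [NormedAddCommGroup E] [InnerProductSpace ℝ E]
  {φ : E → ℝ} {q : E → E} {B : E →L[ℝ] E} {x : E}

theorem eventually_abs_inner_segment_sub_le (hB : HasFDerivAt q B x) {ε : ℝ}
    (hε : 0 < ε) :
    ∀ᶠ y in nhds x, ∀ t ∈ Icc (0 : ℝ) 1,
      |⟪q (x + t • (y - x)), y - x⟫ - ⟪q x, y - x⟫ - t * ⟪B (y - x), y - x⟫|
        ≤ ε * ‖y - x‖ ^ 2 := by
  obtain ⟨r, hr, h_ball⟩ := Metric.eventually_nhds_iff_ball.1 (isLittleO_iff.1 hB.isLittleO hε)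
  filter_upwards [Metric.ball_mem_nhds x hr] with y hy
  rintro t ⟨ht0, ht1⟩
  set h := y - x
  have h_norm : ‖t • h‖ ≤ ‖h‖ := by
    rw [norm_smul, Real.norm_of_nonneg ht0]
    exact mul_le_of_le_one_left (norm_nonneg _) ht1
  have h_diff := h_ball (x + t • h) (by
    rw [mem_ball_iff_norm] at hy ⊢
    rw [add_sub_cancel_left]
    exact h_norm.trans_lt hy)
  rw [add_sub_cancel_left, map_smul] at h_diff
  rw [← inner_sub_left, ← real_inner_smul_left, ← inner_sub_left]
  calc _ ≤ ‖q (x + t • h) - q x - t • B h‖ * ‖h‖ := abs_real_inner_le_norm _ _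
    _ ≤ ε * ‖h‖ * ‖h‖ := by gcongr; exact h_diff.trans (by gcongr)
    _ = _ := by ring

theorem isLittleO_sub_taylor_of_isSubgradient (hq : ∀ x, IsSubgradient φ (q x) x)
    (hB : HasFDerivAt q B x) :
    (fun y => φ y - φ x - ⟪q x, y - x⟫ - 1 / 2 * ⟪B (y - x), y - x⟫)
      =o[nhds x] fun y => ‖y - x‖ ^ 2 := by
  rw [isLittleO_iff]
  intro ε hε
  filter_upwards [eventually_abs_inner_segment_sub_le hB hε] with y h_slope
  set h := y - x
  have h_line (a b : ℝ) : φ (x + a • h) + (b - a) * ⟪q (x + a • h), h⟫ ≤ φ (x + b • h) := by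
    have := hq (x + a • h) (x + b • h)
    rwa [show x + b • h - (x + a • h) = (b - a) • h by module, real_inner_smul_right] at this
  let F : ℝ → ℝ := fun t => φ (x + t • h) - t * ⟪q x, h⟫ - 1 / 2 * t ^ 2 * ⟪B h, h⟫
  have hF : F 1 - F 0 = φ y - φ x - ⟪q x, h⟫ - 1 / 2 * ⟪B h, h⟫ := by
    simp only [F, one_smul, zero_smul, add_zero, h, add_sub_cancel]; ring
  have h_upper : F 1 - F 0 ≤ ε * ‖h‖ ^ 2 := by
    refine sub_le_of_forall_sub_le_mul_add_sq (C := 1 / 2 * ⟪B h, h⟫) fun a b ha hab hb => ?_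
    have h_sub := h_line b a
    have := mul_le_mul_of_nonneg_left (abs_le.1 (h_slope b ⟨ha.trans hab, hb⟩)).2
      (sub_nonneg.2 hab)
    simp only [F]
    linarith
  have h_lower : -F 1 - -F 0 ≤ ε * ‖h‖ ^ 2 := by
    refine sub_le_of_forall_sub_le_mul_add_sq (F := fun t => -F t) (C := 1 / 2 * ⟪B h, h⟫)
      fun a b ha hab hb => ?_
    have h_sub := h_line a b
    have := mul_le_mul_of_nonneg_left (abs_le.1 (h_slope a ⟨ha, hab.trans hb⟩)).1
      (sub_nonneg.2 hab)
    simp only [F]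
    linarith
  rw [Real.norm_eq_abs, norm_pow, norm_norm, ← hF]
  exact abs_le.2 ⟨by linarith, h_upper⟩

end SecondOrder

theorem hasAlexandrovAt_of_isLittleO {d : ℕ} {u : Euc d → ℝ} {p : Euc d}
    {S : Euc d →L[ℝ] Euc d} {θ : Euc d}
    (h : (fun y => u y - u θ - ⟪p, y - θ⟫ - 1 / 2 * ⟪S (y - θ), y - θ⟫)
      =o[nhds θ] fun y => ‖y - θ‖ ^ 2) : HasAlexandrovAt u p S θ := by
  refine ⟨?_, h⟩
  rw [hasGradientAt_iff_isLittleO]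
  have h_quad : (fun y : Euc d => 1 / 2 * ⟪S (y - θ), y - θ⟫) =O[nhds θ]
      fun y => ‖y - θ‖ ^ 2 := by
    refine IsBigO.of_bound ‖S‖ (Eventually.of_forall fun y => ?_)
    rw [norm_mul, norm_pow, norm_norm]
    calc ‖(1 / 2 : ℝ)‖ * ‖⟪S (y - θ), y - θ⟫‖ ≤ 1 * (‖S‖ * ‖y - θ‖ * ‖y - θ‖) := by
          gcongr
          · norm_num
          · exact (norm_inner_le_norm _ _).trans (by gcongr; exact S.le_opNorm _)
      _ = ‖S‖ * ‖y - θ‖ ^ 2 := by ring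
  have h_sq : (fun y : Euc d => ‖y - θ‖ ^ 2) =o[nhds θ] fun y => y - θ :=
    (isLittleO_norm_pow_id one_lt_two).comp_tendsto (tendsto_sub_nhds_zero_iff.2 tendsto_id)
  exact ((h.isBigO.add h_quad).trans_isLittleO h_sq).congr_left fun y => by ring

/-- `K ‖x‖² - u` admits a subgradient everywhere, so Alexandrov's theorem for convex functions
applies to it. -/
theorem SemiConcave.ae_exists_hasAlexandrovAt {d : ℕ} {u : Euc d → ℝ} (hu : SemiConcave u) :
    ∀ᵐ θ ∂(volume : Measure (Euc d)), ∃ p S, HasAlexandrovAt u p S θ := by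
  obtain ⟨K, hK⟩ := hu
  choose p hp using hK
  have h_sq (x y : Euc d) : ‖y‖ ^ 2 = ‖x‖ ^ 2 + 2 * ⟪x, y - x⟫ + ‖y - x‖ ^ 2 := by
    rw [← norm_add_sq_real, add_sub_cancel]
  have h_sub (x : Euc d) :
      IsSubgradient (fun x => K * ‖x‖ ^ 2 - u x) ((2 * K) • x - p x) x := fun y => by
    beta_reduce
    rw [h_sq x y, inner_sub_left, real_inner_smul_left]
    linarith [hp x y]
  filter_upwards [ae_differentiableAt_of_isSubgradient volume h_sub] with x hx
  obtain ⟨B, hB⟩ := hx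
  refine ⟨p x, (2 * K) • ContinuousLinearMap.id ℝ _ - B, hasAlexandrovAt_of_isLittleO ?_⟩
  refine (isLittleO_sub_taylor_of_isSubgradient h_sub hB).neg_left.congr_left fun y => ?_
  rw [h_sq x y, sub_apply, smul_apply, ContinuousLinearMap.id_apply, inner_sub_left,
    inner_sub_left (_ • (y - x)), real_inner_smul_left, real_inner_smul_left,
    real_inner_self_eq_norm_sq]
  ring

/-! ### Ordinary differential equations on `[-T, 0]` -/

section ODE

open scoped NNReal

variable {E F : Type*} [NormedAddCommGroup E] [NormedSpace ℝ E]
  [NormedAddCommGroup F] [NormedSpace ℝ F]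

theorem exists_lipschitzWith_bounded_eqOn_closedBall [FiniteDimensional ℝ E] {X : E → F}
    (hX : ContDiff ℝ 1 X) (R : ℝ) :
    ∃ (g : E → F) (K : ℝ≥0) (C : ℝ), LipschitzWith K g ∧ (∀ x, ‖g x‖ ≤ C) ∧
      EqOn g X (closedBall 0 R) ∧ ∀ x, ‖g x‖ ≤ ‖X x‖ := by
  let χ : ContDiffBump (0 : E) := ⟨|R| + 1, |R| + 2, by positivity, by linarith⟩
  have h_smooth : ContDiff ℝ 1 fun x => χ x • X x := χ.contDiff.smul hX
  have h_supp : HasCompactSupport fun x => χ x • X x := χ.hasCompactSupport.smul_right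
  obtain ⟨K, hK⟩ := h_smooth.lipschitzWith_of_hasCompactSupport h_supp one_ne_zero
  obtain ⟨C, hC⟩ := h_supp.exists_bound_of_continuous h_smooth.continuous
  refine ⟨_, K, C, hK, hC, fun x hx => ?_, fun x => ?_⟩
  · have h_one : χ x = 1 := χ.one_of_mem_closedBall
      (closedBall_subset_closedBall ((le_abs_self R).trans (le_add_of_nonneg_right zero_le_one)) hx)
    simp only [h_one, one_smul]
  · rw [norm_smul, Real.norm_of_nonneg χ.nonneg]
    exact mul_le_of_le_one_left (norm_nonneg _) χ.le_one

theorem exists_hasDerivAt_Ioo_of_lipschitzWith_of_bounded [CompleteSpace E] {f : ℝ → E → E}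
    {K : ℝ≥0} {C a b t₀ : ℝ} (h_lip : ∀ t, LipschitzWith K (f t))
    (h_cont : ∀ x, Continuous fun t => f t x) (hC : ∀ t x, ‖f t x‖ ≤ C) (ht₀ : t₀ ∈ Icc a b)
    (x₀ : E) : ∃ α : ℝ → E, α t₀ = x₀ ∧ ∀ t ∈ Ioo a b, HasDerivAt α (f t (α t)) t := by
  lift C to ℝ≥0 using (norm_nonneg _).trans (hC t₀ x₀)
  have h_picard : IsPicardLindelof f ⟨t₀, ht₀⟩ x₀ (C * (b - a).toNNReal) 0 C K :=
    { lipschitzOnWith := fun t _ => (h_lip t).lipschitzOnWith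
      continuousOn := fun x _ => (h_cont x).continuousOn
      norm_le := fun t _ x _ => hC t x
      mul_max_le := by
        rw [NNReal.coe_zero, sub_zero, NNReal.coe_mul,
          Real.coe_toNNReal _ (sub_nonneg.2 (ht₀.1.trans ht₀.2))]
        gcongr
        exact max_le (sub_le_sub_left ht₀.1 _) (sub_le_sub_right ht₀.2 _) }
  obtain ⟨α, h_init, h_deriv⟩ := h_picard.exists_eq_forall_mem_Icc_hasDerivWithinAt₀
  exact ⟨α, h_init, fun t ht =>
    (h_deriv t (Ioo_subset_Icc_self ht)).hasDerivAt (Icc_mem_nhds ht.1 ht.2)⟩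

theorem norm_le_mul_exp_of_norm_deriv_le {e e' : ℝ → E} {T δ K ε : ℝ} (hK : 0 ≤ K) (hε : 0 ≤ ε)
    (h_deriv : ∀ s ∈ Icc (-T) 0, HasDerivAt e (e' s) s) (h_init : ‖e 0‖ ≤ δ)
    (h_bound : ∀ s ∈ Icc (-T) 0, ‖e' s‖ ≤ K * ‖e s‖ + ε) {s : ℝ} (hs : s ∈ Icc (-T) 0) :
    ‖e s‖ ≤ (δ + ε) * Real.exp ((K + 1) * T) := by
  have hδ : 0 ≤ δ := (norm_nonneg _).trans h_init
  have h_reflect (t : ℝ) (ht : t ∈ Icc 0 T) : -t ∈ Icc (-T) 0 :=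
    ⟨neg_le_neg ht.2, neg_nonpos.2 ht.1⟩
  have h_deriv_neg (t : ℝ) (ht : t ∈ Icc 0 T) :
      HasDerivAt (fun t => e (-t)) (-e' (-t)) t := by
    simpa only [neg_smul, one_smul, Function.comp_def] using
      (h_deriv (-t) (h_reflect t ht)).scomp t (hasDerivAt_neg t)
  have h_gronwall := norm_le_gronwallBound_of_norm_deriv_right_le (δ := δ) (K := K + 1) (ε := ε)
    (fun t ht => (h_deriv_neg t ht).continuousAt.continuousWithinAt)
    (fun t ht => (h_deriv_neg t (Ico_subset_Icc_self ht)).hasDerivWithinAt)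
    (by rwa [neg_zero])
    (fun t ht => by
      rw [norm_neg]
      refine (h_bound (-t) (h_reflect t (Ico_subset_Icc_self ht))).trans ?_
      gcongr
      linarith) (-s) ⟨neg_nonneg.2 hs.2, neg_le.1 hs.1⟩
  rw [neg_neg, sub_zero, gronwallBound_of_K_ne_0 (by linarith)] at h_gronwall
  have h_exp : Real.exp ((K + 1) * -s) ≤ Real.exp ((K + 1) * T) := by
    gcongr; exact neg_le.1 hs.1
  have h_one : 1 ≤ Real.exp ((K + 1) * -s) :=
    Real.one_le_exp (mul_nonneg (by linarith) (neg_nonneg.2 hs.2))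
  calc ‖e s‖ ≤ δ * Real.exp ((K + 1) * -s) + ε / (K + 1) * (Real.exp ((K + 1) * -s) - 1) :=
        h_gronwall
    _ ≤ δ * Real.exp ((K + 1) * T) + ε * Real.exp ((K + 1) * T) := by
        gcongr ?_ * ?_ + ?_
        refine mul_le_mul (div_le_self hε (by linarith)) (by linarith) (by linarith) hε
    _ = _ := by ring

theorem eqOn_of_hasDerivAt_contDiff [FiniteDimensional ℝ E] {X : E → E} (hX : ContDiff ℝ 1 X)
    {T : ℝ} {z₁ z₂ : ℝ → E} (h₁ : ∀ s ∈ Icc (-T) 0, HasDerivAt z₁ (X (z₁ s)) s)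
    (h₂ : ∀ s ∈ Icc (-T) 0, HasDerivAt z₂ (X (z₂ s)) s) (h_init : z₁ 0 = z₂ 0) :
    EqOn z₁ z₂ (Icc (-T) 0) := by
  have hc₁ : ContinuousOn z₁ (Icc (-T) 0) := HasDerivAt.continuousOn h₁
  have hc₂ : ContinuousOn z₂ (Icc (-T) 0) := HasDerivAt.continuousOn h₂
  obtain ⟨R₁, hR₁⟩ := isCompact_Icc.exists_bound_of_continuousOn hc₁
  obtain ⟨R₂, hR₂⟩ := isCompact_Icc.exists_bound_of_continuousOn hc₂
  obtain ⟨g, K, -, hg, -, h_eq, -⟩ :=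
    exists_lipschitzWith_bounded_eqOn_closedBall hX (max R₁ R₂)
  have h_lip : LipschitzOnWith K X (closedBall 0 (max R₁ R₂)) :=
    fun x hx y hy => h_eq hx ▸ h_eq hy ▸ hg x y
  refine ODE_solution_unique_of_mem_Icc_left (v := fun _ => X)
    (s := fun _ => closedBall 0 (max R₁ R₂)) (fun _ _ => h_lip)
    hc₁ (fun t ht => (h₁ t (Ioc_subset_Icc_self ht)).hasDerivWithinAt) (fun t ht => ?_)
    hc₂ (fun t ht => (h₂ t (Ioc_subset_Icc_self ht)).hasDerivWithinAt) (fun t ht => ?_) h_init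
  · exact mem_closedBall_zero_iff.2 ((hR₁ t (Ioc_subset_Icc_self ht)).trans (le_max_left _ _))
  · exact mem_closedBall_zero_iff.2 ((hR₂ t (Ioc_subset_Icc_self ht)).trans (le_max_right _ _))

theorem exists_hasDerivAt_norm_sub_le_of_contDiff [FiniteDimensional ℝ E] {X : E → E}
    (hX : ContDiff ℝ 1 X) {T : ℝ} (hT : 0 ≤ T) {z₀ : ℝ → E}
    (hz₀ : ∀ s ∈ Icc (-T) 0, HasDerivAt z₀ (X (z₀ s)) s) :
    ∃ M > 0, ∃ r > 0, ∀ x, ‖x - z₀ 0‖ ≤ r → ∃ z : ℝ → E, z 0 = x ∧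
      ∀ s ∈ Icc (-T) 0, HasDerivAt z (X (z s)) s ∧ ‖z s - z₀ s‖ ≤ M * ‖x - z₀ 0‖ := by
  have : CompleteSpace E := FiniteDimensional.complete ℝ E
  obtain ⟨R, hR⟩ := isCompact_Icc.exists_bound_of_continuousOn (HasDerivAt.continuousOn hz₀)
  obtain ⟨g, K, C, hg, hC, h_eq, -⟩ := exists_lipschitzWith_bounded_eqOn_closedBall hX (R + 1)
  set M := Real.exp ((K + 1) * T) with hM
  have hM_pos : 0 < M := Real.exp_pos _
  refine ⟨M, hM_pos, M⁻¹, by positivity, fun x hx => ?_⟩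
  obtain ⟨z, h_init, hz⟩ := exists_hasDerivAt_Ioo_of_lipschitzWith_of_bounded (f := fun _ => g)
    (a := -T - 1) (b := 1) (t₀ := 0) (fun _ => hg) (fun _ => continuous_const) (fun _ => hC)
    ⟨by linarith, zero_le_one⟩ x
  have hz' (s : ℝ) (hs : s ∈ Icc (-T) 0) : HasDerivAt z (g (z s)) s :=
    hz s ⟨by linarith [hs.1], by linarith [hs.2]⟩
  have h_close (s : ℝ) (hs : s ∈ Icc (-T) 0) : ‖z s - z₀ s‖ ≤ M * ‖x - z₀ 0‖ := by
    have := norm_le_mul_exp_of_norm_deriv_le (K := K) (ε := 0) (δ := ‖x - z₀ 0‖) K.coe_nonneg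
      le_rfl (fun s hs => (hz' s hs).fun_sub (hz₀ s hs)) (by rw [h_init]) (fun s hs => by
        rw [← h_eq (mem_closedBall_zero_iff.2 ((hR s hs).trans (by linarith))), add_zero]
        exact hg.norm_sub_le _ _) hs
    rwa [add_zero, ← hM, mul_comm] at this
  refine ⟨z, h_init, fun s hs => ⟨?_, h_close s hs⟩⟩
  have h_near : ‖z s - z₀ s‖ ≤ 1 :=
    (h_close s hs).trans ((mul_le_mul_of_nonneg_left hx hM_pos.le).trans_eq
      (mul_inv_cancel₀ hM_pos.ne'))
  rw [← h_eq (mem_closedBall_zero_iff.2 _)]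
  · exact hz' s hs
  · linarith [norm_sub_norm_le (z s) (z₀ s), hR s hs]

theorem exists_hasDerivAt_comp_of_continuousOn [FiniteDimensional ℝ E] {A : ℝ → E →L[ℝ] E}
    {T : ℝ} (hT : 0 ≤ T) (hA : ContinuousOn A (Icc (-T) 0)) :
    ∃ Φ : ℝ → E →L[ℝ] E, Φ 0 = ContinuousLinearMap.id ℝ E ∧
      ∀ t ∈ Icc (-T) 0, HasDerivAt Φ ((A t).comp (Φ t)) t := by
  have : CompleteSpace E := FiniteDimensional.complete ℝ E
  obtain ⟨C, hC⟩ := isCompact_Icc.exists_bound_of_continuousOn hA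
  lift C to ℝ≥0 using (norm_nonneg _).trans (hC 0 ⟨neg_nonpos.2 hT, le_rfl⟩)
  -- An a priori bound for `Φ`; cutting off the identity at this radius makes the field bounded.
  set R := Real.exp ((C + 1) * T)
  obtain ⟨g, K, D, hg, hD, h_eq, hg_le⟩ := exists_lipschitzWith_bounded_eqOn_closedBall
    (contDiff_id (E := E →L[ℝ] E)) R
  set B : ℝ → E →L[ℝ] E := IccExtend (neg_nonpos.2 hT) ((Icc (-T) 0).domRestrict A)
  have hB_cont : Continuous B := hA.domRestrict.Icc_extend'
  have hB_norm (t : ℝ) : ‖B t‖ ≤ C := hC _ (projIcc _ _ _ t).2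
  have hB_eq {t : ℝ} (ht : t ∈ Icc (-T) 0) : B t = A t := IccExtend_of_mem _ _ ht
  have h_norm (t : ℝ) (S : E →L[ℝ] E) : ‖(B t).comp S‖ ≤ C * ‖S‖ :=
    ((B t).opNorm_comp_le S).trans (by gcongr; exact hB_norm t)
  obtain ⟨Φ, h_init, hΦ⟩ := exists_hasDerivAt_Ioo_of_lipschitzWith_of_bounded
    (f := fun t S => (B t).comp (g S)) (K := C * K) (C := C * D) (a := -T - 1) (b := 1) (t₀ := 0)
    (fun t => LipschitzWith.of_dist_le_mul fun S S' => by
      rw [dist_eq_norm, ← ContinuousLinearMap.comp_sub, NNReal.coe_mul, mul_assoc]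
      refine (h_norm t _).trans ?_
      gcongr
      rw [← dist_eq_norm]
      exact hg.dist_le_mul _ _)
    (fun S => hB_cont.clm_comp continuous_const)
    (fun t S => (h_norm t _).trans (by gcongr; exact hD S))
    ⟨by linarith, zero_le_one⟩ (ContinuousLinearMap.id ℝ E)
  have hΦ' (t : ℝ) (ht : t ∈ Icc (-T) 0) : HasDerivAt Φ ((B t).comp (g (Φ t))) t :=
    hΦ t ⟨by linarith [ht.1], by linarith [ht.2]⟩
  refine ⟨Φ, h_init, fun t ht => ?_⟩
  have h_bound : ‖Φ t‖ ≤ R := by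
    have := norm_le_mul_exp_of_norm_deriv_le (δ := 1) (K := C) (ε := 0) C.coe_nonneg le_rfl hΦ'
      (h_init ▸ ContinuousLinearMap.norm_id_le)
      (fun s _ => (add_zero (_ : ℝ)).symm ▸ (h_norm s _).trans (by gcongr; exact hg_le _)) ht
    rwa [add_zero, one_mul] at this
  have := hΦ' t ht
  rwa [h_eq (mem_closedBall_zero_iff.2 h_bound), hB_eq ht] at this

end ODE

/-! ### Taylor expansions uniform on bounded sets -/

section Taylor

variable {E F : Type*} [NormedAddCommGroup E] [NormedAddCommGroup F]

/-- The second derivative of `f` at `x`, as a bilinear form. -/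
abbrev hessian [NormedSpace ℝ E] (f : E → ℝ) (x : E) : E →L[ℝ] E →L[ℝ] ℝ :=
  fderiv ℝ (fderiv ℝ f) x

theorem hessian_comm [NormedSpace ℝ E] {f : E → ℝ} (hf : ContDiff ℝ 2 f) (z v w : E) :
    hessian f z v w = hessian f z w v :=
  ((hf.contDiffAt (x := z)).isSymmSndFDerivAt (by simp)).eq v w

variable [ProperSpace E]

theorem exists_forall_closedBall_norm_sub_le_of_continuous {f : E → F} (hf : Continuous f)
    (R : ℝ) {τ : ℝ} (hτ : 0 < τ) :
    ∃ ρ > 0, ρ ≤ 1 ∧ ∀ z ∈ closedBall (0 : E) R, ∀ w, ‖w - z‖ ≤ ρ → ‖f w - f z‖ ≤ τ := by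
  have h_unif := (isCompact_closedBall (0 : E) (R + 1)).uniformContinuousOn_of_continuous
    hf.continuousOn
  obtain ⟨δ, hδ, h⟩ := Metric.uniformContinuousOn_iff.1 h_unif τ hτ
  refine ⟨min 1 (δ / 2), by positivity, min_le_left _ _, fun z hz w hw => ?_⟩
  obtain ⟨hw1, hwδ⟩ := le_min_iff.1 hw
  rw [mem_closedBall_zero_iff] at hz
  rw [← dist_eq_norm]
  refine (h w ?_ z ?_ ?_).le
  · rw [mem_closedBall_zero_iff]
    linarith [norm_sub_norm_le w z]
  · exact mem_closedBall_zero_iff.2 (by linarith)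
  · rw [dist_eq_norm]; linarith

variable [NormedSpace ℝ E] [NormedSpace ℝ F]

theorem exists_forall_closedBall_norm_sub_fderiv_le {f : E → F} (hf : ContDiff ℝ 1 f) (R : ℝ)
    {τ : ℝ} (hτ : 0 < τ) :
    ∃ ρ > 0, ρ ≤ 1 ∧ ∀ z ∈ closedBall (0 : E) R, ∀ w, ‖w - z‖ ≤ ρ →
      ‖f w - f z - fderiv ℝ f z (w - z)‖ ≤ τ * ‖w - z‖ := by
  obtain ⟨ρ, hρ, hρ1, h⟩ := exists_forall_closedBall_norm_sub_le_of_continuous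
    (hf.continuous_fderiv one_ne_zero) R hτ
  refine ⟨ρ, hρ, hρ1, fun z hz w hw => ?_⟩
  exact (convex_closedBall z ρ).norm_image_sub_le_of_norm_fderiv_le'
    (fun x _ => hf.differentiable one_ne_zero x)
    (fun x hx => h z hz x (mem_closedBall_iff_norm.1 hx))
    (mem_closedBall_self hρ.le) (mem_closedBall_iff_norm.2 hw)

theorem exists_forall_closedBall_abs_sub_taylor_two_le {f : E → ℝ} (hf : ContDiff ℝ 2 f) (R : ℝ)
    {τ : ℝ} (hτ : 0 < τ) :
    ∃ ρ > 0, ρ ≤ 1 ∧ ∀ z ∈ closedBall (0 : E) R, ∀ w, ‖w‖ ≤ ρ →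
      |f (z + w) - f z - fderiv ℝ f z w - 1 / 2 * hessian f z w w| ≤ τ * ‖w‖ ^ 2 := by
  obtain ⟨ρ, hρ, hρ1, h⟩ := exists_forall_closedBall_norm_sub_fderiv_le
    (hf.fderiv_right (m := 1) (by norm_num)) R hτ
  refine ⟨ρ, hρ, hρ1, fun z hz w hw => ?_⟩
  set g : E → ℝ := fun v => f (z + v) - 1 / 2 * hessian f z v v with hg
  have hg_deriv (v : E) : HasFDerivAt g (fderiv ℝ f (z + v) - hessian f z v) v := by
    have h_shift : HasFDerivAt (fun v => f (z + v)) (fderiv ℝ f (z + v)) v :=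
      ((hf.differentiable two_ne_zero (z + v)).hasFDerivAt).comp v
        ((hasFDerivAt_id v).const_add z)
    have h_quad : HasFDerivAt (fun v => 1 / 2 * hessian f z v v) (hessian f z v) v := by
      refine (((hessian f z).hasFDerivAt.clm_apply (hasFDerivAt_id v)).const_mul
        (1 / 2)).congr_fderiv (ContinuousLinearMap.ext fun u => ?_)
      simp only [smul_apply, add_apply, ContinuousLinearMap.comp_apply,
        ContinuousLinearMap.flip_apply, ContinuousLinearMap.id_apply, smul_eq_mul, id]
      rw [hessian_comm hf z u v]
      ring
    exact h_shift.sub h_quad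
  have h_deriv_near (v : E) (hv : v ∈ closedBall 0 ‖w‖) :
      ‖fderiv ℝ f (z + v) - hessian f z v - fderiv ℝ f z‖ ≤ τ * ‖w‖ := by
    rw [mem_closedBall_zero_iff] at hv
    have := h z hz (z + v) (by simpa only [add_sub_cancel_left] using hv.trans hw)
    rw [add_sub_cancel_left] at this
    rw [sub_right_comm]
    exact this.trans (by gcongr)
  have h_mean := (convex_closedBall (0 : E) ‖w‖).norm_image_sub_le_of_norm_hasFDerivWithin_le'
    (fun v _ => (hg_deriv v).hasFDerivWithinAt) h_deriv_near
    (mem_closedBall_self (norm_nonneg _)) (mem_closedBall_zero_iff.2 le_rfl)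
  simp only [hg, add_zero, map_zero, mul_zero, sub_zero, Real.norm_eq_abs] at h_mean
  calc _ = |f (z + w) - 1 / 2 * hessian f z w w - f z - fderiv ℝ f z w| := by congr 1; ring
    _ ≤ τ * ‖w‖ * ‖w‖ := h_mean
    _ = τ * ‖w‖ ^ 2 := by ring

end Taylor

/-! ### Hamiltonian vector fields -/

section HamiltonianVectorField

open InnerProductSpace

variable {d : ℕ} {H : Phase d → ℝ}

/-- The isomorphism between covectors and vectors of `T^*𝕋^d` induced by the canonical symplectic
form, normalized so that `symplecticSharp d ∘ dH` is the Hamiltonian vector field of `H`. -/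
def symplecticSharp (d : ℕ) : (Phase d →L[ℝ] ℝ) →L[ℝ] Phase d :=
  LinearMap.toContinuousLinearMap
    { toFun := fun α => ((toDual ℝ _).symm (α.comp (.inr ℝ _ _)),
        -(toDual ℝ _).symm (α.comp (.inl ℝ _ _)))
      map_add' := fun α β => by
        simp only [ContinuousLinearMap.add_comp, map_add, neg_add, Prod.mk_add_mk]
      map_smul' := fun c α => by
        simp only [ContinuousLinearMap.smul_comp, LinearIsometryEquiv.map_smulₛₗ, RingHom.id_apply,
          conj_trivial, Prod.smul_mk, smul_neg] }

theorem inner_symplecticSharp_fst (α : Phase d →L[ℝ] ℝ) (k : Euc d) :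
    ⟪(symplecticSharp d α).1, k⟫ = α (0, k) :=
  toDual_symm_apply

theorem inner_symplecticSharp_snd (α : Phase d →L[ℝ] ℝ) (y : Euc d) :
    ⟪(symplecticSharp d α).2, y⟫ = -α (y, 0) :=
  (inner_neg_left _ _).trans (congrArg Neg.neg toDual_symm_apply)

theorem hamVF_eq_symplecticSharp (hH : Differentiable ℝ H) (l : ℝ) (x : Phase d) :
    hamVF H l x = symplecticSharp d (fderiv ℝ H x) - l • ((0 : Euc d), x.2) := by
  have h_fiber : fderiv ℝ (fun p => H (x.1, p)) x.2 = (fderiv ℝ H x).comp (.inr ℝ _ _) :=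
    ((hH (x.1, x.2)).hasFDerivAt.comp x.2 (hasFDerivAt_prodMk_right x.1 x.2)).fderiv
  have h_base : fderiv ℝ (fun q => H (q, x.2)) x.1 = (fderiv ℝ H x).comp (.inl ℝ _ _) :=
    ((hH (x.1, x.2)).hasFDerivAt.comp x.1 (hasFDerivAt_prodMk_left x.1 x.2)).fderiv
  refine Prod.ext ?_ ?_
  · simp only [Prod.fst_sub, Prod.smul_fst, smul_zero, sub_zero]
    exact congrArg (toDual ℝ (Euc d)).symm h_fiber
  · simp only [Prod.snd_sub, Prod.smul_snd]
    exact congrArg (fun a => -(toDual ℝ (Euc d)).symm a - l • x.2) h_base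

theorem inner_hamVF_fst (hH : Differentiable ℝ H) (l : ℝ) (x : Phase d) (k : Euc d) :
    ⟪(hamVF H l x).1, k⟫ = fderiv ℝ H x (0, k) := by
  rw [hamVF_eq_symplecticSharp hH, Prod.fst_sub, Prod.smul_fst, smul_zero, sub_zero,
    inner_symplecticSharp_fst]

theorem inner_hamVF_snd (hH : Differentiable ℝ H) (l : ℝ) (x : Phase d) (y : Euc d) :
    ⟪(hamVF H l x).2, y⟫ = -fderiv ℝ H x (y, 0) - l * ⟪x.2, y⟫ := by
  rw [hamVF_eq_symplecticSharp hH, Prod.snd_sub, Prod.smul_snd, inner_sub_left,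
    inner_symplecticSharp_snd, real_inner_smul_left]

/-- The derivative of the discounted Hamiltonian vector field `hamVF H l` at `z`. -/
def hamLin (H : Phase d → ℝ) (l : ℝ) (z : Phase d) : Phase d →L[ℝ] Phase d :=
  (symplecticSharp d).comp (hessian H z) - l • (.prod 0 (.snd ℝ (Euc d) (Euc d)))

theorem contDiff_hamVF_prod (hH : ContDiff ℝ 2 H) :
    ContDiff ℝ 1 fun x : Phase d × ℝ => hamVF H x.2 x.1 := by
  have h_fderiv : ContDiff ℝ 1 (fderiv ℝ H) := hH.fderiv_right (by norm_num)
  simp only [hamVF_eq_symplecticSharp (hH.differentiable two_ne_zero)]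
  exact ((symplecticSharp d).contDiff.comp (h_fderiv.comp contDiff_fst)).sub (by fun_prop)

theorem contDiff_hamVF (hH : ContDiff ℝ 2 H) (l : ℝ) : ContDiff ℝ 1 (hamVF H l) :=
  (contDiff_hamVF_prod hH).comp (contDiff_id.prodMk contDiff_const)

theorem hasFDerivAt_hamVF (hH : ContDiff ℝ 2 H) (l : ℝ) (z : Phase d) :
    HasFDerivAt (hamVF H l) (hamLin H l z) z := by
  rw [funext (hamVF_eq_symplecticSharp (hH.differentiable two_ne_zero) l)]
  have h_fderiv : DifferentiableAt ℝ (fderiv ℝ H) z :=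
    (hH.fderiv_right (m := 1) (by norm_num)).differentiable one_ne_zero z
  have h_discount : HasFDerivAt (fun x : Phase d => l • ((0 : Euc d), x.2))
      (l • .prod 0 (.snd ℝ (Euc d) (Euc d))) z :=
    ((hasFDerivAt_const (0 : Euc d) z).prodMk hasFDerivAt_snd).const_smul l
  exact ((symplecticSharp d).hasFDerivAt.comp z h_fderiv.hasFDerivAt).sub h_discount

theorem continuous_hessian (hH : ContDiff ℝ 2 H) : Continuous (hessian H) :=
  (hH.fderiv_right (m := 1) (by norm_num)).continuous_fderiv one_ne_zero

theorem continuous_hamLin (hH : ContDiff ℝ 2 H) (l : ℝ) : Continuous (hamLin H l) :=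
  (continuous_const.clm_comp (continuous_hessian hH)).sub continuous_const

theorem hamLin_eq_sub (l : ℝ) (z : Phase d) :
    hamLin H l z = hamLin H 0 z - l • .prod 0 (.snd ℝ (Euc d) (Euc d)) := by
  ext w <;> simp [hamLin]

theorem inner_hamLin_fst (l : ℝ) (z w : Phase d) (k : Euc d) :
    ⟪(hamLin H l z w).1, k⟫ = hessian H z w (0, k) := by
  simp [hamLin, inner_symplecticSharp_fst]

theorem inner_hamLin_snd (l : ℝ) (z w : Phase d) (y : Euc d) :
    ⟪(hamLin H l z w).2, y⟫ = -hessian H z w (y, 0) - l * ⟪w.2, y⟫ := by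
  simp [hamLin, inner_symplecticSharp_snd, inner_sub_left, real_inner_smul_left]

end HamiltonianVectorField

/-! ### Tonelli Hamiltonians and Legendre duality -/

section Tonelli

variable {d : ℕ} {H : Phase d → ℝ}

theorem hasDerivAt_prodMk_add_smul (q p k : Euc d) (t : ℝ) :
    HasDerivAt (fun t : ℝ => (q, p + t • k)) ((0 : Euc d), k) t := by
  simpa only [one_smul, id_eq] using
    (hasDerivAt_const t q).prodMk (((hasDerivAt_id t).smul_const k).const_add p)

theorem hasDerivAt_fiber_line (hH : Differentiable ℝ H) (q p k : Euc d) (t : ℝ) :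
    HasDerivAt (fun t : ℝ => H (q, p + t • k)) (fderiv ℝ H (q, p + t • k) (0, k)) t :=
  (hH _).hasFDerivAt.comp_hasDerivAt t (hasDerivAt_prodMk_add_smul q p k t)

theorem hasDerivAt_fderiv_fiber_line (hH : ContDiff ℝ 2 H) (q p k : Euc d) (t : ℝ) :
    HasDerivAt (fun t : ℝ => fderiv ℝ H (q, p + t • k) (0, k))
      (hessian H (q, p + t • k) (0, k) (0, k)) t := by
  have h_fderiv : DifferentiableAt ℝ (fderiv ℝ H) (q, p + t • k) :=
    (hH.fderiv_right (m := 1) (by norm_num)).differentiable one_ne_zero _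
  have h_comp : HasDerivAt (fun t : ℝ => fderiv ℝ H (q, p + t • k))
      (hessian H (q, p + t • k) (0, k)) t :=
    h_fderiv.hasFDerivAt.comp_hasDerivAt t (hasDerivAt_prodMk_add_smul q p k t)
  exact (h_comp.clm_apply (hasDerivAt_const t ((0 : Euc d), k))).congr_deriv (by simp)

theorem iteratedFDeriv_two_fiber (hH : ContDiff ℝ 2 H) (q p k : Euc d) :
    iteratedFDeriv ℝ 2 (fun p' => H (q, p')) p ![k, k] = hessian H (q, p) (0, k) (0, k) := by
  have h_diff : Differentiable ℝ H := hH.differentiable two_ne_zero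
  have h_fderiv : fderiv ℝ (fun p' => H (q, p')) =
      fun p' => (fderiv ℝ H (q, p')).comp (.inr ℝ (Euc d) (Euc d)) := by
    ext1 p'
    exact ((h_diff _).hasFDerivAt.comp p' (hasFDerivAt_prodMk_right q p')).fderiv
  have h_hess : HasFDerivAt (fun p' => fderiv ℝ H (q, p'))
      ((hessian H (q, p)).comp (.inr ℝ _ _)) p :=
    ((hH.fderiv_right (m := 1) (by norm_num)).differentiable one_ne_zero (q, p)).hasFDerivAt.comp p
      (hasFDerivAt_prodMk_right q p)
  rw [iteratedFDeriv_two_apply, h_fderiv, (h_hess.clm_comp (hasFDerivAt_const _ p)).fderiv]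
  simp

theorem TonelliHam.hessian_fiber_pos (hH : TonelliHam H) (z : Phase d) {k : Euc d} (hk : k ≠ 0) :
    0 < hessian H z (0, k) (0, k) :=
  iteratedFDeriv_two_fiber hH.smooth z.1 z.2 k ▸ hH.convex z.1 z.2 k hk

theorem TonelliHam.hessian_fiber_nonneg (hH : TonelliHam H) (z : Phase d) (k : Euc d) :
    0 ≤ hessian H z (0, k) (0, k) := by
  rcases eq_or_ne k 0 with rfl | hk
  · rw [Prod.mk_zero_zero, map_zero]
  · exact (hH.hessian_fiber_pos z hk).le

theorem TonelliHam.exists_forall_mul_sq_le_hessian_fiber (hH : TonelliHam H) (R : ℝ) :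
    ∃ m > 0, ∀ z ∈ closedBall (0 : Phase d) R, ∀ k : Euc d,
      m * ‖k‖ ^ 2 ≤ hessian H z (0, k) (0, k) := by
  let f : Phase d × Euc d → ℝ := fun x => hessian H x.1 (0, x.2) (0, x.2)
  have hf : Continuous f := by
    have := continuous_hessian hH.smooth
    fun_prop
  have h_compact : IsCompact (closedBall (0 : Phase d) R ×ˢ sphere (0 : Euc d) 1) :=
    (isCompact_closedBall _ _).prod (isCompact_sphere _ _)
  obtain ⟨m, hm, h_unit⟩ := h_compact.exists_forall_le' hf.continuousOn
    (a := 0) fun x hx => hH.hessian_fiber_pos x.1 (ne_zero_of_mem_unit_sphere ⟨x.2, hx.2⟩)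
  refine ⟨m, hm, fun z hz k => ?_⟩
  rcases eq_or_ne k 0 with rfl | hk
  · rw [Prod.mk_zero_zero, map_zero]; simp
  have h_norm : ‖k‖ ≠ 0 := norm_ne_zero_iff.2 hk
  have h_dir := h_unit (z, ‖k‖⁻¹ • k) ⟨hz, by simp [norm_smul, h_norm]⟩
  have h_scale : ((0 : Euc d), k) = ‖k‖ • ((0 : Euc d), ‖k‖⁻¹ • k) := by
    rw [Prod.smul_mk, smul_zero, smul_inv_smul₀ h_norm]
  rw [h_scale]
  simp only [map_smul, smul_apply, smul_eq_mul]
  calc m * ‖k‖ ^ 2 ≤ hessian H z (0, ‖k‖⁻¹ • k) (0, ‖k‖⁻¹ • k) * ‖k‖ ^ 2 := by gcongr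
    _ = _ := by ring

theorem TonelliHam.convexOn_fiber_line (hH : TonelliHam H) (q p k : Euc d) :
    ConvexOn ℝ univ fun t : ℝ => H (q, p + t • k) := by
  have h_diff : Differentiable ℝ H := hH.smooth.differentiable two_ne_zero
  have h_deriv : deriv (fun t : ℝ => H (q, p + t • k)) =
      fun t => fderiv ℝ H (q, p + t • k) (0, k) :=
    funext fun t => (hasDerivAt_fiber_line h_diff q p k t).deriv
  refine convexOn_univ_of_deriv2_nonneg
    (fun t => (hasDerivAt_fiber_line h_diff q p k t).differentiableAt)
    (fun t => ?_) fun t => ?_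
  · rw [h_deriv]
    exact (hasDerivAt_fderiv_fiber_line hH.smooth q p k t).differentiableAt
  · rw [Function.iterate_succ_apply, Function.iterate_one, h_deriv,
      (hasDerivAt_fderiv_fiber_line hH.smooth q p k t).deriv]
    exact hH.hessian_fiber_nonneg _ _

theorem TonelliHam.bddAbove_legendre (hH : TonelliHam H) (x : Phase d) :
    BddAbove {r | ∃ p : Euc d, r = ⟪p, x.2⟫ - H (x.1, p)} := by
  obtain ⟨B, hB⟩ := hH.superlinear ‖x.2‖
  refine ⟨-B, ?_⟩
  rintro r ⟨p, rfl⟩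
  linarith [hB x.1 p, real_inner_le_norm p x.2]

theorem TonelliHam.inner_sub_le_legendreL (hH : TonelliHam H) (q v p : Euc d) :
    ⟪p, v⟫ - H (q, p) ≤ LegendreL H (q, v) :=
  le_csSup (hH.bddAbove_legendre (q, v)) ⟨p, rfl⟩

theorem legendreL_le {q v : Euc d} {C : ℝ} (h : ∀ p, ⟪p, v⟫ - H (q, p) ≤ C) :
    LegendreL H (q, v) ≤ C := by
  refine csSup_le ⟨_, 0, rfl⟩ ?_
  rintro r ⟨p, rfl⟩
  exact h p

theorem TonelliHam.measurable_legendreL (hH : TonelliHam H) : Measurable (LegendreL H) := by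
  have h_set (x : Phase d) : {r | ∃ p : Euc d, r = ⟪p, x.2⟫ - H (x.1, p)} =
      range fun p : Euc d => ⟪p, x.2⟫ - H (x.1, p) := by
    simp only [range, eq_comm]
  have h_sup : LegendreL H = fun x => ⨆ p : Euc d, (⟪p, x.2⟫ - H (x.1, p)) :=
    funext fun x => congrArg sSup (h_set x)
  have h_cont := hH.smooth.continuous
  have h_lsc : LowerSemicontinuous (LegendreL H) := by
    rw [h_sup]
    refine lowerSemicontinuous_ciSup (fun x => h_set x ▸ hH.bddAbove_legendre x) fun p => ?_
    exact Continuous.lowerSemicontinuous (by fun_prop)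
  exact h_lsc.measurable

end Tonelli

/-! ### Absolutely continuous curves -/

section AbsolutelyContinuous

variable {E F G : Type*} [NormedAddCommGroup E] [NormedAddCommGroup F] [NormedAddCommGroup G]
  {a b : ℝ}

theorem absolutelyContinuousOnInterval_of_dist_le {f : ℝ → G} {g : ℝ → E} {h : ℝ → F} {C : ℝ}
    (hg : AbsolutelyContinuousOnInterval g a b) (hh : AbsolutelyContinuousOnInterval h a b)
    (hf : ∀ s ∈ uIcc a b, ∀ t ∈ uIcc a b,
      dist (f s) (f t) ≤ C * dist (g s) (g t) + C * dist (h s) (h t)) :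
    AbsolutelyContinuousOnInterval f a b := by
  unfold AbsolutelyContinuousOnInterval at hg hh ⊢
  refine squeeze_zero' (Eventually.of_forall fun _ => Finset.sum_nonneg fun _ _ => dist_nonneg) ?_
    (by simpa using (hg.const_mul C).add (hh.const_mul C))
  rw [eventually_inf_principal]
  filter_upwards with I hI
  simp only [Finset.mul_sum, ← Finset.sum_add_distrib]
  exact Finset.sum_le_sum fun i hi => hf _ (hI.1 i hi).1 _ (hI.1 i hi).2

variable [NormedSpace ℝ E] [NormedSpace ℝ F] [NormedSpace ℝ G]

theorem absolutelyContinuousOnInterval_bilin (B : E →L[ℝ] F →L[ℝ] G) {g : ℝ → E} {h : ℝ → F}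
    (hg : AbsolutelyContinuousOnInterval g a b) (hh : AbsolutelyContinuousOnInterval h a b) :
    AbsolutelyContinuousOnInterval (fun t => B (g t) (h t)) a b := by
  obtain ⟨C, hC⟩ := hg.exists_bound
  obtain ⟨D, hD⟩ := hh.exists_bound
  have hC0 : 0 ≤ C := (norm_nonneg _).trans (hC a left_mem_uIcc)
  have hD0 : 0 ≤ D := (norm_nonneg _).trans (hD a left_mem_uIcc)
  refine absolutelyContinuousOnInterval_of_dist_le (C := ‖B‖ * (C + D)) hg hh fun s hs t ht => ?_
  simp only [dist_eq_norm]
  calc ‖B (g s) (h s) - B (g t) (h t)‖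
      = ‖B (g s - g t) (h s) + B (g t) (h s - h t)‖ := by
        simp only [map_sub, sub_apply]; congr 1; abel
    _ ≤ ‖B‖ * ‖g s - g t‖ * ‖h s‖ + ‖B‖ * ‖g t‖ * ‖h s - h t‖ :=
        (norm_add_le _ _).trans (add_le_add (B.le_opNorm₂ _ _) (B.le_opNorm₂ _ _))
    _ ≤ ‖B‖ * ‖g s - g t‖ * (C + D) + ‖B‖ * (C + D) * ‖h s - h t‖ := by
        gcongr
        · linarith [hD s hs]
        · linarith [hC t ht]
    _ = _ := by ring

theorem absolutelyContinuousOnInterval_of_hasDerivAt {f f' : ℝ → E} (hab : a ≤ b)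
    (h_deriv : ∀ s ∈ Icc a b, HasDerivAt f (f' s) s) (h_cont : ContinuousOn f' (Icc a b)) :
    AbsolutelyContinuousOnInterval f a b := by
  obtain ⟨C, hC⟩ := isCompact_Icc.exists_bound_of_continuousOn h_cont
  refine LipschitzOnWith.absolutelyContinuousOnInterval (K := C.toNNReal) ?_
  rw [uIcc_of_le hab]
  refine (convex_Icc a b).lipschitzOnWith_of_nnnorm_hasDerivWithin_le
    (fun s hs => (h_deriv s hs).hasDerivWithinAt) fun s hs => ?_
  rw [← NNReal.coe_le_coe, coe_nnnorm, Real.coe_toNNReal']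
  exact (hC s hs).trans (le_max_left _ _)

theorem intervalIntegrable_and_integral_eq_sub_of_ae_hasDerivAt {f f' : ℝ → ℝ} (hab : a ≤ b)
    (hf : AbsolutelyContinuousOnInterval f a b)
    (h_deriv : ∀ᵐ t, t ∈ Ioo a b → HasDerivAt f (f' t) t) :
    IntervalIntegrable f' volume a b ∧ ∫ t in a..b, f' t = f b - f a := by
  have h_eq : ∀ᵐ t, t ∈ uIoc a b → deriv f t = f' t := by
    filter_upwards [h_deriv, Measure.ae_ne volume b] with t ht htb hmem
    rw [uIoc_of_le hab] at hmem
    exact (ht ⟨hmem.1, lt_of_le_of_ne hmem.2 htb⟩).deriv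
  refine ⟨hf.intervalIntegrable_deriv.congr_ae ?_, ?_⟩
  · exact (ae_restrict_iff' measurableSet_uIoc).2 h_eq
  · rw [← hf.integral_deriv_eq_sub]
    exact (intervalIntegral.integral_congr_ae h_eq).symm

end AbsolutelyContinuous

section ACOn

variable {d : ℕ} {γ γ' : ℝ → Euc d} {a b : ℝ}

theorem intervalIntegrable_of_subset_Icc {E : Type*} [NormedAddCommGroup E] {f : ℝ → E} {s t : ℝ}
    (hf : IntervalIntegrable f volume a b) (hs : s ∈ Icc a b) (ht : t ∈ Icc a b) :
    IntervalIntegrable f volume s t :=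
  hf.mono_set ((ordConnected_uIcc.uIcc_subset (Icc_subset_uIcc hs) (Icc_subset_uIcc ht)))

theorem ACOn.sub_eq_integral (hγ : ACOn γ γ' a b) {s t : ℝ} (hs : s ∈ Icc a b)
    (ht : t ∈ Icc a b) : γ t - γ s = ∫ σ in s..t, γ' σ := by
  have ha : a ∈ Icc a b := left_mem_Icc.2 (hs.1.trans hs.2)
  rw [hγ.2 t ht, hγ.2 s hs, add_sub_add_left_eq_sub, intervalIntegral.integral_interval_sub_left
    (intervalIntegrable_of_subset_Icc hγ.1 ha ht) (intervalIntegrable_of_subset_Icc hγ.1 ha hs)]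

theorem ACOn.mono (hγ : ACOn γ γ' a b) {a' b' : ℝ} (ha : a ≤ a') (hab : a' ≤ b') (hb : b' ≤ b) :
    ACOn γ γ' a' b' := by
  have ha' : a' ∈ Icc a b := ⟨ha, hab.trans hb⟩
  refine ⟨intervalIntegrable_of_subset_Icc hγ.1 ha' ⟨ha.trans hab, hb⟩, fun t ht => ?_⟩
  rw [← hγ.sub_eq_integral ha' ⟨ha.trans ht.1, ht.2.trans hb⟩, add_sub_cancel]

theorem ACOn.dist_le_dist_integral_norm (hγ : ACOn γ γ' a b) {s t : ℝ} (hs : s ∈ Icc a b)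
    (ht : t ∈ Icc a b) :
    dist (γ s) (γ t) ≤ dist (∫ σ in a..s, ‖γ' σ‖) (∫ σ in a..t, ‖γ' σ‖) := by
  have ha : a ∈ Icc a b := left_mem_Icc.2 (hs.1.trans hs.2)
  rw [dist_comm (γ s), dist_eq_norm, hγ.sub_eq_integral hs ht, dist_comm, Real.dist_eq,
    intervalIntegral.integral_interval_sub_left (intervalIntegrable_of_subset_Icc hγ.1.norm ha ht)
      (intervalIntegrable_of_subset_Icc hγ.1.norm ha hs)]
  exact intervalIntegral.norm_integral_le_abs_integral_norm

theorem ACOn.absolutelyContinuousOnInterval (hγ : ACOn γ γ' a b) (hab : a ≤ b) :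
    AbsolutelyContinuousOnInterval γ a b := by
  have h_length := hγ.1.norm.absolutelyContinuousOnInterval_intervalIntegral
    (left_mem_uIcc (a := a))
  refine absolutelyContinuousOnInterval_of_dist_le (C := 1) h_length h_length fun s hs t ht => ?_
  rw [uIcc_of_le hab] at hs ht
  rw [one_mul]
  exact (hγ.dist_le_dist_integral_norm hs ht).trans (le_add_of_nonneg_right dist_nonneg)

theorem ACOn.ae_hasDerivAt (hγ : ACOn γ γ' a b) :
    ∀ᵐ t, t ∈ Ioo a b → HasDerivAt γ (γ' t) t := by
  filter_upwards [hγ.1.ae_hasDerivAt_integral] with t ht hmem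
  have h_int := ht (Icc_subset_uIcc (Ioo_subset_Icc_self hmem)) a left_mem_uIcc
  refine (h_int.const_add (γ a)).congr_of_eventuallyEq ?_
  filter_upwards [Ioo_mem_nhds hmem.1 hmem.2] with s hs
  exact hγ.2 s (Ioo_subset_Icc_self hs)

theorem ACOn.of_hasDerivAt (hab : a ≤ b) (h_deriv : ∀ s ∈ Icc a b, HasDerivAt γ (γ' s) s)
    (h_cont : ContinuousOn γ' (Icc a b)) : ACOn γ γ' a b := by
  have h_int : IntervalIntegrable γ' volume a b := h_cont.intervalIntegrable_of_Icc hab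
  refine ⟨h_int, fun t ht => ?_⟩
  rw [intervalIntegral.integral_eq_sub_of_hasDerivAt (f := γ)
    (fun s hs => h_deriv s (uIcc_subset_Icc (left_mem_Icc.2 hab) ht hs))
    (intervalIntegrable_of_subset_Icc h_int (left_mem_Icc.2 hab) ht), add_sub_cancel]

end ACOn

/-! ### Quadratic bounds for the Lagrangian -/

section LagrangianBounds

variable {d : ℕ} {H : Phase d → ℝ}

theorem add_deriv_add_half_le {h h' h'' : ℝ → ℝ} {m : ℝ}
    (hh : ∀ t ∈ Icc (0 : ℝ) 1, HasDerivAt h (h' t) t)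
    (hh' : ∀ t ∈ Icc (0 : ℝ) 1, HasDerivAt h' (h'' t) t) (hm : ∀ t ∈ Icc (0 : ℝ) 1, m ≤ h'' t) :
    h 0 + h' 0 + m / 2 ≤ h 1 := by
  have h_deriv (t : ℝ) (ht : t ∈ Icc (0 : ℝ) 1) :
      HasDerivAt (fun t => h t - m / 2 * t ^ 2) (h' t - m * t) t :=
    ((hh t ht).sub ((hasDerivAt_pow 2 t).const_mul (m / 2))).congr_deriv (by norm_num; ring)
  have h_deriv2 (t : ℝ) (ht : t ∈ Icc (0 : ℝ) 1) :
      HasDerivAt (fun t => h' t - m * t) (h'' t - m) t :=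
    ((hh' t ht).sub ((hasDerivAt_id t).const_mul m)).congr_deriv (by rw [mul_one])
  have h_convex : ConvexOn ℝ (Icc (0 : ℝ) 1) fun t => h t - m / 2 * t ^ 2 :=
    convexOn_of_hasDerivWithinAt2_nonneg (convex_Icc _ _)
      (HasDerivAt.continuousOn h_deriv)
      (fun t ht => (h_deriv t (interior_subset ht)).hasDerivWithinAt)
      (fun t ht => (h_deriv2 t (interior_subset ht)).hasDerivWithinAt)
      (fun t ht => sub_nonneg.2 (hm t (interior_subset ht)))
  have h_tangent := h_convex.le_slope_of_hasDerivAt (left_mem_Icc.2 zero_le_one)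
    (right_mem_Icc.2 zero_le_one) zero_lt_one (h_deriv 0 (left_mem_Icc.2 zero_le_one))
  simp only [slope_def_field] at h_tangent
  linarith

theorem TonelliHam.exists_forall_add_mul_sq_le_of_norm_le_one (hH : TonelliHam H) (R : ℝ) :
    ∃ m > 0, ∀ y ∈ closedBall (0 : Phase d) R, ∀ k : Euc d, ‖k‖ ≤ 1 →
      H y + fderiv ℝ H y (0, k) + m * ‖k‖ ^ 2 ≤ H (y.1, y.2 + k) := by
  obtain ⟨m, hm, h_hess⟩ := hH.exists_forall_mul_sq_le_hessian_fiber (R + 1)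
  refine ⟨m / 2, half_pos hm, fun y hy k hk => ?_⟩
  have h_mem (t : ℝ) (ht : t ∈ Icc (0 : ℝ) 1) :
      (y.1, y.2 + t • k) ∈ closedBall (0 : Phase d) (R + 1) := by
    rw [mem_closedBall_zero_iff, norm_prod_le_iff] at hy ⊢
    have h_smul : ‖t • k‖ ≤ 1 := by
      rw [norm_smul, Real.norm_of_nonneg ht.1]
      exact mul_le_one₀ ht.2 (norm_nonneg _) hk
    exact ⟨by linarith [hy.1], (norm_add_le _ _).trans (add_le_add hy.2 h_smul)⟩
  have h_taylor := add_deriv_add_half_le (m := m * ‖k‖ ^ 2)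
    (fun t _ => hasDerivAt_fiber_line (hH.smooth.differentiable two_ne_zero) y.1 y.2 k t)
    (fun t _ => hasDerivAt_fderiv_fiber_line hH.smooth y.1 y.2 k t)
    (fun t ht => h_hess _ (h_mem t ht) k)
  simp only [zero_smul, add_zero, one_smul, Prod.mk.eta] at h_taylor
  linarith

/- Beyond distance `1` the quadratic bound is propagated linearly along rays by convexity. -/
theorem TonelliHam.exists_forall_add_mul_min_le (hH : TonelliHam H) (R : ℝ) :
    ∃ m > 0, ∀ y ∈ closedBall (0 : Phase d) R, ∀ k : Euc d,
      H y + fderiv ℝ H y (0, k) + m * (‖k‖ * min ‖k‖ 1) ≤ H (y.1, y.2 + k) := by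
  obtain ⟨m, hm, h_near⟩ := hH.exists_forall_add_mul_sq_le_of_norm_le_one R
  refine ⟨m, hm, fun y hy k => ?_⟩
  rcases le_or_gt ‖k‖ 1 with hk | hk
  · rw [min_eq_left hk, ← sq]
    exact h_near y hy k hk
  have hk0 : 0 < ‖k‖ := one_pos.trans hk
  have h_unit_norm : ‖‖k‖⁻¹ • k‖ = 1 := by
    rw [norm_smul, norm_inv, norm_norm, inv_mul_cancel₀ hk0.ne']
  have h_unit := h_near y hy (‖k‖⁻¹ • k) h_unit_norm.le
  have h_dir : ((0 : Euc d), ‖k‖⁻¹ • k) = ‖k‖⁻¹ • (0, k) := by rw [Prod.smul_mk, smul_zero]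
  rw [h_unit_norm, h_dir, map_smul, smul_eq_mul] at h_unit
  have h_chord := (hH.convexOn_fiber_line y.1 y.2 k).2 (mem_univ 0) (mem_univ 1)
    (sub_nonneg.2 (inv_le_one_of_one_le₀ hk.le)) (inv_nonneg.2 hk0.le) (sub_add_cancel 1 ‖k‖⁻¹)
  simp only [smul_eq_mul, mul_zero, mul_one, zero_add, zero_smul, add_zero, one_smul,
    Prod.mk.eta] at h_chord
  have h_scaled := mul_le_mul_of_nonneg_left (h_unit.trans h_chord) hk0.le
  have h_inv : ‖k‖ * ‖k‖⁻¹ = 1 := mul_inv_cancel₀ hk0.ne'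
  rw [min_eq_right hk.le]
  linear_combination h_scaled - (fderiv ℝ H y (0, k) + H y - H (y.1, y.2 + k)) * h_inv

theorem TonelliHam.exists_forall_legendreL_le (hH : TonelliHam H) (R : ℝ) :
    ∃ m > 0, ∀ y ∈ closedBall (0 : Phase d) R, ∀ l : ℝ, ∀ v : Euc d,
      ‖v - (hamVF H l y).1‖ ≤ m →
        LegendreL H (y.1, v) ≤ ⟪y.2, v⟫ - H y + ‖v - (hamVF H l y).1‖ ^ 2 / (4 * m) := by
  obtain ⟨m, hm, h_convex⟩ := hH.exists_forall_add_mul_min_le R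
  refine ⟨m, hm, fun y hy l v hv => legendreL_le fun p => ?_⟩
  set e := v - (hamVF H l y).1 with he
  obtain ⟨k, rfl⟩ : ∃ k, p = y.2 + k := ⟨p - y.2, (add_sub_cancel _ _).symm⟩
  have h_split : ⟪y.2 + k, v⟫ = ⟪y.2, v⟫ + fderiv ℝ H y (0, k) + ⟪k, e⟫ := by
    rw [← inner_hamVF_fst (hH.smooth.differentiable two_ne_zero) l, he, inner_add_left,
      inner_sub_right, real_inner_comm k (hamVF H l y).1]
    ring
  have h_young : ‖k‖ * ‖e‖ ≤ m * (‖k‖ * min ‖k‖ 1) + ‖e‖ ^ 2 / (4 * m) := by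
    rcases le_total ‖k‖ 1 with hk | hk
    · rw [min_eq_left hk, ← sub_le_iff_le_add', le_div_iff₀ (by positivity)]
      nlinarith [sq_nonneg (‖e‖ - 2 * m * ‖k‖)]
    · rw [min_eq_right hk, mul_one]
      have : 0 ≤ ‖e‖ ^ 2 / (4 * m) := by positivity
      nlinarith [norm_nonneg k]
  linarith [h_convex y hy k, real_inner_le_norm k e]

theorem TonelliHam.exists_forall_legendreL_hamLin_le (hH : TonelliHam H) (l R : ℝ) {τ : ℝ}
    (hτ : 0 < τ) :
    ∃ ρ > 0, ρ ≤ 1 ∧ ∀ x ∈ closedBall (0 : Phase d) R, ∀ w : Phase d, ‖w‖ ≤ ρ →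
      LegendreL H (x.1 + w.1, (hamVF H l x).1 + (hamLin H l x w).1) ≤
        ⟪x.2 + w.2, (hamVF H l x).1 + (hamLin H l x w).1⟫ - H x - fderiv ℝ H x w
          - 1 / 2 * hessian H x w w + τ * ‖w‖ ^ 2 := by
  obtain ⟨m, hm, h_legendre⟩ := hH.exists_forall_legendreL_le (R + 1)
  obtain ⟨τ₁, hτ₁, hτ₁_lt⟩ := exists_between (show 0 < min m (min 1 (2 * m * τ)) by positivity)
  simp only [lt_min_iff] at hτ₁_lt
  obtain ⟨hτ₁_m, hτ₁_one, hτ₁_τ⟩ := hτ₁_lt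
  obtain ⟨ρ₁, hρ₁, hρ₁_one, h_field⟩ :=
    exists_forall_closedBall_norm_sub_fderiv_le (contDiff_hamVF hH.smooth l) R hτ₁
  obtain ⟨ρ₂, hρ₂, -, h_taylor⟩ :=
    exists_forall_closedBall_abs_sub_taylor_two_le hH.smooth R (half_pos hτ)
  refine ⟨min ρ₁ ρ₂, by positivity, (min_le_left _ _).trans hρ₁_one, fun x hx w hw => ?_⟩
  obtain ⟨hw₁, hw₂⟩ := le_min_iff.1 hw
  have hw_one : ‖w‖ ≤ 1 := hw₁.trans hρ₁_one
  set v := (hamVF H l x).1 + (hamLin H l x w).1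
  have h_vel : ‖v - (hamVF H l (x + w)).1‖ ≤ τ₁ * ‖w‖ := by
    have h := h_field x hx (x + w) (by rwa [add_sub_cancel_left])
    rw [add_sub_cancel_left, (hasFDerivAt_hamVF hH.smooth l x).fderiv, sub_sub, norm_sub_rev] at h
    exact (norm_fst_le _).trans h
  have h_mem : x + w ∈ closedBall (0 : Phase d) (R + 1) := by
    rw [mem_closedBall_zero_iff] at hx ⊢
    exact (norm_add_le _ _).trans (add_le_add hx hw_one)
  have h_bound := h_legendre (x + w) h_mem l v (h_vel.trans (by nlinarith [norm_nonneg w]))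
  have h_error : ‖v - (hamVF H l (x + w)).1‖ ^ 2 / (4 * m) ≤ τ / 2 * ‖w‖ ^ 2 := by
    rw [div_le_iff₀ (by positivity)]
    calc ‖v - (hamVF H l (x + w)).1‖ ^ 2 ≤ (τ₁ * ‖w‖) ^ 2 := by gcongr
      _ = τ₁ * τ₁ * ‖w‖ ^ 2 := by ring
      _ ≤ 1 * (2 * m * τ) * ‖w‖ ^ 2 := by gcongr
      _ = τ / 2 * ‖w‖ ^ 2 * (4 * m) := by ring
  have h_taylor_lower := (abs_le.1 (h_taylor x hx w hw₂)).1
  simp only [Prod.fst_add, Prod.snd_add] at h_bound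
  linarith

end LagrangianBounds

/-! ### Linearized orbits and their action -/

section LinearizedOrbit

variable {d : ℕ} {H : Phase d → ℝ} {l T : ℝ} {z : ℝ → Phase d} {Φ : ℝ → Phase d →L[ℝ] Phase d}

/-- `z` solves the `l`-discounted Hamilton equation on `[-T, 0]`, and `Φ s` is the differential at
`z 0` of the time-`s` map. -/
structure LinearizedOrbit (H : Phase d → ℝ) (l T : ℝ) (z : ℝ → Phase d)
    (Φ : ℝ → Phase d →L[ℝ] Phase d) : Prop where
  nonneg : 0 ≤ T
  hasDerivAt : ∀ s ∈ Icc (-T) 0, HasDerivAt z (hamVF H l (z s)) s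
  apply_zero : Φ 0 = ContinuousLinearMap.id ℝ (Phase d)
  hasDerivAt_lin : ∀ s ∈ Icc (-T) 0, HasDerivAt Φ ((hamLin H l (z s)).comp (Φ s)) s

/-- An absolutely continuous curve on `[a, 0]` with integrable discounted Lagrangian. -/
def Admissible (H : Phase d → ℝ) (l : ℝ) (γ γ' : ℝ → Euc d) (a : ℝ) : Prop :=
  ACOn γ γ' a 0 ∧
    IntervalIntegrable (fun σ => Real.exp (l * σ) * LegendreL H (γ σ, γ' σ)) volume a 0

/-- The discounted action of the curve `γ` with velocity `γ'` over `[-s, 0]`. -/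
def action (H : Phase d → ℝ) (l : ℝ) (γ γ' : ℝ → Euc d) (s : ℝ) : ℝ :=
  ∫ σ in (-s)..0, Real.exp (l * σ) * LegendreL H (γ σ, γ' σ)

/-- The Lagrangian in Hamiltonian coordinates, `⟨p, ∂H/∂p⟩ - H`. -/
def dualLagrangian (H : Phase d → ℝ) (l : ℝ) (x : Phase d) : ℝ := ⟪x.2, (hamVF H l x).1⟫ - H x

/-- The discounted action over `[-s, 0]` of an orbit `z` in phase space. -/
def orbitAction (H : Phase d → ℝ) (l : ℝ) (z : ℝ → Phase d) (s : ℝ) : ℝ :=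
  ∫ σ in (-s)..0, Real.exp (l * σ) * dualLagrangian H l (z σ)

/-- The second-order expansion of the generating function of the flow: moving an endpoint `x` of an
orbit by `w` changes the action by `boundaryTerm x w`, up to `o(‖w‖²)`. -/
def boundaryTerm (x w : Phase d) : ℝ := ⟪x.2, w.1⟫ + 1 / 2 * ⟪w.2, w.1⟫

theorem hasDerivAt_exp_const_mul (l s : ℝ) :
    HasDerivAt (fun σ => Real.exp (l * σ)) (Real.exp (l * s) * l) s :=
  ((hasDerivAt_id s).const_mul l).exp.congr_deriv (by simp)

theorem hasDerivAt_phase_fst {f : ℝ → Phase d} {f' : Phase d} {s : ℝ} (h : HasDerivAt f f' s) :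
    HasDerivAt (fun σ => (f σ).1) f'.1 s := h.hasFDerivAt.fst.hasDerivAt.congr_deriv (by simp)

theorem hasDerivAt_phase_snd {f : ℝ → Phase d} {f' : Phase d} {s : ℝ} (h : HasDerivAt f f' s) :
    HasDerivAt (fun σ => (f σ).2) f'.2 s := h.hasFDerivAt.snd.hasDerivAt.congr_deriv (by simp)

theorem apply_eq_apply_fst_add_apply_snd (f : Phase d →L[ℝ] ℝ) (w : Phase d) :
    f w = f (w.1, 0) + f (0, w.2) := (f.comp_inl_add_comp_inr w).symm

theorem continuous_dualLagrangian (hH : ContDiff ℝ 2 H) (l : ℝ) :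
    Continuous (dualLagrangian H l) :=
  (continuous_snd.inner (contDiff_hamVF hH l).continuous.fst).sub hH.continuous

namespace LinearizedOrbit

theorem continuousOn (h : LinearizedOrbit H l T z Φ) : ContinuousOn z (Icc (-T) 0) :=
  HasDerivAt.continuousOn h.hasDerivAt

theorem continuousOn_lin (h : LinearizedOrbit H l T z Φ) : ContinuousOn Φ (Icc (-T) 0) :=
  HasDerivAt.continuousOn h.hasDerivAt_lin

theorem hasDerivAt_lin_apply (h : LinearizedOrbit H l T z Φ) (w : Phase d) {s : ℝ}
    (hs : s ∈ Icc (-T) 0) : HasDerivAt (fun σ => Φ σ w) (hamLin H l (z s) (Φ s w)) s :=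
  ((h.hasDerivAt_lin s hs).clm_apply (hasDerivAt_const s w)).congr_deriv (by simp)

theorem mono (h : LinearizedOrbit H l T z Φ) {s : ℝ} (hs : s ∈ Icc 0 T) :
    LinearizedOrbit H l s z Φ :=
  have h_sub : Icc (-s) 0 ⊆ Icc (-T) 0 := Icc_subset_Icc_left (neg_le_neg hs.2)
  ⟨hs.1, fun σ hσ => h.hasDerivAt σ (h_sub hσ), h.apply_zero,
    fun σ hσ => h.hasDerivAt_lin σ (h_sub hσ)⟩

theorem exists_forall_norm_le (h : LinearizedOrbit H l T z Φ) :
    ∃ R > 0, ∀ s ∈ Icc (-T) 0, ‖z s‖ ≤ R ∧ ‖Φ s‖ ≤ R := by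
  obtain ⟨C, hC⟩ := isCompact_Icc.exists_bound_of_continuousOn h.continuousOn
  obtain ⟨D, hD⟩ := isCompact_Icc.exists_bound_of_continuousOn h.continuousOn_lin
  exact ⟨max 1 (max C D), by positivity, fun s hs =>
    ⟨(hC s hs).trans ((le_max_left _ _).trans (le_max_right _ _)),
      (hD s hs).trans ((le_max_right _ _).trans (le_max_right _ _))⟩⟩

theorem intervalIntegrable_dualLagrangian (hH : ContDiff ℝ 2 H) (h : LinearizedOrbit H l T z Φ) :
    IntervalIntegrable (fun σ => Real.exp (l * σ) * dualLagrangian H l (z σ)) volume (-T) 0 :=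
  ContinuousOn.intervalIntegrable_of_Icc (neg_nonpos.2 h.nonneg) <|
    (Continuous.continuousOn (by fun_prop)).mul
      ((continuous_dualLagrangian hH l).comp_continuousOn h.continuousOn)

end LinearizedOrbit

theorem TonelliHam.exists_forall_abs_legendreL_le (hH : TonelliHam H) (R : ℝ) :
    ∃ C, ∀ x ∈ closedBall (0 : Phase d) R, |LegendreL H x| ≤ C := by
  obtain ⟨B, hB⟩ := hH.superlinear R
  obtain ⟨D, hD⟩ := (isCompact_closedBall (0 : Phase d) R).exists_bound_of_continuousOn
    (hH.smooth.continuous.comp (continuous_fst.prodMk continuous_const) :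
      Continuous fun x : Phase d => H (x.1, 0)).continuousOn
  refine ⟨max D (-B), fun x hx => abs_le'.2 ⟨?_, ?_⟩⟩
  · refine le_max_of_le_right (legendreL_le fun p => ?_)
    have h_vel : ‖x.2‖ ≤ R := (norm_snd_le x).trans (mem_closedBall_zero_iff.1 hx)
    have h_inner := real_inner_le_norm p x.2
    nlinarith [hB x.1 p, norm_nonneg p]
  · refine le_max_of_le_left ?_
    have h_lower := hH.inner_sub_le_legendreL x.1 x.2 0
    rw [inner_zero_left, zero_sub] at h_lower
    have h_zero : H (x.1, 0) ≤ D := (le_abs_self _).trans (hD x hx)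
    exact (neg_le_neg h_lower).trans (by rwa [neg_neg])

theorem Admissible.of_hasDerivAt (hH : TonelliHam H) (l : ℝ) {γ γ' : ℝ → Euc d} {a : ℝ}
    (ha : a ≤ 0) (h_deriv : ∀ s ∈ Icc a 0, HasDerivAt γ (γ' s) s)
    (h_cont : ContinuousOn γ' (Icc a 0)) : Admissible H l γ γ' a := by
  refine ⟨.of_hasDerivAt ha h_deriv h_cont, ?_⟩
  have hγ : ContinuousOn (fun σ => (γ σ, γ' σ)) (Icc a 0) :=
    (HasDerivAt.continuousOn h_deriv).prodMk h_cont
  obtain ⟨R, hR⟩ := isCompact_Icc.exists_bound_of_continuousOn hγ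
  obtain ⟨C, hC⟩ := hH.exists_forall_abs_legendreL_le R
  have h_int : IntegrableOn (fun σ => LegendreL H (γ σ, γ' σ)) (Icc a 0) := by
    refine IntegrableOn.of_bound measure_Icc_lt_top ?_ C ?_
    · exact (hH.measurable_legendreL.comp_aemeasurable
        (hγ.aemeasurable measurableSet_Icc)).aestronglyMeasurable
    · exact (ae_restrict_iff' measurableSet_Icc).2 <| .of_forall fun σ hσ =>
        hC _ (mem_closedBall_zero_iff.2 (hR σ hσ))
  exact (intervalIntegrable_iff_integrableOn_Icc_of_le ha).2
    (h_int.continuousOn_mul (by fun_prop) isCompact_Icc)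

namespace LinearizedOrbit

theorem hasDerivAt_boundaryTerm (hH : ContDiff ℝ 2 H) (h : LinearizedOrbit H l T z Φ)
    (w : Phase d) {s : ℝ} (hs : s ∈ Icc (-T) 0) :
    HasDerivAt (fun σ => Real.exp (l * σ) * boundaryTerm (z σ) (Φ σ w))
      (Real.exp (l * s) *
        (⟪(z s).2 + (Φ s w).2, (hamVF H l (z s)).1 + (hamLin H l (z s) (Φ s w)).1⟫ - H (z s)
          - fderiv ℝ H (z s) (Φ s w) - 1 / 2 * hessian H (z s) (Φ s w) (Φ s w)
          - dualLagrangian H l (z s))) s := by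
  have h_orbit := h.hasDerivAt s hs
  have h_lin := h.hasDerivAt_lin_apply w hs
  refine ((hasDerivAt_exp_const_mul l s).mul
    (((hasDerivAt_phase_snd h_orbit).inner ℝ (hasDerivAt_phase_fst h_lin)).add
      (((hasDerivAt_phase_snd h_lin).inner ℝ (hasDerivAt_phase_fst h_lin)).const_mul
        (1 / 2)))).congr_deriv ?_
  simp only [Pi.add_apply]
  generalize Φ s w = W
  generalize z s = x
  have hH' := hH.differentiable two_ne_zero
  rw [apply_eq_apply_fst_add_apply_snd (fderiv ℝ H x),
    apply_eq_apply_fst_add_apply_snd (hessian H x W), ← inner_hamVF_fst hH' l, inner_hamVF_snd hH',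
    inner_hamLin_snd, ← inner_hamLin_fst l]
  simp only [dualLagrangian, inner_add_left, inner_add_right]
  rw [real_inner_comm (hamVF H l x).1 W.2, real_inner_comm (hamLin H l x W).1 W.2]
  ring

theorem admissible_add_lin_apply (hH : TonelliHam H) (h : LinearizedOrbit H l T z Φ)
    (w : Phase d) :
    Admissible H l (fun σ => (z σ).1 + (Φ σ w).1)
      (fun σ => (hamVF H l (z σ)).1 + (hamLin H l (z σ) (Φ σ w)).1) (-T) := by
  refine .of_hasDerivAt hH l (neg_nonpos.2 h.nonneg) (fun σ hσ =>
    (hasDerivAt_phase_fst (h.hasDerivAt σ hσ)).add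
      (hasDerivAt_phase_fst (h.hasDerivAt_lin_apply w hσ))) ?_
  exact ((contDiff_hamVF hH.smooth l).continuous.comp_continuousOn h.continuousOn).fst.add
    (((continuous_hamLin hH.smooth l).comp_continuousOn h.continuousOn).clm_apply
      (h.continuousOn_lin.clm_apply continuousOn_const)).fst

theorem action_add_lin_apply_le (hH : TonelliHam H) (hl : 0 ≤ l) (h : LinearizedOrbit H l T z Φ)
    (w : Phase d) {C : ℝ}
    (h_le : ∀ σ ∈ Icc (-T) 0,
      LegendreL H ((z σ).1 + (Φ σ w).1, (hamVF H l (z σ)).1 + (hamLin H l (z σ) (Φ σ w)).1) ≤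
        ⟪(z σ).2 + (Φ σ w).2, (hamVF H l (z σ)).1 + (hamLin H l (z σ) (Φ σ w)).1⟫ - H (z σ)
          - fderiv ℝ H (z σ) (Φ σ w) - 1 / 2 * hessian H (z σ) (Φ σ w) (Φ σ w) + C)
    (hC : 0 ≤ C) :
    action H l (fun σ => (z σ).1 + (Φ σ w).1)
        (fun σ => (hamVF H l (z σ)).1 + (hamLin H l (z σ) (Φ σ w)).1) T ≤
      orbitAction H l z T + boundaryTerm (z 0) w
        - Real.exp (-(l * T)) * boundaryTerm (z (-T)) (Φ (-T) w) + T * C := by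
  have hT : -T ≤ 0 := neg_nonpos.2 h.nonneg
  have h_int := (h.admissible_add_lin_apply hH w).2
  have h_orbit := h.intervalIntegrable_dualLagrangian hH.smooth
  have h_ftc := intervalIntegral.integral_le_sub_of_hasDeriv_right_of_le hT
    (HasDerivAt.continuousOn fun s hs => h.hasDerivAt_boundaryTerm hH.smooth w hs)
    (fun s hs => (h.hasDerivAt_boundaryTerm hH.smooth w
      (Ioo_subset_Icc_self hs)).hasDerivWithinAt)
    ((intervalIntegrable_iff_integrableOn_Icc_of_le hT).1
      ((h_int.sub h_orbit).sub (intervalIntegrable_const (c := C)))) fun σ hσ => ?_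
  · rw [intervalIntegral.integral_sub (h_int.sub h_orbit) intervalIntegrable_const,
      intervalIntegral.integral_sub h_int h_orbit] at h_ftc
    simp only [intervalIntegral.integral_const, zero_sub, neg_neg, smul_eq_mul, mul_zero,
      Real.exp_zero, one_mul, h.apply_zero, ContinuousLinearMap.id_apply, mul_neg] at h_ftc
    simp only [action, orbitAction]
    linarith
  · have h_discount : Real.exp (l * σ) * C ≤ C :=
      mul_le_of_le_one_left hC (Real.exp_le_one_iff.2 (mul_nonpos_of_nonneg_of_nonpos hl hσ.2.le))
    have := mul_le_mul_of_nonneg_left (h_le σ (Ioo_subset_Icc_self hσ)) (Real.exp_nonneg (l * σ))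
    linarith

theorem exists_forall_action_le (hH : TonelliHam H) (hl : 0 ≤ l) (h : LinearizedOrbit H l T z Φ)
    {τ : ℝ} (hτ : 0 < τ) :
    ∃ ρ > 0, ∀ w : Phase d, ‖w‖ ≤ ρ → ∀ s ∈ Icc 0 T, ∃ β β' : ℝ → Euc d,
      Admissible H l β β' (-s) ∧ β 0 = (z 0).1 + w.1 ∧ β (-s) = (z (-s)).1 + (Φ (-s) w).1 ∧
        action H l β β' s ≤ orbitAction H l z s + boundaryTerm (z 0) w
          - Real.exp (-(l * s)) * boundaryTerm (z (-s)) (Φ (-s) w) + τ * ‖w‖ ^ 2 := by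
  obtain ⟨R, hR, h_bound⟩ := h.exists_forall_norm_le
  have hT := h.nonneg
  obtain ⟨ρ, hρ, -, h_legendre⟩ := hH.exists_forall_legendreL_hamLin_le l R
    (τ := τ / (R ^ 2 * (T + 1))) (by positivity)
  refine ⟨ρ / R, by positivity, fun w hw s hs => ?_⟩
  have h' := h.mono hs
  refine ⟨_, _, h'.admissible_add_lin_apply hH w, by simp [h.apply_zero], rfl,
    (h'.action_add_lin_apply_le hH hl w (C := τ * ‖w‖ ^ 2 / (T + 1)) (fun σ hσ => ?_)
      (by positivity)).trans (add_le_add_right ?_ _)⟩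
  · obtain ⟨h_pos, h_lin⟩ := h_bound σ ⟨(neg_le_neg hs.2).trans hσ.1, hσ.2⟩
    have h_norm : ‖Φ σ w‖ ≤ R * ‖w‖ := (Φ σ).le_of_opNorm_le h_lin w
    refine (h_legendre (z σ) (mem_closedBall_zero_iff.2 h_pos) (Φ σ w)
      (h_norm.trans ((le_div_iff₀' hR).1 hw))).trans (add_le_add_right ?_ _)
    calc τ / (R ^ 2 * (T + 1)) * ‖Φ σ w‖ ^ 2 ≤ τ / (R ^ 2 * (T + 1)) * (R * ‖w‖) ^ 2 := by gcongr
      _ = τ * ‖w‖ ^ 2 / (T + 1) := by field_simp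
  · rw [mul_div_assoc', div_le_iff₀ (by positivity), mul_comm]
    gcongr
    linarith [hs.2]

end LinearizedOrbit

end LinearizedOrbit

/-! ### The Riccati equation along an orbit -/

section Riccati

variable {d : ℕ} {H : Phase d → ℝ} {l T μ : ℝ} {z : ℝ → Phase d} {Φ : ℝ → Phase d →L[ℝ] Phase d}
  {A : Euc d →L[ℝ] Euc d} {Q Q' : ℝ → Euc d →L[ℝ] Euc d}

/-- The symplectic form of `T^*ℝ^d`. -/
def symplecticForm (w₁ w₂ : Phase d) : ℝ := ⟪w₁.2, w₂.1⟫ - ⟪w₂.2, w₁.1⟫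

theorem symplecticForm_hamLin_add (hH : ContDiff ℝ 2 H) (l : ℝ) (x w₁ w₂ : Phase d) :
    symplecticForm (hamLin H l x w₁) w₂ + symplecticForm w₁ (hamLin H l x w₂) =
      -(l * symplecticForm w₁ w₂) := by
  have h_symm := hessian_comm hH x w₁ w₂
  rw [apply_eq_apply_fst_add_apply_snd (hessian H x w₁),
    apply_eq_apply_fst_add_apply_snd (hessian H x w₂)] at h_symm
  simp only [symplecticForm]
  rw [inner_hamLin_snd, inner_hamLin_snd, real_inner_comm (hamLin H l x w₂).1,
    real_inner_comm (hamLin H l x w₁).1, inner_hamLin_fst, inner_hamLin_fst]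
  linear_combination -h_symm

theorem LinearizedOrbit.exp_mul_symplecticForm (hH : ContDiff ℝ 2 H)
    (h : LinearizedOrbit H l T z Φ) (w₁ w₂ : Phase d) {s : ℝ} (hs : s ∈ Icc (-T) 0) :
    Real.exp (l * s) * symplecticForm (Φ s w₁) (Φ s w₂) = symplecticForm w₁ w₂ := by
  have h_deriv (σ : ℝ) (hσ : σ ∈ Icc (-T) 0) :
      HasDerivAt (fun σ => Real.exp (l * σ) * symplecticForm (Φ σ w₁) (Φ σ w₂)) 0 σ := by
    have h₁ := h.hasDerivAt_lin_apply w₁ hσ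
    have h₂ := h.hasDerivAt_lin_apply w₂ hσ
    have h_form := symplecticForm_hamLin_add hH l (z σ) (Φ σ w₁) (Φ σ w₂)
    refine ((hasDerivAt_exp_const_mul l σ).mul
      (((hasDerivAt_phase_snd h₁).inner ℝ (hasDerivAt_phase_fst h₂)).sub
        ((hasDerivAt_phase_snd h₂).inner ℝ (hasDerivAt_phase_fst h₁)))).congr_deriv ?_
    simp only [symplecticForm, Pi.sub_apply] at h_form ⊢
    linear_combination Real.exp (l * σ) * h_form
  have h_const := constant_of_has_deriv_right_zero (HasDerivAt.continuousOn h_deriv)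
    fun σ hσ => (h_deriv σ (Ico_subset_Icc_self hσ)).hasDerivWithinAt
  have h_zero := (h_const s hs).trans (h_const 0 ⟨neg_nonpos.2 h.nonneg, le_rfl⟩).symm
  simpa [h.apply_zero] using h_zero

theorem isUnit_of_forall_apply_eq_zero {E : Type*} [NormedAddCommGroup E] [NormedSpace ℝ E]
    [FiniteDimensional ℝ E] {M : E →L[ℝ] E} (hM : ∀ v, M v = 0 → v = 0) : IsUnit M := by
  have : CompleteSpace E := FiniteDimensional.complete ℝ E
  have h_inj : Function.Injective (M : E →ₗ[ℝ] E) := (injective_iff_map_eq_zero _).2 hM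
  exact ContinuousLinearMap.isUnit_iff_bijective.2
    ⟨h_inj, LinearMap.injective_iff_surjective.1 h_inj⟩

/-- The base component `v ↦ (Φ s (v, A v)).1` of the image of the graph of `A`. -/
def graphFst (Φ : ℝ → Phase d →L[ℝ] Phase d) (A : Euc d →L[ℝ] Euc d) (s : ℝ) :
    Euc d →L[ℝ] Euc d :=
  (ContinuousLinearMap.fst ℝ (Euc d) (Euc d)).comp
    ((Φ s).comp ((ContinuousLinearMap.id ℝ (Euc d)).prod A))

/-- The fiber component `v ↦ (Φ s (v, A v)).2` of the image of the graph of `A`. -/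
def graphSnd (Φ : ℝ → Phase d →L[ℝ] Phase d) (A : Euc d →L[ℝ] Euc d) (s : ℝ) :
    Euc d →L[ℝ] Euc d :=
  (ContinuousLinearMap.snd ℝ (Euc d) (Euc d)).comp
    ((Φ s).comp ((ContinuousLinearMap.id ℝ (Euc d)).prod A))

/-- The operator whose graph is the image under `Φ s` of the graph of `A`, provided this image is
transverse to the vertical. -/
def graphSlope (Φ : ℝ → Phase d →L[ℝ] Phase d) (A : Euc d →L[ℝ] Euc d) (s : ℝ) :
    Euc d →L[ℝ] Euc d := graphSnd Φ A s * Ring.inverse (graphFst Φ A s)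

/-- The right-hand side of the Riccati equation satisfied by the slope of a Lagrangian subspace
carried by the linearized flow at `x`. -/
def riccatiField (H : Phase d → ℝ) (l : ℝ) (x : Phase d) (Q : Euc d →L[ℝ] Euc d) :
    Euc d →L[ℝ] Euc d :=
  (.snd ℝ (Euc d) (Euc d) - Q.comp (.fst ℝ (Euc d) (Euc d))).comp
    ((hamLin H l x).comp ((ContinuousLinearMap.id ℝ (Euc d)).prod Q))

/-- `Q` is a symmetric subsolution, with defect `μ`, of the Riccati equation along `z`. -/
structure RiccatiSubsolution (H : Phase d → ℝ) (l T : ℝ) (z : ℝ → Phase d)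
    (Q Q' : ℝ → Euc d →L[ℝ] Euc d) (μ : ℝ) : Prop where
  hasDerivAt : ∀ s ∈ Icc (-T) 0, HasDerivAt Q (Q' s) s
  continuousOn_deriv : ContinuousOn Q' (Icc (-T) 0)
  symm : ∀ s ∈ Icc (-T) 0, ∀ x y, ⟪Q s x, y⟫ = ⟪Q s y, x⟫
  le : ∀ s ∈ Icc (-T) 0, ∀ y, ⟪Q' s y, y⟫ + hessian H (z s) (y, Q s y) (y, Q s y)
    + l * ⟪Q s y, y⟫ ≤ -μ * ‖y‖ ^ 2

theorem inner_riccatiField {Q : Euc d →L[ℝ] Euc d} (hQ : ∀ x y, ⟪Q x, y⟫ = ⟪Q y, x⟫) (l : ℝ)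
    (x : Phase d) (y : Euc d) :
    ⟪riccatiField H l x Q y, y⟫ = -hessian H x (y, Q y) (y, Q y) - l * ⟪Q y, y⟫ := by
  have h_apply : riccatiField H l x Q y =
      (hamLin H l x (y, Q y)).2 - Q (hamLin H l x (y, Q y)).1 := by simp [riccatiField]
  rw [h_apply, inner_sub_left, hQ, inner_hamLin_snd, real_inner_comm (hamLin H l x (y, Q y)).1,
    inner_hamLin_fst, apply_eq_apply_fst_add_apply_snd (hessian H x (y, Q y)) (y, Q y)]
  ring

section Slope

variable (h_inj : ∀ s ∈ Icc (-T) 0, ∀ v, graphFst Φ A s v = 0 → v = 0) {s : ℝ}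

include h_inj in
theorem graphFst_inverse_apply (hs : s ∈ Icc (-T) 0) (y : Euc d) :
    graphFst Φ A s (Ring.inverse (graphFst Φ A s) y) = y :=
  DFunLike.congr_fun
    (Ring.mul_inverse_cancel _ (isUnit_of_forall_apply_eq_zero (h_inj s hs))) y

include h_inj in
theorem graphSlope_graphFst (hs : s ∈ Icc (-T) 0) (v : Euc d) :
    graphSlope Φ A s (graphFst Φ A s v) = graphSnd Φ A s v := by
  rw [graphSlope, mul_apply_eq_comp]
  exact congrArg (graphSnd Φ A s) (DFunLike.congr_fun
    (Ring.inverse_mul_cancel _ (isUnit_of_forall_apply_eq_zero (h_inj s hs))) v)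

include h_inj in
theorem lin_apply_graph_inverse (hs : s ∈ Icc (-T) 0) (y : Euc d) :
    Φ s (Ring.inverse (graphFst Φ A s) y, A (Ring.inverse (graphFst Φ A s) y)) =
      (y, graphSlope Φ A s y) :=
  Prod.ext (graphFst_inverse_apply h_inj hs y) rfl

include h_inj in
theorem graphSlope_symm (hH : ContDiff ℝ 2 H) (h : LinearizedOrbit H l T z Φ)
    (hA : ∀ x y, ⟪A x, y⟫ = ⟪A y, x⟫) (hs : s ∈ Icc (-T) 0) (x y : Euc d) :
    ⟪graphSlope Φ A s x, y⟫ = ⟪graphSlope Φ A s y, x⟫ := by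
  have h_form := h.exp_mul_symplecticForm hH
    (Ring.inverse (graphFst Φ A s) x, A (Ring.inverse (graphFst Φ A s) x))
    (Ring.inverse (graphFst Φ A s) y, A (Ring.inverse (graphFst Φ A s) y)) hs
  rw [lin_apply_graph_inverse h_inj hs, lin_apply_graph_inverse h_inj hs] at h_form
  simp only [symplecticForm, hA (Ring.inverse (graphFst Φ A s) x), sub_self] at h_form
  exact sub_eq_zero.1 ((mul_eq_zero.1 h_form).resolve_left (Real.exp_pos _).ne')

include h_inj in
theorem hasDerivAt_graphSlope (h : LinearizedOrbit H l T z Φ) (hs : s ∈ Icc (-T) 0) :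
    HasDerivAt (graphSlope Φ A) (riccatiField H l (z s) (graphSlope Φ A s)) s := by
  have h_graph := (h.hasDerivAt_lin s hs).clm_comp
    (hasDerivAt_const s ((ContinuousLinearMap.id ℝ (Euc d)).prod A))
  have h_fst := (hasDerivAt_const s (ContinuousLinearMap.fst ℝ (Euc d) (Euc d))).clm_comp h_graph
  have h_snd := (hasDerivAt_const s (ContinuousLinearMap.snd ℝ (Euc d) (Euc d))).clm_comp h_graph
  obtain ⟨u, hu⟩ := isUnit_of_forall_apply_eq_zero (h_inj s hs)
  have h_inverse := hasFDerivAt_ringInverse (𝕜 := ℝ) u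
  rw [hu] at h_inverse
  have hu_inv : (↑u⁻¹ : Euc d →L[ℝ] Euc d) = Ring.inverse (graphFst Φ A s) := by
    rw [← hu, Ring.inverse_unit]
  refine (h_snd.mul (h_inverse.comp_hasDerivAt s h_fst)).congr_deriv ?_
  ext1 y
  simp [hu_inv, riccatiField, lin_apply_graph_inverse h_inj hs, sub_eq_add_neg]

include h_inj in
theorem riccatiSubsolution_graphSlope (hH : ContDiff ℝ 2 H) (h : LinearizedOrbit H l T z Φ)
    (hA : ∀ x y, ⟪A x, y⟫ = ⟪A y, x⟫) :
    RiccatiSubsolution H l T z (graphSlope Φ A)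
      (fun s => riccatiField H l (z s) (graphSlope Φ A s)) 0 where
  hasDerivAt _ hs := hasDerivAt_graphSlope h_inj h hs
  continuousOn_deriv := by
    have h_slope : ContinuousOn (graphSlope Φ A) (Icc (-T) 0) :=
      HasDerivAt.continuousOn fun _ hs => hasDerivAt_graphSlope h_inj h hs
    have h_lin : ContinuousOn (fun s => hamLin H l (z s)) (Icc (-T) 0) :=
      (continuous_hamLin hH l).comp_continuousOn h.continuousOn
    have h_graph : ContinuousOn
        (fun s => (ContinuousLinearMap.id ℝ (Euc d)).prod (graphSlope Φ A s)) (Icc (-T) 0) :=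
      (ContinuousLinearMap.prodₗᵢ ℝ).continuous.comp_continuousOn
        (continuousOn_const.prodMk h_slope)
    exact (continuousOn_const.sub (h_slope.clm_comp continuousOn_const)).clm_comp
      (h_lin.clm_comp h_graph)
  symm _ hs := graphSlope_symm h_inj hH h hA hs
  le s hs y := by
    rw [inner_riccatiField (graphSlope_symm h_inj hH h hA hs)]
    linarith

end Slope

theorem apply_add_add_le {E : Type*} [NormedAddCommGroup E] [NormedSpace ℝ E]
    {B : E →L[ℝ] E →L[ℝ] ℝ} (hB : ∀ v w, B v w = B w v) {C : ℝ} (hC : ‖B‖ ≤ C) (v w : E) :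
    B (v + w) (v + w) ≤ B v v + 2 * (C * ‖v‖ * ‖w‖) + C * ‖w‖ ^ 2 := by
  have h_le (a b : E) : B a b ≤ C * ‖a‖ * ‖b‖ :=
    (le_abs_self _).trans ((B.le_opNorm₂ a b).trans (by gcongr))
  have h_cross := h_le v w
  have h_square := h_le w w
  simp only [map_add, add_apply, hB w v]
  linarith

theorem norm_prodMk_apply_le {Q : Euc d →L[ℝ] Euc d} {q : ℝ} (hq : ‖Q‖ ≤ q) (y : Euc d) :
    ‖((y, Q y) : Phase d)‖ ≤ (1 + q) * ‖y‖ := by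
  have h_apply := Q.le_of_opNorm_le hq y
  refine (norm_prod_le_iff).2 ⟨?_, ?_⟩ <;> nlinarith [norm_nonneg y, norm_nonneg Q]

theorem norm_zero_prodMk (k : Euc d) : ‖((0, k) : Phase d)‖ = ‖k‖ := by
  rw [Prod.norm_mk, norm_zero, max_eq_right (norm_nonneg _)]

theorem apply_prodMk_add_smul_le {B : Phase d →L[ℝ] Phase d →L[ℝ] ℝ}
    (hB : ∀ v w, B v w = B w v) {C : ℝ} (hC₀ : 0 ≤ C) (hC : ‖B‖ ≤ C) {Q : Euc d →L[ℝ] Euc d}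
    {q : ℝ} (hq : ‖Q‖ ≤ q) {n : ℝ} (hn₀ : 0 ≤ n) (hn₁ : n ≤ 1) (y : Euc d) :
    B (y, Q y + n • y) (y, Q y + n • y) ≤
      B (y, Q y) (y, Q y) + n * ((2 * C * (1 + q) + C) * ‖y‖ ^ 2) := by
  have h_eq : ((y, Q y + n • y) : Phase d) = (y, Q y) + (0, n • y) := by simp
  have h_norm : ‖((0, n • y) : Phase d)‖ = n * ‖y‖ := by
    rw [norm_zero_prodMk, norm_smul, Real.norm_of_nonneg hn₀]
  have h_cross : C * ‖((y, Q y) : Phase d)‖ * (n * ‖y‖) ≤ C * ((1 + q) * ‖y‖) * (n * ‖y‖) := by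
    gcongr
    exact norm_prodMk_apply_le hq y
  have h_square : n * n * (C * ‖y‖ ^ 2) ≤ n * 1 * (C * ‖y‖ ^ 2) := by gcongr
  rw [h_eq]
  refine (apply_add_add_le hB hC _ _).trans ?_
  rw [h_norm]
  linarith

theorem exists_forall_norm_hessian_le {α : Type*} [TopologicalSpace α] {z : α → Phase d}
    (hH : ContDiff ℝ 2 H) {K : Set α} (hK : IsCompact K) (hz : ContinuousOn z K) :
    ∃ C > 0, ∀ s ∈ K, ‖hessian H (z s)‖ ≤ C := by
  have h_norm := Continuous.norm (E := Phase d →L[ℝ] Phase d →L[ℝ] ℝ) (continuous_hessian hH)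
  obtain ⟨C, hC⟩ := hK.exists_bound_of_continuousOn (h_norm.comp_continuousOn hz)
  exact ⟨max 1 C, by positivity,
    fun s hs => (le_abs_self _).trans ((hC s hs).trans (le_max_right _ _))⟩

theorem mul_exp_neg_mul_mem_Icc {c m : ℝ} (hc : 0 ≤ c) (hm : 0 ≤ m) {s : ℝ}
    (hs : s ∈ Icc (-T) 0) :
    m * Real.exp (-(c * T)) * Real.exp (-c * s) ∈ Icc (m * Real.exp (-(c * T))) m := by
  refine ⟨le_mul_of_one_le_right (by positivity) (Real.one_le_exp (by nlinarith [hs.2])), ?_⟩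
  rw [mul_assoc, ← Real.exp_add]
  exact mul_le_of_le_one_right hm (Real.exp_le_one_iff.2 (by nlinarith [hs.1]))

/- Adding `n s • id` with `n s = η e^{-cs}` makes the inequality strict: for `c` large the term
`n' s = -c n s` dominates the change of the quadratic form of the Hessian, which is `O(n s)`. -/
theorem RiccatiSubsolution.exists_pos_le (hH : ContDiff ℝ 2 H) (hT : 0 ≤ T)
    (hz : ContinuousOn z (Icc (-T) 0)) (h : RiccatiSubsolution H l T z Q Q' 0) {ν : ℝ}
    (hν : 0 < ν) :
    ∃ P P' : ℝ → Euc d →L[ℝ] Euc d, ∃ μ > 0, RiccatiSubsolution H l T z P P' μ ∧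
      ∀ s ∈ Icc (-T) 0, ∀ y, ⟪P s y, y⟫ ≤ ⟪Q s y, y⟫ + ν * ‖y‖ ^ 2 := by
  obtain ⟨q, hq⟩ :=
    isCompact_Icc.exists_bound_of_continuousOn (HasDerivAt.continuousOn h.hasDerivAt)
  obtain ⟨C, hC₀, hC⟩ := exists_forall_norm_hessian_le hH isCompact_Icc hz
  have hq₀ : 0 ≤ q := (norm_nonneg _).trans (hq 0 ⟨neg_nonpos.2 hT, le_rfl⟩)
  set c := |l| + 1 + 2 * C * (1 + q) + C with hc
  have hm : 0 < min ν 1 := by positivity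
  set η := min ν 1 * Real.exp (-(c * T))
  have hη : 0 < η := by positivity
  have h_mem (s : ℝ) (hs : s ∈ Icc (-T) 0) : η * Real.exp (-c * s) ∈ Icc η (min ν 1) :=
    mul_exp_neg_mul_mem_Icc (by positivity) hm.le hs
  have h_apply (s : ℝ) (y : Euc d) :
      (Q s + (η * Real.exp (-c * s)) • ContinuousLinearMap.id ℝ (Euc d)) y =
        Q s y + (η * Real.exp (-c * s)) • y := by simp
  refine ⟨fun s => Q s + (η * Real.exp (-c * s)) • ContinuousLinearMap.id ℝ (Euc d),
    fun s => Q' s + (η * (Real.exp (-c * s) * -c)) • ContinuousLinearMap.id ℝ (Euc d), η, hη,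
    ⟨fun s hs => (h.hasDerivAt s hs).add
        (((hasDerivAt_exp_const_mul (-c) s).const_mul η).smul_const
          (ContinuousLinearMap.id ℝ (Euc d))),
      h.continuousOn_deriv.add (by fun_prop), fun s hs x y => ?_, fun s hs y => ?_⟩,
    fun s hs y => ?_⟩
  · rw [h_apply, h_apply, inner_add_left, inner_add_left, h.symm s hs, real_inner_smul_left,
      real_inner_smul_left, real_inner_comm x y]
  · obtain ⟨hη_le, hn_le⟩ := h_mem s hs
    set n := η * Real.exp (-c * s)
    have h_hessian := apply_prodMk_add_smul_le (hessian_comm hH (z s)) hC₀.le (hC s hs) (hq s hs)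
      (hη.le.trans hη_le) (hn_le.trans (min_le_right _ _)) y
    have h_riccati := h.le s hs y
    have h_deriv : (Q' s + (η * (Real.exp (-c * s) * -c)) • ContinuousLinearMap.id ℝ (Euc d)) y =
        Q' s y - (c * n) • y := by
      simp only [add_apply, smul_apply, ContinuousLinearMap.id_apply, sub_eq_add_neg, ← neg_smul]
      congr 2
      ring
    have h_damp : l * (n * ‖y‖ ^ 2) ≤ |l| * (n * ‖y‖ ^ 2) := by
      gcongr
      exact le_abs_self l
    have h_defect : η * ‖y‖ ^ 2 ≤ n * ‖y‖ ^ 2 := by gcongr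
    rw [h_deriv, h_apply, inner_sub_left, inner_add_left, real_inner_smul_left,
      real_inner_smul_left, real_inner_self_eq_norm_sq]
    linear_combination h_hessian + h_riccati + h_damp + h_defect - n * ‖y‖ ^ 2 * hc
  · rw [h_apply, inner_add_left, real_inner_smul_left, real_inner_self_eq_norm_sq]
    have := (h_mem s hs).2.trans (min_le_left _ _)
    gcongr

end Riccati

/-! ### Calibration from below by a Riccati subsolution -/

section Calibration

variable {d : ℕ} {H : Phase d → ℝ} {l T μ : ℝ} {z : ℝ → Phase d} {Φ : ℝ → Phase d →L[ℝ] Phase d}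
  {Q Q' : ℝ → Euc d →L[ℝ] Euc d}

/-- The derivative of `e^{lσ} boundaryTerm (z σ) (y σ, Q σ (y σ))`, divided by `e^{lσ}`, at a time
where `z σ = x`, `Q σ = S`, `Q' σ = S'`, `y σ = y` and `y' σ = w`. -/
def boundaryRate (H : Phase d → ℝ) (l : ℝ) (x : Phase d) (S S' : Euc d →L[ℝ] Euc d)
    (y w : Euc d) : ℝ :=
  l * boundaryTerm x (y, S y) + (⟪x.2 + S y, w⟫ + ⟪(hamVF H l x).2, y⟫ + 1 / 2 * ⟪S' y, y⟫)

theorem dualLagrangian_add_boundaryRate_add_inner (hH : Differentiable ℝ H) (l : ℝ)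
    (x : Phase d) (S S' : Euc d →L[ℝ] Euc d) (y r w : Euc d) :
    dualLagrangian H l x + boundaryRate H l x S S' y w + ⟪r, w⟫ =
      ⟪x.2 + S y + r, w + (hamVF H l x).1⟫ - (H x + fderiv ℝ H x (y, S y + r)) +
        1 / 2 * (⟪S' y, y⟫ + l * ⟪S y, y⟫) := by
  rw [apply_eq_apply_fst_add_apply_snd (fderiv ℝ H x), ← inner_hamVF_fst hH l, boundaryRate,
    inner_hamVF_snd hH, dualLagrangian, boundaryTerm]
  simp only [inner_add_left, inner_add_right, real_inner_comm _ (hamVF H l x).1]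
  ring

theorem norm_prodMk_add_le {S : Euc d →L[ℝ] Euc d} {q : ℝ} (hq : ‖S‖ ≤ q) (y r : Euc d) :
    ‖((y, S y + r) : Phase d)‖ ≤ (1 + q) * ‖y‖ + ‖r‖ := by
  have h_eq : ((y, S y + r) : Phase d) = (y, S y) + (0, r) := by simp
  rw [h_eq, ← norm_zero_prodMk r]
  exact (norm_add_le _ _).trans (by gcongr; exact norm_prodMk_apply_le hq y)

theorem half_apply_add_mul_norm_sq_le {B : Phase d →L[ℝ] Phase d →L[ℝ] ℝ}
    (hB : ∀ v w, B v w = B w v) {C : ℝ} (hC₀ : 0 ≤ C) (hC : ‖B‖ ≤ C) {S : Euc d →L[ℝ] Euc d}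
    {q : ℝ} (hq : ‖S‖ ≤ q) (hμ : 0 < μ) (y r : Euc d) :
    1 / 2 * B (y, S y + r) (y, S y + r) +
        μ / (8 * (1 + q) ^ 2) * ‖((y, S y + r) : Phase d)‖ ^ 2 ≤
      1 / 2 * B (y, S y) (y, S y) + μ / 2 * ‖y‖ ^ 2 +
        ((C * (1 + q)) ^ 2 / μ + C / 2 + 2 * (μ / (8 * (1 + q) ^ 2))) * ‖r‖ ^ 2 := by
  have hq₀ : 0 ≤ q := (norm_nonneg S).trans hq
  have h_eq : ((y, S y + r) : Phase d) = (y, S y) + (0, r) := by simp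
  have h_expand := apply_add_add_le hB hC (y, S y) (0, r)
  rw [← h_eq, norm_zero_prodMk] at h_expand
  have h_cross : C * ‖((y, S y) : Phase d)‖ * ‖r‖ ≤ C * ((1 + q) * ‖y‖) * ‖r‖ := by
    gcongr
    exact norm_prodMk_apply_le hq y
  have h_young : C * ((1 + q) * ‖y‖) * ‖r‖ ≤
      μ / 4 * ‖y‖ ^ 2 + (C * (1 + q)) ^ 2 / μ * ‖r‖ ^ 2 := by
    have h_sq : 0 ≤ (μ / 2 * ‖y‖ - C * (1 + q) * ‖r‖) ^ 2 / μ := by positivity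
    refine sub_nonneg.1 (h_sq.trans_eq ?_)
    field_simp
    ring
  have h_norm : μ / (8 * (1 + q) ^ 2) * ‖((y, S y + r) : Phase d)‖ ^ 2 ≤
      μ / 4 * ‖y‖ ^ 2 + 2 * (μ / (8 * (1 + q) ^ 2)) * ‖r‖ ^ 2 := calc
    _ ≤ μ / (8 * (1 + q) ^ 2) * ((1 + q) * ‖y‖ + ‖r‖) ^ 2 := by
      gcongr
      exact norm_prodMk_add_le hq y r
    _ ≤ μ / (8 * (1 + q) ^ 2) * (2 * (((1 + q) * ‖y‖) ^ 2 + ‖r‖ ^ 2)) := by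
      gcongr
      exact add_sq_le
    _ = _ := by
      field_simp
      ring
  linear_combination 1 / 2 * h_expand + h_cross + h_young + h_norm

/- Fenchel's inequality at the momentum `(z σ).2 + Q σ y + r`; the free parameter `r` produces the
term `⟪r, v - ẋ⟫`, which penalizes the deviation of the velocity. -/
theorem RiccatiSubsolution.exists_forall_le_legendreL (hH : TonelliHam H)
    (hz : ContinuousOn z (Icc (-T) 0)) (h : RiccatiSubsolution H l T z Q Q' μ) (hμ : 0 < μ) :
    ∃ C ≥ 0, ∃ ρ > 0, ∀ σ ∈ Icc (-T) 0, ∀ y r v : Euc d, ‖y‖ ≤ ρ → ‖r‖ ≤ ρ →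
      dualLagrangian H l (z σ) + boundaryRate H l (z σ) (Q σ) (Q' σ) y (v - (hamVF H l (z σ)).1) +
        ⟪r, v - (hamVF H l (z σ)).1⟫ - C * ‖r‖ ^ 2 ≤ LegendreL H ((z σ).1 + y, v) := by
  obtain ⟨R, hR⟩ := isCompact_Icc.exists_bound_of_continuousOn hz
  obtain ⟨q, hq⟩ :=
    isCompact_Icc.exists_bound_of_continuousOn (HasDerivAt.continuousOn h.hasDerivAt)
  obtain ⟨C, hC₀, hC⟩ := exists_forall_norm_hessian_le hH.smooth isCompact_Icc hz
  have hq_max (σ : ℝ) (hσ : σ ∈ Icc (-T) 0) : ‖Q σ‖ ≤ max q 0 := (hq σ hσ).trans (le_max_left _ _)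
  have hq₀ : 0 ≤ max q 0 := le_max_right _ _
  generalize max q 0 = q at *
  obtain ⟨ρ, hρ, -, h_taylor⟩ := exists_forall_closedBall_abs_sub_taylor_two_le hH.smooth R
    (show 0 < μ / (8 * (1 + q) ^ 2) by positivity)
  refine ⟨(C * (1 + q)) ^ 2 / μ + C / 2 + 2 * (μ / (8 * (1 + q) ^ 2)), by positivity,
    ρ / (2 + q), by positivity, fun σ hσ y r v hy hr => ?_⟩
  rw [le_div_iff₀ (by positivity)] at hy hr
  have h_small : ‖((y, Q σ y + r) : Phase d)‖ ≤ ρ := by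
    refine (norm_prodMk_add_le (hq_max σ hσ) y r).trans ?_
    nlinarith [norm_nonneg y, norm_nonneg r]
  have h_upper := (abs_le.1 (h_taylor (z σ) (mem_closedBall_zero_iff.2 (hR σ hσ)) _ h_small)).2
  have h_fenchel := hH.inner_sub_le_legendreL ((z σ).1 + y) v ((z σ).2 + Q σ y + r)
  have h_point : (((z σ).1 + y, (z σ).2 + Q σ y + r) : Phase d) = z σ + (y, Q σ y + r) :=
    Prod.ext rfl (add_assoc _ _ _)
  have h_rate := dualLagrangian_add_boundaryRate_add_inner (hH.smooth.differentiable two_ne_zero)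
    l (z σ) (Q σ) (Q' σ) y r (v - (hamVF H l (z σ)).1)
  have h_quad := half_apply_add_mul_norm_sq_le (hessian_comm hH.smooth (z σ)) hC₀.le (hC σ hσ)
    (hq_max σ hσ) hμ y r
  rw [sub_add_cancel] at h_rate
  rw [h_point] at h_fenchel
  linear_combination h_rate + h_fenchel + h_upper + h_quad + 1 / 2 * h.le σ hσ y

theorem exists_norm_le_inner_eq {E : Type*} [NormedAddCommGroup E] [InnerProductSpace ℝ E]
    {a : ℝ} (ha : 0 ≤ a) (w : E) : ∃ r : E, ‖r‖ ≤ a ∧ ⟪r, w⟫ = a * ‖w‖ := by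
  rcases eq_or_ne w 0 with rfl | hw
  · exact ⟨0, by simpa using ha, by simp⟩
  · refine ⟨(a / ‖w‖) • w, ?_, ?_⟩
    · rw [norm_smul, Real.norm_of_nonneg (by positivity), div_mul_cancel₀ _ (norm_ne_zero_iff.2 hw)]
    · rw [real_inner_smul_left, real_inner_self_eq_norm_sq]
      field_simp

theorem ACOn.sub {γ γ' ζ ζ' : ℝ → Euc d} {a b : ℝ} (hγ : ACOn γ γ' a b) (hζ : ACOn ζ ζ' a b) :
    ACOn (fun t => γ t - ζ t) (fun t => γ' t - ζ' t) a b := by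
  refine ⟨hγ.1.sub hζ.1, fun t ht => ?_⟩
  have ha : a ∈ Icc a b := left_mem_Icc.2 (ht.1.trans ht.2)
  have h_integral := intervalIntegral.integral_sub (intervalIntegrable_of_subset_Icc hγ.1 ha ht)
    (intervalIntegrable_of_subset_Icc hζ.1 ha ht)
  simp only [h_integral, hγ.2 t ht, hζ.2 t ht]
  abel

namespace RiccatiSubsolution

theorem mono (h : RiccatiSubsolution H l T z Q Q' μ) {s : ℝ} (hs : s ≤ T) :
    RiccatiSubsolution H l s z Q Q' μ :=
  have h_sub : Icc (-s) 0 ⊆ Icc (-T) 0 := Icc_subset_Icc_left (neg_le_neg hs)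
  ⟨fun σ hσ => h.hasDerivAt σ (h_sub hσ), h.continuousOn_deriv.mono h_sub,
    fun σ hσ => h.symm σ (h_sub hσ), fun σ hσ => h.le σ (h_sub hσ)⟩

theorem hasDerivAt_exp_mul_boundaryTerm (h : RiccatiSubsolution H l T z Q Q' μ) {σ : ℝ}
    (hσ : σ ∈ Icc (-T) 0) (hz : HasDerivAt z (hamVF H l (z σ)) σ) {y : ℝ → Euc d} {w : Euc d}
    (hy : HasDerivAt y w σ) :
    HasDerivAt (fun σ => Real.exp (l * σ) * boundaryTerm (z σ) (y σ, Q σ (y σ)))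
      (Real.exp (l * σ) * boundaryRate H l (z σ) (Q σ) (Q' σ) (y σ) w) σ := by
  have h_linear := (hasDerivAt_phase_snd hz).inner ℝ hy
  have h_quad := ((h.hasDerivAt σ hσ).clm_apply hy).inner ℝ hy
  refine ((hasDerivAt_exp_const_mul l σ).mul
    (h_linear.add (h_quad.const_mul (1 / 2)))).congr_deriv ?_
  simp only [boundaryRate, boundaryTerm, Pi.add_apply, inner_add_left]
  linear_combination 1 / 2 * Real.exp (l * σ) * h.symm σ hσ w (y σ)

theorem absolutelyContinuousOnInterval_exp_mul_boundaryTerm (hH : ContDiff ℝ 2 H) (hT : 0 ≤ T)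
    (h : RiccatiSubsolution H l T z Q Q' μ)
    (hz : ∀ σ ∈ Icc (-T) 0, HasDerivAt z (hamVF H l (z σ)) σ) {y : ℝ → Euc d}
    (hy : AbsolutelyContinuousOnInterval y (-T) 0) :
    AbsolutelyContinuousOnInterval
      (fun σ => Real.exp (l * σ) * boundaryTerm (z σ) (y σ, Q σ (y σ))) (-T) 0 := by
  have hT' : -T ≤ 0 := neg_nonpos.2 hT
  have h_field : ContinuousOn (fun σ => hamVF H l (z σ)) (Icc (-T) 0) :=
    (contDiff_hamVF hH l).continuous.comp_continuousOn (HasDerivAt.continuousOn hz)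
  have h_exp := absolutelyContinuousOnInterval_of_hasDerivAt hT'
    (fun σ _ => hasDerivAt_exp_const_mul l σ) (by fun_prop)
  have h_momentum := absolutelyContinuousOnInterval_of_hasDerivAt hT'
    (fun σ hσ => hasDerivAt_phase_snd (hz σ hσ)) h_field.snd
  have h_slope := absolutelyContinuousOnInterval_of_hasDerivAt hT' h.hasDerivAt
    h.continuousOn_deriv
  have h_linear := absolutelyContinuousOnInterval_bilin (innerSL ℝ (E := Euc d)) h_momentum hy
  have h_quad := absolutelyContinuousOnInterval_bilin (innerSL ℝ (E := Euc d))
    (absolutelyContinuousOnInterval_bilin (.id ℝ (Euc d →L[ℝ] Euc d)) h_slope hy) hy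
  exact absolutelyContinuousOnInterval_bilin (.mul ℝ ℝ) h_exp
    (h_linear.fun_add (h_quad.const_smul (1 / 2 : ℝ)))

theorem intervalIntegrable_and_integral_boundaryRate (hH : ContDiff ℝ 2 H) (hT : 0 ≤ T)
    (h : RiccatiSubsolution H l T z Q Q' μ)
    (hz : ∀ σ ∈ Icc (-T) 0, HasDerivAt z (hamVF H l (z σ)) σ) {y y' : ℝ → Euc d}
    (hy : ACOn y y' (-T) 0) (hy₀ : y 0 = 0) :
    IntervalIntegrable (fun σ => Real.exp (l * σ) *
      boundaryRate H l (z σ) (Q σ) (Q' σ) (y σ) (y' σ)) volume (-T) 0 ∧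
    ∫ σ in (-T)..0, Real.exp (l * σ) * boundaryRate H l (z σ) (Q σ) (Q' σ) (y σ) (y' σ) =
      -(Real.exp (-(l * T)) * boundaryTerm (z (-T)) (y (-T), Q (-T) (y (-T)))) := by
  have hT' : -T ≤ 0 := neg_nonpos.2 hT
  have h_deriv : ∀ᵐ t, t ∈ Ioo (-T) 0 →
      HasDerivAt (fun σ => Real.exp (l * σ) * boundaryTerm (z σ) (y σ, Q σ (y σ)))
        (Real.exp (l * t) * boundaryRate H l (z t) (Q t) (Q' t) (y t) (y' t)) t := by
    filter_upwards [hy.ae_hasDerivAt] with t ht ht_mem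
    have ht_mem' := Ioo_subset_Icc_self ht_mem
    exact h.hasDerivAt_exp_mul_boundaryTerm ht_mem' (hz t ht_mem') (ht ht_mem)
  have h_abs := h.absolutelyContinuousOnInterval_exp_mul_boundaryTerm hH hT hz
    (hy.absolutelyContinuousOnInterval hT')
  convert intervalIntegrable_and_integral_eq_sub_of_ae_hasDerivAt hT' h_abs h_deriv using 2
  simp [boundaryTerm, hy₀]

theorem exists_forall_le_exp_mul_legendreL (hH : TonelliHam H) (hl : 0 ≤ l)
    (hz : ContinuousOn z (Icc (-T) 0)) (h : RiccatiSubsolution H l T z Q Q' μ) (hμ : 0 < μ) :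
    ∃ C ≥ 0, ∃ ρ > 0, ∀ σ ∈ Icc (-T) 0, ∀ y v : Euc d, ‖y‖ ≤ ρ → ∀ a ∈ Icc 0 ρ,
      Real.exp (l * σ) * dualLagrangian H l (z σ) + Real.exp (l * σ) *
        boundaryRate H l (z σ) (Q σ) (Q' σ) y (v - (hamVF H l (z σ)).1) +
        (Real.exp (-(l * T)) * a * ‖v - (hamVF H l (z σ)).1‖ - C * a ^ 2) ≤
      Real.exp (l * σ) * LegendreL H ((z σ).1 + y, v) := by
  obtain ⟨C, hC, ρ, hρ, h_point⟩ := h.exists_forall_le_legendreL hH hz hμ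
  refine ⟨C, hC, ρ, hρ, fun σ hσ y v hy a ha => ?_⟩
  obtain ⟨r, hr, hr_inner⟩ := exists_norm_le_inner_eq ha.1 (v - (hamVF H l (z σ)).1)
  have h_fenchel := h_point σ hσ y r v hy (hr.trans ha.2)
  rw [hr_inner] at h_fenchel
  have h_weighted := mul_le_mul_of_nonneg_left h_fenchel (Real.exp_pos (l * σ)).le
  have h_exp_le : Real.exp (l * σ) ≤ 1 :=
    Real.exp_le_one_iff.2 (mul_nonpos_of_nonneg_of_nonpos hl hσ.2)
  have h_le_exp : Real.exp (-(l * T)) ≤ Real.exp (l * σ) :=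
    Real.exp_le_exp.2 (by rw [← mul_neg]; exact mul_le_mul_of_nonneg_left hσ.1 hl)
  have h_speed : Real.exp (-(l * T)) * (a * ‖v - (hamVF H l (z σ)).1‖) ≤
      Real.exp (l * σ) * (a * ‖v - (hamVF H l (z σ)).1‖) :=
    mul_le_mul_of_nonneg_right h_le_exp (mul_nonneg ha.1 (norm_nonneg _))
  have h_square : Real.exp (l * σ) * (C * ‖r‖ ^ 2) ≤ 1 * (C * a ^ 2) := by gcongr
  linear_combination h_weighted + h_speed + h_square

/- Integrate the pointwise bound with `⟪r, y'⟫ = a ‖y'‖`: the boundary rates telescope, and the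
length of `y` controls `‖y (-s)‖`. -/
theorem exists_forall_le_action (hH : TonelliHam H) (hl : 0 ≤ l)
    (hz : ∀ σ ∈ Icc (-T) 0, HasDerivAt z (hamVF H l (z σ)) σ)
    (h : RiccatiSubsolution H l T z Q Q' μ) (hμ : 0 < μ) :
    ∃ C ≥ 0, ∃ ρ > 0, ∀ s ∈ Icc 0 T, ∀ γ γ' : ℝ → Euc d, Admissible H l γ γ' (-s) →
      (∀ σ ∈ Icc (-s) 0, ‖γ σ - (z σ).1‖ ≤ ρ) → γ 0 = (z 0).1 → ∀ a ∈ Icc 0 ρ,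
      orbitAction H l z s - Real.exp (-(l * s)) * boundaryTerm (z (-s))
          (γ (-s) - (z (-s)).1, Q (-s) (γ (-s) - (z (-s)).1)) +
        Real.exp (-(l * T)) * a * ‖γ (-s) - (z (-s)).1‖ - C * a ^ 2 * T ≤ action H l γ γ' s := by
  obtain ⟨C, hC, ρ, hρ, h_point⟩ :=
    h.exists_forall_le_exp_mul_legendreL hH hl (HasDerivAt.continuousOn hz) hμ
  refine ⟨C, hC, ρ, hρ, fun s hs γ γ' hγ h_close h_init a ha => ?_⟩
  have h_sub : Icc (-s) 0 ⊆ Icc (-T) 0 := Icc_subset_Icc_left (neg_le_neg hs.2)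
  have hs' : -s ≤ 0 := neg_nonpos.2 hs.1
  have hz_cont := (HasDerivAt.continuousOn hz).mono h_sub
  set y : ℝ → Euc d := fun σ => γ σ - (z σ).1 with hy
  set y' : ℝ → Euc d := fun σ => γ' σ - (hamVF H l (z σ)).1
  have hy_ac : ACOn y y' (-s) 0 := hγ.1.sub <| .of_hasDerivAt hs'
    (fun σ hσ => hasDerivAt_phase_fst (hz σ (h_sub hσ)))
    ((contDiff_hamVF hH.smooth l).continuous.comp_continuousOn hz_cont).fst
  have hy₀ : y 0 = 0 := sub_eq_zero.2 h_init
  obtain ⟨h_rate_int, h_rate⟩ := (h.mono hs.2).intervalIntegrable_and_integral_boundaryRate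
    hH.smooth hs.1 (fun σ hσ => hz σ (h_sub hσ)) hy_ac hy₀
  have h_lag_int : IntervalIntegrable
      (fun σ => Real.exp (l * σ) * dualLagrangian H l (z σ)) volume (-s) 0 :=
    (ContinuousOn.mul (by fun_prop) ((continuous_dualLagrangian hH.smooth l).comp_continuousOn
      hz_cont)).intervalIntegrable_of_Icc hs'
  have h_speed_int : IntervalIntegrable
      (fun σ => Real.exp (-(l * T)) * a * ‖y' σ‖ - C * a ^ 2) volume (-s) 0 :=
    (hy_ac.1.norm.const_mul _).sub intervalIntegrable_const
  have h_integral := intervalIntegral.integral_mono_on hs'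
    ((h_lag_int.add h_rate_int).add h_speed_int) hγ.2 fun σ hσ => by
      simpa [hy] using h_point σ (h_sub hσ) (y σ) (γ' σ) (h_close σ hσ) a ha
  rw [intervalIntegral.integral_add (h_lag_int.add h_rate_int) h_speed_int,
    intervalIntegral.integral_add h_lag_int h_rate_int, h_rate,
    intervalIntegral.integral_sub (hy_ac.1.norm.const_mul _) intervalIntegrable_const,
    intervalIntegral.integral_const_mul, intervalIntegral.integral_const, zero_sub, neg_neg,
    smul_eq_mul] at h_integral
  have h_length : ‖y (-s)‖ ≤ ∫ σ in (-s)..0, ‖y' σ‖ := by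
    have h_diff := hy_ac.sub_eq_integral (left_mem_Icc.2 hs') (right_mem_Icc.2 hs')
    rw [hy₀, zero_sub] at h_diff
    rw [← norm_neg, h_diff]
    exact intervalIntegral.norm_integral_le_integral_norm hs'
  have h_weighted := mul_le_mul_of_nonneg_left h_length
    (mul_nonneg (Real.exp_pos (-(l * T))).le ha.1)
  have h_error : C * a ^ 2 * s ≤ C * a ^ 2 * T :=
    mul_le_mul_of_nonneg_left hs.2 (by positivity)
  simp only [orbitAction, action]
  linear_combination h_integral + h_weighted + h_error

end RiccatiSubsolution

end Calibration

/-! ### Near-minimizers and the comparison of Alexandrov Hessians -/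

section NearMinimizers

variable {d : ℕ} {H : Phase d → ℝ} {l T μ : ℝ} {z : ℝ → Phase d} {Φ : ℝ → Phase d →L[ℝ] Phase d}
  {Q Q' : ℝ → Euc d →L[ℝ] Euc d} {f : Euc d → ℝ}

theorem Admissible.mono {γ γ' : ℝ → Euc d} (h : Admissible H l γ γ' (-T)) {s : ℝ}
    (hs : s ∈ Icc 0 T) : Admissible H l γ γ' (-s) :=
  ⟨h.1.mono (neg_le_neg hs.2) (neg_nonpos.2 hs.1) le_rfl,
    intervalIntegrable_of_subset_Icc h.2 ⟨neg_le_neg hs.2, neg_nonpos.2 hs.1⟩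
      ⟨neg_nonpos.2 (hs.1.trans hs.2), le_rfl⟩⟩

/-- The curve `γ`, ending at `θ`, realizes the value `f θ` of the Lax–Oleinik infimum up to `η`, in
comparison with all curves that branch off `γ` at a time of `[-T, 0]`. -/
structure IsNearMinimizer (H : Phase d → ℝ) (l T : ℝ) (f : Euc d → ℝ) (θ : Euc d) (η : ℝ)
    (γ γ' : ℝ → Euc d) : Prop where
  admissible : Admissible H l γ γ' (-T)
  apply_zero : γ 0 = θ
  le : ∀ s ∈ Icc 0 T, ∀ β β' : ℝ → Euc d, Admissible H l β β' (-s) → β (-s) = γ (-s) →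
    f (β 0) - action H l β β' s ≤ f θ - action H l γ γ' s + η

/-- Every point is the endpoint of `η`-near-minimizers for all `η > 0`. -/
def HasNearMinimizers (H : Phase d → ℝ) (l T : ℝ) (f : Euc d → ℝ) : Prop :=
  ∀ θ, ∀ η > 0, ∃ γ γ', IsNearMinimizer H l T f θ η γ γ'

theorem IsNearMinimizer.of_le {θ : Euc d} {η η' : ℝ} {γ γ' : ℝ → Euc d}
    (h : IsNearMinimizer H l T f θ η γ γ') (hη : η ≤ η') : IsNearMinimizer H l T f θ η' γ γ' :=
  ⟨h.admissible, h.apply_zero, fun s hs β β' hβ h_branch =>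
    (h.le s hs β β' hβ h_branch).trans (by gcongr)⟩

/- Compare a near-minimizer `γ` with the perturbation of the orbit in the direction `w` that meets
`γ` at time `-s`. -/
theorem RiccatiSubsolution.exists_forall_apply_add_le (hH : TonelliHam H) (hl : 0 ≤ l)
    (h : LinearizedOrbit H l T z Φ) (hQ : RiccatiSubsolution H l T z Q Q' μ) (hμ : 0 < μ) {τ : ℝ}
    (hτ : 0 < τ) :
    ∃ C ≥ 0, ∃ ρ > 0, ∀ (f : Euc d → ℝ) (η : ℝ) (γ γ' : ℝ → Euc d),
      IsNearMinimizer H l T f (z 0).1 η γ γ' → ∀ s ∈ Icc 0 T,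
      (∀ σ ∈ Icc (-s) 0, ‖γ σ - (z σ).1‖ ≤ ρ) → ∀ w : Phase d, ‖w‖ ≤ ρ →
      (Φ (-s) w).1 = γ (-s) - (z (-s)).1 → ∀ a ∈ Icc 0 ρ,
      f ((z 0).1 + w.1) + Real.exp (-(l * T)) * a * ‖(Φ (-s) w).1‖ ≤
        f (z 0).1 + boundaryTerm (z 0) w + 1 / 2 * (Real.exp (-(l * s)) *
          ⟪Q (-s) (Φ (-s) w).1 - (Φ (-s) w).2, (Φ (-s) w).1⟫) +
        τ * ‖w‖ ^ 2 + C * a ^ 2 * T + η := by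
  obtain ⟨C, hC, ρ₁, hρ₁, h_lower⟩ := hQ.exists_forall_le_action hH hl h.hasDerivAt hμ
  obtain ⟨ρ₂, hρ₂, h_upper⟩ := h.exists_forall_action_le hH hl hτ
  refine ⟨C, hC, min ρ₁ ρ₂, lt_min hρ₁ hρ₂,
    fun f η γ γ' hγ s hs h_close w hw h_meet a ha => ?_⟩
  obtain ⟨β, β', hβ, hβ_zero, hβ_start, hβ_action⟩ := h_upper w (hw.trans (min_le_right _ _)) s hs
  have h_near := hγ.le s hs β β' hβ (by rw [hβ_start, h_meet, add_sub_cancel])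
  have h_action := h_lower s hs γ γ' (hγ.admissible.mono hs)
    (fun σ hσ => (h_close σ hσ).trans (min_le_left _ _)) hγ.apply_zero a
    ⟨ha.1, ha.2.trans (min_le_left _ _)⟩
  rw [← h_meet] at h_action
  rw [hβ_zero] at h_near
  simp only [boundaryTerm, inner_sub_left] at *
  linear_combination h_near + h_action + hβ_action

theorem HasAlexandrovAt.exists_forall_le_apply_add {θ p : Euc d} {S : Euc d →L[ℝ] Euc d}
    (h : HasAlexandrovAt f p S θ) {τ : ℝ} (hτ : 0 < τ) : ∃ ρ > 0, ∀ k, ‖k‖ ≤ ρ →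
      f θ + ⟪p, k⟫ + 1 / 2 * ⟪S k, k⟫ - τ * ‖k‖ ^ 2 ≤ f (θ + k) := by
  obtain ⟨ρ, hρ, h_ball⟩ := Metric.eventually_nhds_iff_ball.1 (h.2.def hτ)
  refine ⟨ρ / 2, by positivity, fun k hk => ?_⟩
  have h_abs := h_ball (θ + k) (by rw [mem_ball, dist_self_add_left]; linarith)
  rw [add_sub_cancel_left, Real.norm_eq_abs, norm_pow, norm_norm] at h_abs
  linarith [(abs_le.1 h_abs).1]

theorem exists_eq_forall_le_of_continuousOn_Icc {g : ℝ → ℝ} {a b ω : ℝ}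
    (hg : ContinuousOn g (Icc a b)) (hb : g b ≤ ω) {t : ℝ} (ht : t ∈ Icc a b) (ht_le : ω ≤ g t) :
    ∃ σ ∈ Icc a b, g σ = ω ∧ ∀ s ∈ Icc σ b, g s ≤ ω := by
  have h_level : IsCompact (Icc t b ∩ g ⁻¹' {ω}) := isCompact_Icc.of_isClosed_subset
    ((hg.mono (Icc_subset_Icc_left ht.1)).preimage_isClosed_of_isClosed isClosed_Icc
      isClosed_singleton) inter_subset_left
  have h_ivt (s : ℝ) (hs : s ∈ Icc t b) (h_le : ω ≤ g s) : ∃ r ∈ Icc s b, g r = ω :=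
    intermediate_value_Icc' hs.2 (hg.mono (Icc_subset_Icc_left (ht.1.trans hs.1))) ⟨hb, h_le⟩
  obtain ⟨r, hr, hr_eq⟩ := h_ivt t (left_mem_Icc.2 ht.2) ht_le
  obtain ⟨σ, hσ, h_max⟩ := h_level.exists_isGreatest ⟨r, hr, hr_eq⟩
  refine ⟨σ, ⟨ht.1.trans hσ.1.1, hσ.1.2⟩, hσ.2, fun s hs => ?_⟩
  by_contra! h_lt
  obtain ⟨r, hr, hr_eq⟩ := h_ivt s ⟨hσ.1.1.trans hs.1, hs.2⟩ h_lt.le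
  have h_eq : r = s :=
    le_antisymm ((h_max ⟨⟨hσ.1.1.trans (hs.1.trans hr.1), hr.2⟩, hr_eq⟩).trans hs.1) hr.1
  exact h_lt.ne (h_eq ▸ hr_eq).symm

theorem exists_forall_norm_graphFst_inverse_le (h : LinearizedOrbit H l T z Φ)
    {A : Euc d →L[ℝ] Euc d} (h_inj : ∀ s ∈ Icc (-T) 0, ∀ v, graphFst Φ A s v = 0 → v = 0) :
    ∃ B > 0, ∀ s ∈ Icc (-T) 0, ‖Ring.inverse (graphFst Φ A s)‖ ≤ B := by
  have h_cont : ContinuousOn (fun s => Ring.inverse (graphFst Φ A s)) (Icc (-T) 0) := by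
    intro s hs
    obtain ⟨u, hu⟩ := isUnit_of_forall_apply_eq_zero (h_inj s hs)
    have h_inverse := NormedRing.inverse_continuousAt u
    rw [hu] at h_inverse
    have h_fst : ContinuousOn (graphFst Φ A) (Icc (-T) 0) :=
      continuousOn_const.clm_comp (h.continuousOn_lin.clm_comp continuousOn_const)
    exact h_inverse.comp_continuousWithinAt (h_fst s hs)
  obtain ⟨B, hB⟩ := isCompact_Icc.exists_bound_of_continuousOn h_cont
  exact ⟨max 1 B, by positivity, fun s hs => (hB s hs).trans (le_max_right _ _)⟩

theorem LinearizedOrbit.exists_riccatiSubsolution_inner_le (hH : ContDiff ℝ 2 H)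
    (h : LinearizedOrbit H l T z Φ) {A : Euc d →L[ℝ] Euc d} (hA : ∀ x y, ⟪A x, y⟫ = ⟪A y, x⟫)
    (h_inj : ∀ s ∈ Icc (-T) 0, ∀ v, graphFst Φ A s v = 0 → v = 0) {ν : ℝ} (hν : 0 < ν) :
    ∃ Q Q' : ℝ → Euc d →L[ℝ] Euc d, ∃ μ > 0, RiccatiSubsolution H l T z Q Q' μ ∧
      ∀ s ∈ Icc (-T) 0, ∀ k,
        ⟪Q s (graphFst Φ A s k) - graphSnd Φ A s k, graphFst Φ A s k⟫ ≤ ν * ‖k‖ ^ 2 := by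
  obtain ⟨R, hR, h_bound⟩ := h.exists_forall_norm_le
  obtain ⟨Q, Q', μ, hμ, hQ, h_le⟩ := RiccatiSubsolution.exists_pos_le hH h.nonneg h.continuousOn
    (riccatiSubsolution_graphSlope h_inj hH h hA)
    (ν := ν / (R * (1 + ‖A‖)) ^ 2) (by positivity)
  refine ⟨Q, Q', μ, hμ, hQ, fun s hs k => ?_⟩
  have h_graph := h_le s hs (graphFst Φ A s k)
  rw [graphSlope_graphFst h_inj hs] at h_graph
  have h_norm : ‖graphFst Φ A s k‖ ≤ R * (1 + ‖A‖) * ‖k‖ :=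
    calc ‖graphFst Φ A s k‖ ≤ ‖Φ s (k, A k)‖ := norm_fst_le _
      _ ≤ ‖Φ s‖ * ‖(k, A k)‖ := (Φ s).le_opNorm _
      _ ≤ R * ((1 + ‖A‖) * ‖k‖) := by
        gcongr
        exacts [(h_bound s hs).2, norm_prodMk_apply_le le_rfl k]
      _ = R * (1 + ‖A‖) * ‖k‖ := by ring
  rw [inner_sub_left, sub_le_iff_le_add']
  calc ⟪Q s (graphFst Φ A s k), graphFst Φ A s k⟫
      ≤ ⟪graphSnd Φ A s k, graphFst Φ A s k⟫ +
        ν / (R * (1 + ‖A‖)) ^ 2 * ‖graphFst Φ A s k‖ ^ 2 := h_graph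
    _ ≤ ⟪graphSnd Φ A s k, graphFst Φ A s k⟫ +
        ν / (R * (1 + ‖A‖)) ^ 2 * (R * (1 + ‖A‖) * ‖k‖) ^ 2 := by gcongr
    _ = ⟪graphSnd Φ A s k, graphFst Φ A s k⟫ + ν * ‖k‖ ^ 2 := by field_simp

theorem LinearizedOrbit.exists_forall_mul_norm_sub_le (hH : TonelliHam H) (hl : 0 ≤ l)
    (h : LinearizedOrbit H l T z Φ) {S A : Euc d →L[ℝ] Euc d}
    (hf : HasAlexandrovAt f (z 0).2 S (z 0).1) (hA : ∀ x y, ⟪A x, y⟫ = ⟪A y, x⟫) {c : ℝ}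
    (hc : 0 < c) (hAS : ∀ k, ⟪A k, k⟫ + c * ‖k‖ ^ 2 ≤ ⟪S k, k⟫)
    (h_inj : ∀ s ∈ Icc (-T) 0, ∀ v, graphFst Φ A s v = 0 → v = 0) :
    ∃ Q Q' : ℝ → Euc d →L[ℝ] Euc d, ∃ μ > 0, RiccatiSubsolution H l T z Q Q' μ ∧
      ∃ C ≥ 0, ∃ ρ > 0, ∀ η γ γ', IsNearMinimizer H l T f (z 0).1 η γ γ' → ∀ s ∈ Icc 0 T,
        (∀ σ ∈ Icc (-s) 0, ‖γ σ - (z σ).1‖ ≤ ρ) → ∀ a ∈ Icc 0 ρ,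
        Real.exp (-(l * T)) * a * ‖γ (-s) - (z (-s)).1‖ ≤ C * a ^ 2 * T + η := by
  obtain ⟨Q, Q', μ, hμ, hQ, hQ_le⟩ := h.exists_riccatiSubsolution_inner_le hH.smooth hA h_inj
    (ν := c / 3) (by positivity)
  obtain ⟨C, hC, ρ₁, hρ₁, h_compare⟩ := hQ.exists_forall_apply_add_le hH hl h hμ
    (τ := c / 6 / (1 + ‖A‖) ^ 2) (by positivity)
  obtain ⟨ρ₂, hρ₂, h_alex⟩ := hf.exists_forall_le_apply_add (τ := c / 6) (by positivity)
  obtain ⟨B, hB, h_inverse⟩ := exists_forall_norm_graphFst_inverse_le h h_inj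
  refine ⟨Q, Q', μ, hμ, hQ, C, hC, min ρ₁ (min ρ₁ ρ₂ / ((1 + ‖A‖) * B)), by positivity,
    fun η γ γ' hγ s hs h_close a ha => ?_⟩
  have h_neg : -s ∈ Icc (-T) 0 := ⟨neg_le_neg hs.2, neg_nonpos.2 hs.1⟩
  set y := γ (-s) - (z (-s)).1
  set k := Ring.inverse (graphFst Φ A (-s)) y
  have h_k : graphFst Φ A (-s) k = y := graphFst_inverse_apply h_inj h_neg y
  have h_norm_w : ‖(k, A k)‖ ≤ (1 + ‖A‖) * ‖k‖ := norm_prodMk_apply_le le_rfl k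
  have h_small : (1 + ‖A‖) * ‖k‖ ≤ min ρ₁ ρ₂ := by
    have h_y : ‖y‖ ≤ min ρ₁ ρ₂ / ((1 + ‖A‖) * B) :=
      (h_close (-s) ⟨le_rfl, neg_nonpos.2 hs.1⟩).trans (min_le_right _ _)
    rw [le_div_iff₀ (by positivity)] at h_y
    calc (1 + ‖A‖) * ‖k‖ ≤ (1 + ‖A‖) * (B * ‖y‖) := by
          gcongr
          exact ContinuousLinearMap.le_of_opNorm_le _ (h_inverse (-s) h_neg) y
      _ = ‖y‖ * ((1 + ‖A‖) * B) := by ring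
      _ ≤ min ρ₁ ρ₂ := h_y
  have h_lower := h_alex k (by nlinarith [min_le_right ρ₁ ρ₂, norm_nonneg A, norm_nonneg k])
  have h_upper := h_compare f η γ γ' hγ s hs
    (fun σ hσ => (h_close σ hσ).trans (min_le_left _ _)) (k, A k)
    (h_norm_w.trans (h_small.trans (min_le_left _ _))) h_k a ⟨ha.1, ha.2.trans (min_le_left _ _)⟩
  have h_error : c / 6 / (1 + ‖A‖) ^ 2 * ‖(k, A k)‖ ^ 2 ≤ c / 6 * ‖k‖ ^ 2 :=
    calc c / 6 / (1 + ‖A‖) ^ 2 * ‖(k, A k)‖ ^ 2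
        ≤ c / 6 / (1 + ‖A‖) ^ 2 * ((1 + ‖A‖) * ‖k‖) ^ 2 := by gcongr
      _ = c / 6 * ‖k‖ ^ 2 := by field_simp
  have h_riccati : Real.exp (-(l * s)) *
      ⟪Q (-s) (Φ (-s) (k, A k)).1 - (Φ (-s) (k, A k)).2, (Φ (-s) (k, A k)).1⟫ ≤ c / 3 * ‖k‖ ^ 2 :=
    calc _ ≤ Real.exp (-(l * s)) * (c / 3 * ‖k‖ ^ 2) :=
          mul_le_mul_of_nonneg_left (hQ_le (-s) h_neg k) (Real.exp_pos _).le
      _ ≤ c / 3 * ‖k‖ ^ 2 := mul_le_of_le_one_left (by positivity)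
          (Real.exp_le_one_iff.2 (neg_nonpos.2 (mul_nonneg hl hs.1)))
  have h_y : (Φ (-s) (k, A k)).1 = y := h_k
  rw [h_y] at h_upper h_riccati
  simp only [boundaryTerm] at h_upper
  linear_combination h_upper + h_lower + h_error + 1 / 2 * h_riccati + 1 / 2 * hAS k

/- The Hessian of `f` at the base point beats `A`, so a near-minimizer that leaves the tube of
radius `ω` around the orbit would contradict the second-order expansion of `f`. -/
theorem LinearizedOrbit.exists_forall_norm_sub_lt (hH : TonelliHam H) (hl : 0 ≤ l)
    (h : LinearizedOrbit H l T z Φ) {S A : Euc d →L[ℝ] Euc d}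
    (hf : HasAlexandrovAt f (z 0).2 S (z 0).1) (hA : ∀ x y, ⟪A x, y⟫ = ⟪A y, x⟫) {c : ℝ}
    (hc : 0 < c) (hAS : ∀ k, ⟪A k, k⟫ + c * ‖k‖ ^ 2 ≤ ⟪S k, k⟫)
    (h_inj : ∀ s ∈ Icc (-T) 0, ∀ v, graphFst Φ A s v = 0 → v = 0) :
    ∃ Q Q' : ℝ → Euc d →L[ℝ] Euc d, ∃ μ > 0, RiccatiSubsolution H l T z Q Q' μ ∧
      ∃ ω₀ > 0, ∀ ω, 0 < ω → ω ≤ ω₀ → ∃ η > 0, ∀ γ γ', IsNearMinimizer H l T f (z 0).1 η γ γ' →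
        ∀ σ ∈ Icc (-T) 0, ‖γ σ - (z σ).1‖ < ω := by
  obtain ⟨Q, Q', μ, hμ, hQ, C, hC, ρ, hρ, h_gain⟩ :=
    h.exists_forall_mul_norm_sub_le hH hl hf hA hc hAS h_inj
  have hT := h.nonneg
  refine ⟨Q, Q', μ, hμ, hQ, ρ, hρ, fun ω hω hω_le => ?_⟩
  set e := Real.exp (-(l * T))
  set a := min ρ (e * ω / (2 * (C * T + 1)))
  have ha : 0 < a := by
    have : 0 < e := Real.exp_pos _
    positivity
  have h_quad : C * a ^ 2 * T ≤ e * a * ω / 2 := by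
    have h_le : a ≤ e * ω / (2 * (C * T + 1)) := min_le_right _ _
    rw [le_div_iff₀ (by positivity)] at h_le
    nlinarith [mul_le_mul_of_nonneg_left h_le ha.le]
  refine ⟨e * a * ω / 4, by positivity, fun γ γ' hγ t ht => ?_⟩
  by_contra! h_far
  have hT_neg : -T ≤ 0 := neg_nonpos.2 hT
  have h_cont : ContinuousOn (fun σ => ‖γ σ - (z σ).1‖) (Icc (-T) 0) := by
    have h_γ := (hγ.admissible.1.absolutelyContinuousOnInterval hT_neg).continuousOn
    rw [uIcc_of_le hT_neg] at h_γ
    exact (h_γ.sub h.continuousOn.fst).norm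
  obtain ⟨σ, hσ, h_eq, h_le⟩ := exists_eq_forall_le_of_continuousOn_Icc h_cont
    (by simpa [hγ.apply_zero] using hω.le) ht h_far
  have h_leave := h_gain _ γ γ' hγ (-σ) ⟨neg_nonneg.2 hσ.2, neg_le.1 hσ.1⟩
    (fun s hs => (h_le s (by rwa [neg_neg] at hs)).trans hω_le) a ⟨ha.le, min_le_left _ _⟩
  rw [neg_neg, h_eq] at h_leave
  have h_pos : 0 < e * a * ω := by positivity
  linarith

theorem inner_apply_le_add_of_eventually {R S : Euc d →L[ℝ] Euc d} {ε : ℝ}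
    (h : ∀ᶠ k in nhds (0 : Euc d), ⟪R k, k⟫ ≤ ⟪S k, k⟫ + ε * ‖k‖ ^ 2) (v : Euc d) :
    ⟪R v, v⟫ ≤ ⟪S v, v⟫ + ε * ‖v‖ ^ 2 := by
  have h_lim : Tendsto (fun a : ℝ => a • v) (nhdsWithin 0 (Ioi 0)) (nhds 0) :=
    tendsto_nhdsWithin_of_tendsto_nhds
      ((continuous_id.smul continuous_const).tendsto' 0 0 (zero_smul ℝ v))
  obtain ⟨a, h_le, ha⟩ := ((h_lim.eventually h).and self_mem_nhdsWithin).exists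
  rw [map_smul, map_smul, real_inner_smul_left, real_inner_smul_right, real_inner_smul_left,
    real_inner_smul_right, norm_smul, mul_pow, Real.norm_eq_abs, sq_abs] at h_le
  exact le_of_mul_le_mul_left (by linarith) (pow_pos ha 2)

theorem inner_apply_le_of_eventually {R S : Euc d →L[ℝ] Euc d}
    (h : ∀ ε > 0, ∀ᶠ k in nhds (0 : Euc d), ⟪R k, k⟫ ≤ ⟪S k, k⟫ + ε * ‖k‖ ^ 2) (v : Euc d) :
    ⟪R v, v⟫ ≤ ⟪S v, v⟫ := by
  have h_lim : Tendsto (fun ε : ℝ => ⟪S v, v⟫ + ε * ‖v‖ ^ 2) (nhdsWithin 0 (Ioi 0))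
      (nhds ⟪S v, v⟫) :=
    tendsto_nhdsWithin_of_tendsto_nhds (Continuous.tendsto' (by fun_prop) _ _ (by simp))
  exact ge_of_tendsto h_lim (eventually_mem_nhdsWithin.mono fun ε hε =>
    inner_apply_le_add_of_eventually (h ε hε) v)

theorem exists_continuous_fst_apply_eq {M : Phase d →L[ℝ] Phase d} {Z : Euc d →L[ℝ] Euc d}
    (h_vert : ∀ w : Euc d, (M (0, w)).1 = 0 → w = 0) (hZ : ∀ v : Euc d, (M (v, Z v)).1 = 0)
    (k : Euc d) :
    ∃ w : Euc d → Phase d, Continuous w ∧ w 0 = (k, Z k) ∧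
      ∀ ζ, (w ζ).1 = k ∧ (M (w ζ)).1 = ζ := by
  set b := (ContinuousLinearMap.fst ℝ (Euc d) (Euc d)).comp
    (M.comp (ContinuousLinearMap.inr ℝ (Euc d) (Euc d)))
  have hb : IsUnit b := isUnit_of_forall_apply_eq_zero h_vert
  have h_inverse (ζ : Euc d) : b (Ring.inverse b ζ) = ζ :=
    congrArg (fun M : Euc d →L[ℝ] Euc d => M ζ) (Ring.mul_inverse_cancel b hb)
  refine ⟨fun ζ => (k, Z k) + (0, Ring.inverse b ζ), by fun_prop, by simp,
    fun ζ => ⟨by simp, ?_⟩⟩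
  rw [map_add, Prod.fst_add, hZ, zero_add]
  exact h_inverse ζ

/- Perturb the orbit in a direction `w ζ` close to `(k, Z k)`, chosen so that the perturbed orbit
meets the near-minimizer at time `-T`, where `ζ` is its deviation there; `ζ` tends to `0` with the
error of the near-minimizers. -/
theorem LinearizedOrbit.exists_forall_apply_add_le (hH : TonelliHam H) (hl : 0 ≤ l)
    (h : LinearizedOrbit H l T z Φ) {S A Z : Euc d →L[ℝ] Euc d}
    (hf : HasAlexandrovAt f (z 0).2 S (z 0).1) (hA : ∀ x y, ⟪A x, y⟫ = ⟪A y, x⟫) {c : ℝ}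
    (hc : 0 < c) (hAS : ∀ k, ⟪A k, k⟫ + c * ‖k‖ ^ 2 ≤ ⟪S k, k⟫)
    (h_inj : ∀ s ∈ Icc (-T) 0, ∀ v, graphFst Φ A s v = 0 → v = 0)
    (h_vert : ∀ w : Euc d, (Φ (-T) (0, w)).1 = 0 → w = 0)
    (hZ : ∀ v : Euc d, (Φ (-T) (v, Z v)).1 = 0) (h_near : HasNearMinimizers H l T f) {τ : ℝ}
    (hτ : 0 < τ) :
    ∃ ρ > 0, ∀ k : Euc d, ‖k‖ < ρ →
      f ((z 0).1 + k) ≤ f (z 0).1 + boundaryTerm (z 0) (k, Z k) + τ * ‖(k, Z k)‖ ^ 2 := by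
  obtain ⟨Q, Q', μ, hμ, hQ, ω₀, hω₀, h_tube⟩ :=
    h.exists_forall_norm_sub_lt hH hl hf hA hc hAS h_inj
  obtain ⟨C, -, ρ, hρ, h_compare⟩ := hQ.exists_forall_apply_add_le hH hl h hμ hτ
  have hT := h.nonneg
  refine ⟨ρ / (1 + ‖Z‖), by positivity, fun k hk => ?_⟩
  rw [lt_div_iff₀ (by positivity)] at hk
  obtain ⟨w, hw, h_zero, h_meet⟩ := exists_continuous_fst_apply_eq h_vert hZ k
  set G : Euc d × ℝ → ℝ := fun x => f (z 0).1 + boundaryTerm (z 0) (w x.1) +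
    1 / 2 * (Real.exp (-(l * T)) * ⟪Q (-T) x.1 - (Φ (-T) (w x.1)).2, x.1⟫) +
    τ * ‖w x.1‖ ^ 2 + x.2
  have hG : Continuous G := by
    simp only [G, boundaryTerm]
    fun_prop
  suffices h_closure : (0 : Euc d × ℝ) ∈ closure {x | f ((z 0).1 + k) ≤ G x} by
    have h_le := (isClosed_le continuous_const hG).closure_eq ▸ h_closure
    simpa [G, h_zero] using h_le
  have h_small : ∀ᶠ ζ in nhds (0 : Euc d), ‖w ζ‖ < ρ := by
    refine hw.norm.continuousAt.eventually_lt continuousAt_const ?_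
    rw [h_zero]
    exact (norm_prodMk_apply_le le_rfl k).trans_lt (by rwa [mul_comm])
  obtain ⟨r, hr, h_ball⟩ := Metric.eventually_nhds_iff_ball.1 h_small
  refine Metric.mem_closure_iff.2 fun ε hε => ?_
  set ω := min (min ω₀ ρ) (min r ε)
  obtain ⟨η, hη, h_close⟩ := h_tube ω (by positivity) ((min_le_left _ _).trans (min_le_left _ _))
  obtain ⟨γ, γ', hγ⟩ := h_near (z 0).1 (min η (ε / 2)) (by positivity)
  have h_lt := h_close γ γ' (hγ.of_le (min_le_left _ _))
  have h_end := h_lt (-T) ⟨le_rfl, neg_nonpos.2 hT⟩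
  set ζ := γ (-T) - (z (-T)).1
  have h_bound := h_compare f _ γ γ' hγ T ⟨hT, le_rfl⟩
    (fun σ hσ => (h_lt σ hσ).le.trans ((min_le_left _ _).trans (min_le_right _ _))) (w ζ)
    (h_ball ζ <| mem_ball_zero_iff.2 <|
      h_end.trans_le ((min_le_right _ _).trans (min_le_left _ _))).le (h_meet ζ).2 0 ⟨le_rfl, hρ.le⟩
  refine ⟨(ζ, min η (ε / 2)), ?_, ?_⟩
  · simpa [G, h_meet] using h_bound
  · rw [dist_zero_left, Prod.norm_def, max_lt_iff, Real.norm_of_nonneg (by positivity)]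
    exact ⟨h_end.trans_le ((min_le_right _ _).trans (min_le_right _ _)),
      (min_le_right _ _).trans_lt (half_lt_self hε)⟩

theorem LinearizedOrbit.inner_apply_le (hH : TonelliHam H) (hl : 0 ≤ l)
    (h : LinearizedOrbit H l T z Φ) {S A Z : Euc d →L[ℝ] Euc d}
    (hf : HasAlexandrovAt f (z 0).2 S (z 0).1) (hA : ∀ x y, ⟪A x, y⟫ = ⟪A y, x⟫) {c : ℝ}
    (hc : 0 < c) (hAS : ∀ k, ⟪A k, k⟫ + c * ‖k‖ ^ 2 ≤ ⟪S k, k⟫)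
    (h_inj : ∀ s ∈ Icc (-T) 0, ∀ v, graphFst Φ A s v = 0 → v = 0)
    (h_vert : ∀ w : Euc d, (Φ (-T) (0, w)).1 = 0 → w = 0)
    (hZ : ∀ v : Euc d, (Φ (-T) (v, Z v)).1 = 0) (h_near : HasNearMinimizers H l T f)
    (v : Euc d) : ⟪S v, v⟫ ≤ ⟪Z v, v⟫ := by
  refine inner_apply_le_of_eventually (fun ε hε => ?_) v
  obtain ⟨ρ₁, hρ₁, h_lower⟩ := hf.exists_forall_le_apply_add (τ := ε / 4) (by positivity)
  obtain ⟨ρ₂, hρ₂, h_upper⟩ := h.exists_forall_apply_add_le hH hl hf hA hc hAS h_inj h_vert hZ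
    h_near (τ := ε / 4 / (1 + ‖Z‖) ^ 2) (by positivity)
  filter_upwards [ball_mem_nhds 0 hρ₁, ball_mem_nhds 0 hρ₂] with k hk₁ hk₂
  rw [mem_ball_zero_iff] at hk₁ hk₂
  have h_error : ε / 4 / (1 + ‖Z‖) ^ 2 * ‖(k, Z k)‖ ^ 2 ≤ ε / 4 * ‖k‖ ^ 2 :=
    calc ε / 4 / (1 + ‖Z‖) ^ 2 * ‖(k, Z k)‖ ^ 2
        ≤ ε / 4 / (1 + ‖Z‖) ^ 2 * ((1 + ‖Z‖) * ‖k‖) ^ 2 := by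
          gcongr
          exact norm_prodMk_apply_le le_rfl k
      _ = ε / 4 * ‖k‖ ^ 2 := by field_simp
  have h_sandwich := (h_lower k hk₁.le).trans (h_upper k hk₂)
  simp only [boundaryTerm] at h_sandwich
  linarith

end NearMinimizers

/-! ### Value functions have near-minimizers -/

section ValueFunctions

variable {d : ℕ} {H : Phase d → ℝ} {l T : ℝ}

theorem piecewise_Iic_apply_of_le {E : Type*} {a s : ℝ} {F G : ℝ → E} (h_eq : F a = G a)
    (hs : a ≤ s) : (Iic a).piecewise F G s = G s := by
  rcases hs.eq_or_lt with rfl | hs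
  · rw [piecewise_eq_of_mem _ _ _ self_mem_Iic, h_eq]
  · exact piecewise_eq_of_notMem _ _ _ (notMem_Iic.2 hs)

theorem integrableOn_and_setIntegral_piecewise_Iic {E : Type*} [NormedAddCommGroup E]
    [NormedSpace ℝ E] {F G : ℝ → E} {I : Set ℝ} {a b : ℝ} (hab : a ≤ b)
    (h_inter : I ∩ Ioi a = Ioc a b) (hF : IntegrableOn F I)
    (hG : IntervalIntegrable G volume a b) :
    IntegrableOn ((Iic a).piecewise F G) I ∧
      ∫ s in I, (Iic a).piecewise F G s =
        (∫ s in I, F s) - (∫ s in a..b, F s) + ∫ s in a..b, G s := by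
  have h_restrict : (volume.restrict I).restrict (Iic a)ᶜ = volume.restrict (Ioc a b) := by
    rw [Measure.restrict_restrict measurableSet_Iic.compl, compl_Iic, inter_comm, h_inter]
  have hG' : IntegrableOn G (Iic a)ᶜ (volume.restrict I) := by
    rw [IntegrableOn, h_restrict]
    exact (intervalIntegrable_iff_integrableOn_Ioc_of_le hab).1 hG
  have hF' : IntegrableOn F (Iic a) (volume.restrict I) := hF.integrableOn
  refine ⟨Integrable.piecewise measurableSet_Iic hF' hG', ?_⟩
  rw [integral_piecewise measurableSet_Iic hF' hG',
    ← integral_add_compl (measurableSet_Iic (a := a)) hF, h_restrict,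
    intervalIntegral.integral_of_le hab, intervalIntegral.integral_of_le hab, add_sub_cancel_right]

theorem ACOn.piecewise {γ γ' β β' : ℝ → Euc d} {a m b : ℝ} (hγ : ACOn γ γ' a m)
    (hβ : ACOn β β' m b) (ham : a ≤ m) (hmb : m ≤ b) (h_eq : γ m = β m) :
    ACOn ((Iic m).piecewise γ β) ((Iic m).piecewise γ' β') a b := by
  have h_left {t : ℝ} (hat : a ≤ t) (htm : t ≤ m) :
      EqOn γ' ((Iic m).piecewise γ' β') (uIoc a t) := by
    rw [uIoc_of_le hat]
    exact fun s hs => (piecewise_eq_of_mem _ _ _ (mem_Iic.2 (hs.2.trans htm))).symm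
  have h_right {t : ℝ} (hmt : m ≤ t) : EqOn β' ((Iic m).piecewise γ' β') (uIoc m t) := by
    rw [uIoc_of_le hmt]
    exact fun s hs => (piecewise_eq_of_notMem _ _ _ (notMem_Iic.2 hs.1)).symm
  have h_integral {f g : ℝ → Euc d} {p q : ℝ} (h : EqOn f g (uIoc p q)) :
      ∫ s in p..q, f s = ∫ s in p..q, g s :=
    intervalIntegral.integral_congr_ae (Eventually.of_forall fun s hs => h hs)
  have h_int {t : ℝ} (hmt : m ≤ t) (htb : t ≤ b) :=
    (intervalIntegrable_of_subset_Icc hβ.1 (left_mem_Icc.2 hmb) ⟨hmt, htb⟩).congr (h_right hmt)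
  refine ⟨(hγ.1.congr (h_left ham le_rfl)).trans (h_int hmb le_rfl), fun t ht => ?_⟩
  rw [piecewise_eq_of_mem _ _ _ (mem_Iic.2 ham)]
  rcases le_total t m with htm | hmt
  · rw [piecewise_eq_of_mem _ _ _ (mem_Iic.2 htm), hγ.2 t ⟨ht.1, htm⟩,
      h_integral (h_left ht.1 htm)]
  · rw [piecewise_Iic_apply_of_le h_eq hmt, hβ.2 t ⟨hmt, ht.2⟩, ← h_eq, hγ.2 m ⟨ham, le_rfl⟩,
      h_integral (h_left ham le_rfl),
      h_integral (h_right hmt), add_assoc,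
      intervalIntegral.integral_add_adjacent_intervals (hγ.1.congr (h_left ham le_rfl))
        (h_int hmt ht.2)]

theorem norm_le_sqrt_of_forall_abs_le_one {x : Euc d} (h : ∀ i, |x i| ≤ 1) : ‖x‖ ≤ √d := by
  rw [EuclideanSpace.norm_eq]
  refine Real.sqrt_le_sqrt ?_
  calc ∑ i, ‖x i‖ ^ 2 ≤ ∑ _i : Fin d, (1 : ℝ) :=
        Finset.sum_le_sum fun i _ => pow_le_one₀ (norm_nonneg _) (h i)
    _ = d := by simp

theorem fundCube_subset_closedBall : fundCube d ⊆ closedBall 0 √d := fun _ hx =>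
  mem_closedBall_zero_iff.2 <| norm_le_sqrt_of_forall_abs_le_one fun i => by
    rw [abs_of_nonneg (hx i).1]
    exact (hx i).2.le

theorem exists_add_intVec_mem_fundCube (q : Euc d) : ∃ k : Fin d → ℤ, q + intVec k ∈ fundCube d :=
  ⟨fun i => -⌊q i⌋, fun i => by
    have h_fract : (q + intVec fun i => -⌊q i⌋ : Euc d) i = Int.fract (q i) := by
      simp [intVec, Int.fract, sub_eq_add_neg]
    rw [h_fract]
    exact ⟨Int.fract_nonneg _, Int.fract_lt_one _⟩⟩

theorem PerFun.exists_forall_le {U : Euc d → ℝ} (hU : PerFun U) (h_cont : Continuous U) :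
    ∃ B, ∀ q, B ≤ U q := by
  obtain ⟨B, hB⟩ :=
    (isCompact_closedBall (0 : Euc d) √d).bddBelow_image h_cont.continuousOn
  refine ⟨B, fun q => ?_⟩
  obtain ⟨k, hk⟩ := exists_add_intVec_mem_fundCube q
  exact hU k q ▸ hB ⟨_, fundCube_subset_closedBall hk, rfl⟩

theorem TonelliHam.exists_forall_mul_norm_sub_le_legendreL (hH : TonelliHam H) {A : ℝ}
    (hA : 0 ≤ A) : ∃ C, ∀ q v, A * ‖v‖ - C ≤ LegendreL H (q, v) := by
  obtain ⟨C, hC⟩ := ((isCompact_closedBall (0 : Euc d) √d).prod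
    (isCompact_closedBall (0 : Euc d) A)).bddAbove_image hH.smooth.continuous.continuousOn
  refine ⟨C, fun q v => ?_⟩
  obtain ⟨p, hp, hp_inner⟩ := exists_norm_le_inner_eq hA v
  obtain ⟨k, hk⟩ := exists_add_intVec_mem_fundCube q
  have h_bound : H (q, p) ≤ C := hH.periodic k q p ▸ hC (mem_image_of_mem H
    (mk_mem_prod (fundCube_subset_closedBall hk) (mem_closedBall_zero_iff.2 hp)))
  linarith [hH.inner_sub_le_legendreL q v p]

theorem ACOn.const (q : Euc d) (a b : ℝ) : ACOn (fun _ => q) (fun _ => 0) a b :=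
  ⟨intervalIntegrable_const, fun t _ => by simp⟩

theorem ACOn.intervalIntegrable_and_integral_inner {γ γ' : ℝ → Euc d} {a b : ℝ}
    (h : ACOn γ γ' a b) (hab : a ≤ b) (c : Euc d) :
    IntervalIntegrable (fun s => ⟪c, γ' s⟫) volume a b ∧
      ∫ s in a..b, ⟪c, γ' s⟫ = ⟪c, γ b⟫ - ⟪c, γ a⟫ := by
  have h_comp := (innerSL ℝ c).intervalIntegral_comp_comm h.1
  simp only [innerSL_apply_apply] at h_comp
  refine ⟨⟨(innerSL ℝ c).integrable_comp h.1.1, (innerSL ℝ c).integrable_comp h.1.2⟩, ?_⟩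
  rw [h_comp, ← h.sub_eq_integral ⟨le_rfl, hab⟩ ⟨hab, le_rfl⟩, inner_sub_right]

theorem hasNearMinimizers_of_isGLB {f : Euc d → ℝ} {V : Euc d → Set ℝ}
    (h_glb : ∀ q, IsGLB (V q) (f q))
    (h_branch : ∀ q, ∀ r ∈ V q, ∃ γ γ', Admissible H l γ γ' (-T) ∧ γ 0 = q ∧
      ∀ s ∈ Icc 0 T, ∀ β β', Admissible H l β β' (-s) → β (-s) = γ (-s) →
        r - action H l γ γ' s + action H l β β' s ∈ V (β 0)) :
    HasNearMinimizers H l T f := by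
  intro θ η hη
  obtain ⟨r, hr, -, hr_lt⟩ := (h_glb θ).exists_between (lt_add_of_pos_right (f θ) hη)
  obtain ⟨γ, γ', hγ, hγ_zero, h_mem⟩ := h_branch θ r hr
  refine ⟨γ, γ', hγ, hγ_zero, fun s hs β β' hβ h_start => ?_⟩
  linarith [(h_glb (β 0)).1 (h_mem s hs β β' hβ h_start)]

theorem HasNearMinimizers.mono {f : Euc d → ℝ} {T' : ℝ} (h : HasNearMinimizers H l T' f)
    (hT : 0 ≤ T) (hTT' : T ≤ T') : HasNearMinimizers H l T f := fun θ η hη => by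
  obtain ⟨γ, γ', hγ⟩ := h θ η hη
  exact ⟨γ, γ', hγ.admissible.mono ⟨hT, hTT'⟩, hγ.apply_zero,
    fun s hs => hγ.le s ⟨hs.1, hs.2.trans hTT'⟩⟩

/-- The integrand of the Lax–Oleinik semigroup for the class `c`, without discount. -/
def twistedLagrangian (H : Phase d → ℝ) (c : Euc d) (α : ℝ) (γ γ' : ℝ → Euc d) (s : ℝ) : ℝ :=
  Real.exp (0 * s) * (LegendreL H (γ s, γ' s) - ⟪c, γ' s⟫ + α)

theorem ACOn.admissible_of_twistedLagrangian {γ γ' : ℝ → Euc d} {a : ℝ} (h : ACOn γ γ' a 0)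
    (ha : a ≤ 0) {c : Euc d} {α : ℝ}
    (h_int : IntervalIntegrable (twistedLagrangian H c α γ γ') volume a 0) :
    Admissible H 0 γ γ' a := by
  refine ⟨h, ((h_int.add (h.intervalIntegrable_and_integral_inner ha c).1).sub
    (intervalIntegrable_const (c := α))).congr fun s _ => ?_⟩
  simp only [twistedLagrangian, zero_mul, Real.exp_zero, one_mul]
  ring

theorem Admissible.intervalIntegrable_and_integral_twistedLagrangian {γ γ' : ℝ → Euc d} {s : ℝ}
    (h : Admissible H 0 γ γ' (-s)) (hs : 0 ≤ s) (c : Euc d) (α : ℝ) :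
    IntervalIntegrable (twistedLagrangian H c α γ γ') volume (-s) 0 ∧
      ∫ σ in (-s)..0, twistedLagrangian H c α γ γ' σ =
        action H 0 γ γ' s - (⟪c, γ 0⟫ - ⟪c, γ (-s)⟫) + s * α := by
  obtain ⟨h_ac, h_int⟩ := h
  obtain ⟨h_inner, h_inner_eq⟩ := h_ac.intervalIntegrable_and_integral_inner (neg_nonpos.2 hs) c
  have h_eq : twistedLagrangian H c α γ γ' =
      fun s => LegendreL H (γ s, γ' s) - ⟪c, γ' s⟫ + α := by
    funext s
    rw [twistedLagrangian, zero_mul, Real.exp_zero, one_mul]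
  simp only [h_eq, action, zero_mul, Real.exp_zero, one_mul] at h_int ⊢
  refine ⟨(h_int.sub h_inner).add intervalIntegrable_const, ?_⟩
  rw [intervalIntegral.integral_add (h_int.sub h_inner) intervalIntegrable_const,
    intervalIntegral.integral_sub h_int h_inner, h_inner_eq, intervalIntegral.integral_const,
    zero_sub, neg_neg, smul_eq_mul]

theorem TonelliHam.isGLB_laxOleinik (hH : TonelliHam H) {U : Euc d → ℝ} (hU : Continuous U)
    (hU_per : PerFun U) {t : ℝ} (ht : 0 ≤ t) (c : Euc d) (α : ℝ) (q : Euc d) :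
    IsGLB (LOvals (LegendreL H) c α 0 U t q) (LaxOleinik (LegendreL H) c α 0 U t q) := by
  refine isGLB_csInf ⟨_, fun _ => q, fun _ => 0, ACOn.const q _ _, rfl, by simp, rfl⟩ ?_
  obtain ⟨B, hB⟩ := hU_per.exists_forall_le hU
  obtain ⟨C, hC⟩ := hH.exists_forall_mul_norm_sub_le_legendreL (norm_nonneg c)
  refine ⟨B + ∫ _s in (-t)..0, (-C + α), ?_⟩
  rintro r ⟨γ, γ', -, -, h_int, rfl⟩
  rw [zero_mul, neg_zero, Real.exp_zero, one_mul]
  refine add_le_add (hB _) (intervalIntegral.integral_mono_on (neg_nonpos.2 ht)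
    intervalIntegrable_const h_int fun s _ => ?_)
  rw [zero_mul, Real.exp_zero, one_mul]
  linarith [hC (γ s) (γ' s), real_inner_le_norm c (γ' s)]

theorem twistedLagrangian_piecewise_mem_LOvals {U : Euc d → ℝ} {c : Euc d} {α s t : ℝ}
    {γ γ' β β' : ℝ → Euc d} (hs : s ∈ Icc 0 t) (hγ : ACOn γ γ' (-t) 0)
    (h_int : IntervalIntegrable (twistedLagrangian H c α γ γ') volume (-t) 0)
    (hβ : Admissible H 0 β β' (-s)) (h_start : β (-s) = γ (-s)) :
    U (γ (-t)) + ((∫ σ in (-t)..0, twistedLagrangian H c α γ γ' σ) -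
      (∫ σ in (-s)..0, twistedLagrangian H c α γ γ' σ) +
      ∫ σ in (-s)..0, twistedLagrangian H c α β β' σ) ∈
        LOvals (LegendreL H) c α 0 U t (β 0) := by
  have hs_neg : -s ≤ 0 := neg_nonpos.2 hs.1
  have hts : -t ≤ -s := neg_le_neg hs.2
  have h_inter : Ioc (-t) 0 ∩ Ioi (-s) = Ioc (-s) 0 := by rw [Ioc_inter_Ioi, max_eq_right hts]
  obtain ⟨h_glue, h_glue_eq⟩ := integrableOn_and_setIntegral_piecewise_Iic hs_neg h_inter
    ((intervalIntegrable_iff_integrableOn_Ioc_of_le (hts.trans hs_neg)).1 h_int)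
    (hβ.intervalIntegrable_and_integral_twistedLagrangian hs.1 c α).1
  have h_eq : (Iic (-s)).piecewise (twistedLagrangian H c α γ γ') (twistedLagrangian H c α β β') =
      twistedLagrangian H c α ((Iic (-s)).piecewise γ β) ((Iic (-s)).piecewise γ' β') := by
    funext σ
    by_cases hσ : σ ∈ Iic (-s) <;> simp [twistedLagrangian, hσ]
  rw [h_eq] at h_glue h_glue_eq
  rw [← intervalIntegral.integral_of_le (hts.trans hs_neg),
    ← intervalIntegral.integral_of_le (hts.trans hs_neg)] at h_glue_eq
  refine ⟨_, _, (hγ.mono le_rfl hts hs_neg).piecewise hβ.1 hts hs_neg h_start.symm,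
    piecewise_Iic_apply_of_le h_start.symm hs_neg,
    (intervalIntegrable_iff_integrableOn_Ioc_of_le (hts.trans hs_neg)).2 h_glue, ?_⟩
  rw [← h_glue_eq, piecewise_eq_of_mem _ _ _ (mem_Iic.2 hts), zero_mul, neg_zero, Real.exp_zero,
    one_mul]
  rfl

theorem TonelliHam.hasNearMinimizers_laxOleinik (hH : TonelliHam H) {U : Euc d → ℝ}
    (hU : Continuous U) (hU_per : PerFun U) {t : ℝ} (hT : 0 ≤ T) (hTt : T ≤ t) (c : Euc d)
    (α : ℝ) :
    HasNearMinimizers H 0 T (fun q => LaxOleinik (LegendreL H) c α 0 U t q + ⟪c, q⟫) := by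
  have ht : 0 ≤ t := hT.trans hTt
  refine hasNearMinimizers_of_isGLB (V := fun q => (OrderIso.addRight ⟪c, q⟫) ''
    LOvals (LegendreL H) c α 0 U t q)
    (fun q => (OrderIso.isGLB_image' _).2 (hH.isGLB_laxOleinik hU hU_per ht c α q)) ?_
  rintro q - ⟨r, ⟨γ, γ', h_ac, h_zero, h_int, h_value⟩, rfl⟩
  have hγ : Admissible H 0 γ γ' (-t) :=
    h_ac.admissible_of_twistedLagrangian (neg_nonpos.2 ht) h_int
  refine ⟨γ, γ', hγ.mono ⟨hT, hTt⟩, h_zero, fun s hs β β' hβ h_start => ?_⟩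
  have hst : s ∈ Icc 0 t := ⟨hs.1, hs.2.trans hTt⟩
  refine ⟨_, twistedLagrangian_piecewise_mem_LOvals hst h_ac h_int hβ h_start, ?_⟩
  have h_value' : r = U (γ (-t)) + ∫ σ in (-t)..0, twistedLagrangian H c α γ γ' σ := by
    rw [h_value, zero_mul, neg_zero, Real.exp_zero, one_mul]
    rfl
  rw [((hγ.mono hst).intervalIntegrable_and_integral_twistedLagrangian hs.1 c α).2,
    (hβ.intervalIntegrable_and_integral_twistedLagrangian hs.1 c α).2, h_value', h_start, h_zero]
  simp only [OrderIso.addRight_apply]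
  ring

theorem IsFixedPtModified.hasNearMinimizers {c : Euc d} {u : Euc d → ℝ}
    (h : IsFixedPtModified H c u) (hH : TonelliHam H) (hT : 0 < T) :
    HasNearMinimizers H 0 T (fun q => u q + ⟪c, q⟫) := by
  simpa only [h.2.2 T hT] using
    hH.hasNearMinimizers_laxOleinik h.1 h.2.1 hT.le le_rfl c (maneCriticalOf H c)

/-- The discounted integrand over half-infinite curves, with `L` normalized by `α`. -/
def discountedLagrangian (H : Phase d → ℝ) (l α : ℝ) (γ γ' : ℝ → Euc d) (s : ℝ) : ℝ :=
  Real.exp (l * s) * (LegendreL H (γ s, γ' s) + α)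

/-- The values whose infimum over half-infinite curves ending at `q` is the discounted solution. -/
def discountedVals (H : Phase d → ℝ) (l α : ℝ) (q : Euc d) : Set ℝ :=
  {r | ∃ γ γ' : ℝ → Euc d, (∀ a ≤ (0 : ℝ), ACOn γ γ' a 0) ∧ γ 0 = q ∧
    IntegrableOn (discountedLagrangian H l α γ γ') (Iic 0) volume ∧
    r = ∫ s in Iic (0 : ℝ), discountedLagrangian H l α γ γ' s}

theorem TonelliHam.isGLB_discountedVals (hH : TonelliHam H) (hl : 0 < l) (α : ℝ) (q : Euc d) :
    IsGLB (discountedVals H l α q) (sInf (discountedVals H l α q)) := by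
  have h_exp : IntegrableOn (fun s => Real.exp (l * s)) (Iic 0) volume :=
    integrableOn_exp_mul_Iic hl 0
  refine isGLB_csInf ⟨_, fun _ => q, fun _ => 0, fun a _ => ACOn.const q _ _, rfl,
    h_exp.mul_const _, rfl⟩ ?_
  obtain ⟨C, hC⟩ := hH.exists_forall_mul_norm_sub_le_legendreL le_rfl
  refine ⟨∫ s in Iic (0 : ℝ), Real.exp (l * s) * (-C + α), ?_⟩
  rintro r ⟨γ, γ', -, -, h_int, rfl⟩
  refine integral_mono (h_exp.mul_const _) h_int fun s => ?_
  refine mul_le_mul_of_nonneg_left ?_ (Real.exp_pos (l * s)).le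
  linarith [hC (γ s) (γ' s)]

theorem intervalIntegrable_discountedLagrangian_iff {γ γ' : ℝ → Euc d} {α a b : ℝ} :
    IntervalIntegrable (discountedLagrangian H l α γ γ') volume a b ↔
      IntervalIntegrable (fun s => Real.exp (l * s) * LegendreL H (γ s, γ' s)) volume a b := by
  have h_const : IntervalIntegrable (fun s => Real.exp (l * s) * α) volume a b :=
    Continuous.intervalIntegrable (by fun_prop) _ _
  have h_eq : discountedLagrangian H l α γ γ' = fun s =>
      Real.exp (l * s) * LegendreL H (γ s, γ' s) + Real.exp (l * s) * α :=
    funext fun s => mul_add _ _ _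
  rw [h_eq]
  exact ⟨fun h => (h.sub h_const).congr fun s _ => by simp, fun h => h.add h_const⟩

theorem Admissible.integral_discountedLagrangian {γ γ' : ℝ → Euc d} {s : ℝ}
    (h : Admissible H l γ γ' (-s)) (α : ℝ) :
    ∫ σ in (-s)..0, discountedLagrangian H l α γ γ' σ =
      action H l γ γ' s + ∫ σ in (-s)..0, Real.exp (l * σ) * α := by
  simp only [discountedLagrangian, mul_add]
  exact intervalIntegral.integral_add h.2 (Continuous.intervalIntegrable (by fun_prop) _ _)

theorem discountedLagrangian_piecewise_mem_discountedVals {α s : ℝ} {γ γ' β β' : ℝ → Euc d}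
    (hs : 0 ≤ s) (hγ : ∀ a ≤ (0 : ℝ), ACOn γ γ' a 0)
    (h_int : IntegrableOn (discountedLagrangian H l α γ γ') (Iic 0))
    (hβ : Admissible H l β β' (-s)) (h_start : β (-s) = γ (-s)) :
    (∫ σ in Iic (0 : ℝ), discountedLagrangian H l α γ γ' σ) -
      (∫ σ in (-s)..0, discountedLagrangian H l α γ γ' σ) +
      ∫ σ in (-s)..0, discountedLagrangian H l α β β' σ ∈ discountedVals H l α (β 0) := by
  have hs_neg : -s ≤ 0 := neg_nonpos.2 hs
  obtain ⟨h_glue, h_glue_eq⟩ := integrableOn_and_setIntegral_piecewise_Iic hs_neg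
    Iic_inter_Ioi h_int (intervalIntegrable_discountedLagrangian_iff.2 hβ.2)
  have h_eq : (Iic (-s)).piecewise (discountedLagrangian H l α γ γ')
      (discountedLagrangian H l α β β') =
      discountedLagrangian H l α ((Iic (-s)).piecewise γ β) ((Iic (-s)).piecewise γ' β') := by
    funext σ
    by_cases hσ : σ ∈ Iic (-s) <;> simp [discountedLagrangian, hσ]
  rw [h_eq] at h_glue h_glue_eq
  refine ⟨_, _, fun a ha => ?_, piecewise_Iic_apply_of_le h_start.symm hs_neg, h_glue,
    h_glue_eq.symm⟩
  have h_min : min a (-s) ≤ -s := min_le_right _ _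
  exact (((hγ _ (h_min.trans hs_neg)).mono le_rfl h_min hs_neg).piecewise hβ.1 h_min hs_neg
    h_start.symm).mono (min_le_left _ _) ha le_rfl

theorem IsDiscountedSol.hasNearMinimizers {u : Euc d → ℝ} (h : IsDiscountedSol H l u)
    (hH : TonelliHam H) (hl : 0 < l) (hT : 0 ≤ T) : HasNearMinimizers H l T u := by
  refine hasNearMinimizers_of_isGLB (V := discountedVals H l (maneCritical H))
    (fun q => h.2.2 q ▸ hH.isGLB_discountedVals hl (maneCritical H) q) ?_
  rintro q r ⟨γ, γ', h_ac, h_zero, h_int, rfl⟩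
  have hγ {s : ℝ} (hs : 0 ≤ s) : Admissible H l γ γ' (-s) :=
    ⟨h_ac _ (neg_nonpos.2 hs), intervalIntegrable_discountedLagrangian_iff.1
      ((intervalIntegrable_iff_integrableOn_Ioc_of_le (neg_nonpos.2 hs)).2
        (h_int.mono_set Ioc_subset_Iic_self))⟩
  refine ⟨γ, γ', hγ hT, h_zero, fun s hs β β' hβ h_start => ?_⟩
  have h_mem := discountedLagrangian_piecewise_mem_discountedVals hs.1 h_ac h_int hβ h_start
  rw [(hγ hs.1).integral_discountedLagrangian, hβ.integral_discountedLagrangian] at h_mem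
  convert h_mem using 1
  ring

end ValueFunctions

/-! ### Smooth dependence of orbits on initial data -/

section Flow

variable {E : Type*} [NormedAddCommGroup E] [NormedSpace ℝ E] {T : ℝ}

theorem norm_sub_le_of_hasDerivAt_comp {A A₀ Φ Φ₀ : ℝ → E →L[ℝ] E} {C R κ : ℝ} (hκ : 0 ≤ κ)
    (hΦ : ∀ s ∈ Icc (-T) 0, HasDerivAt Φ ((A s).comp (Φ s)) s)
    (hΦ₀ : ∀ s ∈ Icc (-T) 0, HasDerivAt Φ₀ ((A₀ s).comp (Φ₀ s)) s) (h_init : Φ 0 = Φ₀ 0)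
    (hC : ∀ s ∈ Icc (-T) 0, ‖A s‖ ≤ C) (h_sub : ∀ s ∈ Icc (-T) 0, ‖A s - A₀ s‖ ≤ κ)
    (hR : ∀ s ∈ Icc (-T) 0, ‖Φ₀ s‖ ≤ R) {s : ℝ} (hs : s ∈ Icc (-T) 0) :
    ‖Φ s - Φ₀ s‖ ≤ κ * R * Real.exp ((C + 1) * T) := by
  have hC₀ : 0 ≤ C := (norm_nonneg _).trans (hC s hs)
  have hR₀ : 0 ≤ R := (norm_nonneg _).trans (hR s hs)
  have h_gronwall := norm_le_mul_exp_of_norm_deriv_le (δ := 0) (ε := κ * R) hC₀ (by positivity)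
    (fun s hs => (hΦ s hs).fun_sub (hΦ₀ s hs)) (by simp [h_init]) (fun s hs => ?_) hs
  · rwa [zero_add] at h_gronwall
  have h_eq : (A s).comp (Φ s) - (A₀ s).comp (Φ₀ s) =
      (A s).comp (Φ s - Φ₀ s) + (A s - A₀ s).comp (Φ₀ s) := by
    rw [ContinuousLinearMap.comp_sub, ContinuousLinearMap.sub_comp, sub_add_sub_cancel]
  rw [h_eq]
  refine (norm_add_le _ _).trans (add_le_add ?_ ?_)
  · exact (ContinuousLinearMap.opNorm_comp_le _ _).trans (by gcongr; exact hC s hs)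
  · refine (ContinuousLinearMap.opNorm_comp_le _ _).trans ?_
    gcongr
    exacts [h_sub s hs, hR s hs]

variable [FiniteDimensional ℝ E] {X : E → E} {φ : ℝ → E → E}

theorem exists_forall_norm_flow_sub_le (hX : ContDiff ℝ 1 X) (h_zero : ∀ x, φ 0 x = x)
    (h_flow : ∀ x t, HasDerivAt (fun τ => φ τ x) (X (φ t x)) t) (hT : 0 ≤ T) (x₀ : E) :
    ∃ M > 0, ∃ r > 0, ∀ x, ‖x - x₀‖ ≤ r →
      ∀ s ∈ Icc (-T) 0, ‖φ s x - φ s x₀‖ ≤ M * ‖x - x₀‖ := by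
  obtain ⟨M, hM, r, hr, h⟩ := exists_hasDerivAt_norm_sub_le_of_contDiff hX hT
    (z₀ := fun s => φ s x₀) fun s _ => h_flow x₀ s
  simp only [h_zero] at h
  refine ⟨M, hM, r, hr, fun x hx s hs => ?_⟩
  obtain ⟨z, hz_zero, hz⟩ := h x hx
  have h_eq : φ s x = z s := eqOn_of_hasDerivAt_contDiff hX (fun s _ => h_flow x s)
    (fun s hs => (hz s hs).1) ((h_zero x).trans hz_zero.symm) hs
  rw [h_eq]
  exact (hz s hs).2

theorem hasFDerivAt_flow (hX : ContDiff ℝ 1 X) (h_zero : ∀ x, φ 0 x = x)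
    (h_flow : ∀ x t, HasDerivAt (fun τ => φ τ x) (X (φ t x)) t) {x₀ : E} {Φ : ℝ → E →L[ℝ] E}
    (hΦ_zero : Φ 0 = ContinuousLinearMap.id ℝ E)
    (hΦ : ∀ s ∈ Icc (-T) 0, HasDerivAt Φ ((fderiv ℝ X (φ s x₀)).comp (Φ s)) s) {s : ℝ}
    (hs : s ∈ Icc (-T) 0) : HasFDerivAt (φ s) (Φ s) x₀ := by
  have h_cont : ContinuousOn (fun s => φ s x₀) (Icc (-T) 0) :=
    HasDerivAt.continuousOn fun s _ => h_flow x₀ s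
  obtain ⟨M, hM, r, hr, h_lip⟩ :=
    exists_forall_norm_flow_sub_le hX h_zero h_flow (neg_nonpos.1 (hs.1.trans hs.2)) x₀
  obtain ⟨R, hR⟩ := isCompact_Icc.exists_bound_of_continuousOn h_cont
  obtain ⟨C, hC⟩ := isCompact_Icc.exists_bound_of_continuousOn
    ((hX.continuous_fderiv one_ne_zero).comp_continuousOn h_cont)
  rw [hasFDerivAt_iff_isLittleO_nhds_zero]
  refine isLittleO_iff.2 fun c hc => ?_
  obtain ⟨ρ, hρ, -, h_taylor⟩ := exists_forall_closedBall_norm_sub_fderiv_le hX R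
    (τ := c / (M * Real.exp ((C + 1) * T))) (by positivity)
  filter_upwards [ball_mem_nhds (0 : E) (show 0 < min r (ρ / M) by positivity)] with h hh
  rw [mem_ball_zero_iff, lt_min_iff, lt_div_iff₀' hM] at hh
  have h_sub (s : ℝ) (hs : s ∈ Icc (-T) 0) : ‖φ s (x₀ + h) - φ s x₀‖ ≤ M * ‖h‖ := by
    simpa using h_lip (x₀ + h) (by simpa using hh.1.le) s hs
  have hC₀ : 0 ≤ C := (norm_nonneg _).trans (hC s hs)
  have h_gronwall := norm_le_mul_exp_of_norm_deriv_le (δ := 0) hC₀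
    (ε := c / (M * Real.exp ((C + 1) * T)) * (M * ‖h‖)) (by positivity)
    (fun s hs => ((h_flow (x₀ + h) s).fun_sub (h_flow x₀ s)).fun_sub
      ((hΦ s hs).clm_apply (hasDerivAt_const s h))) (by simp [h_zero, hΦ_zero])
    (fun s hs => ?_) hs
  · refine h_gronwall.trans_eq ?_
    field_simp
    ring
  have h_eq : X (φ s (x₀ + h)) - X (φ s x₀) -
      ((fderiv ℝ X (φ s x₀)).comp (Φ s) h + Φ s 0) =
      fderiv ℝ X (φ s x₀) (φ s (x₀ + h) - φ s x₀ - Φ s h) +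
        (X (φ s (x₀ + h)) - X (φ s x₀) - fderiv ℝ X (φ s x₀) (φ s (x₀ + h) - φ s x₀)) := by
    simp only [map_sub, map_zero, add_zero, ContinuousLinearMap.comp_apply]
    abel
  rw [h_eq]
  refine (norm_add_le _ _).trans (add_le_add ?_ ?_)
  · exact ContinuousLinearMap.le_of_opNorm_le _ (hC s hs) _
  · refine (h_taylor _ (mem_closedBall_zero_iff.2 (hR s hs)) _
      ((h_sub s hs).trans hh.2.le)).trans ?_
    gcongr
    exact h_sub s hs

theorem differentiable_flow_of_nonpos (hX : ContDiff ℝ 1 X) (h_zero : ∀ x, φ 0 x = x)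
    (h_flow : ∀ x t, HasDerivAt (fun τ => φ τ x) (X (φ t x)) t) {t : ℝ} (ht : t ≤ 0) :
    Differentiable ℝ (φ t) := fun x => by
  have h_cont : ContinuousOn (fun s => φ s x) (Icc (-(-t)) 0) :=
    HasDerivAt.continuousOn fun s _ => h_flow x s
  obtain ⟨Φ, hΦ_zero, hΦ⟩ := exists_hasDerivAt_comp_of_continuousOn (neg_nonneg.2 ht)
    ((hX.continuous_fderiv one_ne_zero).comp_continuousOn h_cont)
  exact (hasFDerivAt_flow hX h_zero h_flow hΦ_zero hΦ
    ⟨(neg_neg t).le, ht⟩).differentiableAt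

theorem differentiable_flow (hX : ContDiff ℝ 1 X) (h_zero : ∀ x, φ 0 x = x)
    (h_flow : ∀ x t, HasDerivAt (fun τ => φ τ x) (X (φ t x)) t) (t : ℝ) :
    Differentiable ℝ (φ t) := by
  rcases le_total t 0 with ht | ht
  · exact differentiable_flow_of_nonpos hX h_zero h_flow ht
  · have h_reversed := differentiable_flow_of_nonpos (X := -X) (φ := fun s => φ (-s)) hX.neg
      (by simpa only [neg_zero] using h_zero)
      (fun x s => ((h_flow x (-s)).scomp s (hasDerivAt_neg s)).congr_deriv (by simp))
      (neg_nonpos.2 ht)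
    simpa only [neg_neg] using h_reversed

end Flow

section Perturbation

variable {d : ℕ} {H : Phase d → ℝ} {l₀ T : ℝ} {z₀ : ℝ → Phase d} {Φ₀ : ℝ → Phase d →L[ℝ] Phase d}

theorem continuous_hamLin_prod (hH : ContDiff ℝ 2 H) :
    Continuous fun x : Phase d × ℝ => hamLin H x.2 x.1 := by
  simp_rw [fun x : Phase d × ℝ => hamLin_eq_sub (H := H) x.2 x.1]
  exact ((continuous_hamLin hH 0).comp continuous_fst).sub (by fun_prop)

theorem exists_linearizedOrbit (hH : ContDiff ℝ 2 H) (hT : 0 ≤ T)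
    (hz : ∀ s ∈ Icc (-T) 0, HasDerivAt z₀ (hamVF H l₀ (z₀ s)) s) :
    ∃ Φ, LinearizedOrbit H l₀ T z₀ Φ := by
  obtain ⟨Φ, h_zero, hΦ⟩ := exists_hasDerivAt_comp_of_continuousOn hT
    ((continuous_hamLin hH l₀).comp_continuousOn (HasDerivAt.continuousOn hz))
  exact ⟨Φ, hT, hz, h_zero, hΦ⟩

-- The discount is carried along as a state variable with zero velocity.
theorem exists_hasDerivAt_hamVF_norm_sub_le (hH : ContDiff ℝ 2 H) (hT : 0 ≤ T)
    (hz₀ : ∀ s ∈ Icc (-T) 0, HasDerivAt z₀ (hamVF H l₀ (z₀ s)) s) :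
    ∃ M > 0, ∃ r > 0, ∀ x l, ‖(x, l) - (z₀ 0, l₀)‖ ≤ r → ∃ z : ℝ → Phase d, z 0 = x ∧
      ∀ s ∈ Icc (-T) 0, HasDerivAt z (hamVF H l (z s)) s ∧
        ‖(z s, l) - (z₀ s, l₀)‖ ≤ M * ‖(x, l) - (z₀ 0, l₀)‖ := by
  have h_field : ContDiff ℝ 1 fun y : Phase d × ℝ => (hamVF H y.2 y.1, (0 : ℝ)) :=
    (contDiff_hamVF_prod hH).prodMk contDiff_const
  obtain ⟨M, hM, r, hr, h⟩ := exists_hasDerivAt_norm_sub_le_of_contDiff h_field hT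
    (z₀ := fun s => (z₀ s, l₀)) fun s hs => (hz₀ s hs).prodMk (hasDerivAt_const s l₀)
  refine ⟨M, hM, r, hr, fun x l hx => ?_⟩
  obtain ⟨w, hw_zero, hw⟩ := h (x, l) hx
  have h_snd : EqOn (fun s => (w s).2) (fun _ => l) (Icc (-T) 0) :=
    eqOn_of_hasDerivAt_contDiff (X := fun _ => 0) contDiff_const
      (fun s hs => (hw s hs).1.snd) (fun s _ => hasDerivAt_const s l) (by simp [hw_zero])
  refine ⟨fun s => (w s).1, by simp [hw_zero], fun s hs => ?_⟩
  have h_eq : w s = ((w s).1, l) := Prod.ext rfl (h_snd hs)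
  obtain ⟨h_deriv, h_le⟩ := hw s hs
  rw [h_eq] at h_deriv h_le
  exact ⟨h_deriv.fst, h_le⟩

theorem LinearizedOrbit.exists_norm_sub_le (hH : ContDiff ℝ 2 H)
    (h : LinearizedOrbit H l₀ T z₀ Φ₀) {τ : ℝ} (hτ : 0 < τ) :
    ∃ r > 0, ∀ x l, ‖(x, l) - (z₀ 0, l₀)‖ < r → ∃ z Φ, LinearizedOrbit H l T z Φ ∧ z 0 = x ∧
      ∀ s ∈ Icc (-T) 0, ‖z s - z₀ s‖ ≤ τ ∧ ‖Φ s - Φ₀ s‖ ≤ τ := by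
  obtain ⟨R, hR, h_bound⟩ := h.exists_forall_norm_le
  obtain ⟨M, hM, r, hr, h_orbit⟩ := exists_hasDerivAt_hamVF_norm_sub_le hH h.nonneg h.hasDerivAt
  obtain ⟨C, hC⟩ := isCompact_Icc.exists_bound_of_continuousOn
    ((continuous_hamLin hH l₀).comp_continuousOn h.continuousOn)
  set κ := min 1 (τ / (R * Real.exp ((C + 1 + 1) * T)))
  obtain ⟨ρ, hρ, -, h_unif⟩ := exists_forall_closedBall_norm_sub_le_of_continuous
    (continuous_hamLin_prod hH) (max R |l₀|) (τ := κ) (by positivity)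
  refine ⟨min r (min ρ τ / M), by positivity, fun x l hx => ?_⟩
  rw [lt_min_iff, lt_div_iff₀' hM] at hx
  obtain ⟨z, hz_zero, hz⟩ := h_orbit x l hx.1.le
  obtain ⟨Φ, hΦ⟩ := exists_linearizedOrbit hH h.nonneg fun s hs => (hz s hs).1
  have h_close (s : ℝ) (hs : s ∈ Icc (-T) 0) : ‖(z s, l) - (z₀ s, l₀)‖ ≤ min ρ τ :=
    (hz s hs).2.trans hx.2.le
  have h_lin (s : ℝ) (hs : s ∈ Icc (-T) 0) : ‖hamLin H l (z s) - hamLin H l₀ (z₀ s)‖ ≤ κ :=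
    h_unif (z₀ s, l₀) (mem_closedBall_zero_iff.2 (max_le_max (h_bound s hs).1 le_rfl)) (z s, l)
      ((h_close s hs).trans (min_le_left _ _))
  have h_norm (s : ℝ) (hs : s ∈ Icc (-T) 0) : ‖hamLin H l (z s)‖ ≤ C + 1 := by
    have h_le : ‖hamLin H l₀ (z₀ s)‖ ≤ C := hC s hs
    have h_diff : ‖hamLin H l (z s) - hamLin H l₀ (z₀ s)‖ ≤ 1 :=
      (h_lin s hs).trans (min_le_left _ _)
    linarith [norm_sub_norm_le (hamLin H l (z s)) (hamLin H l₀ (z₀ s))]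
  refine ⟨z, Φ, hΦ, hz_zero, fun s hs => ⟨?_, ?_⟩⟩
  · exact (norm_fst_le ((z s, l) - (z₀ s, l₀))).trans ((h_close s hs).trans (min_le_right _ _))
  · have h_sub := norm_sub_le_of_hasDerivAt_comp (by positivity) hΦ.hasDerivAt_lin
      h.hasDerivAt_lin (hΦ.apply_zero.trans h.apply_zero.symm) h_norm h_lin
      (fun s hs => (h_bound s hs).2) hs
    rw [mul_assoc] at h_sub
    exact h_sub.trans ((le_div_iff₀ (by positivity)).1 (min_le_right _ _))

end Perturbation

/-! ### Green bundles and nearby orbits -/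

section Green

variable {d : ℕ} {H : Phase d → ℝ} {l T : ℝ} {φ : ℝ → Phase d → Phase d} {z₀ : ℝ → Phase d}
  {Φ₀ : ℝ → Phase d →L[ℝ] Phase d} {x₀ : Phase d}

theorem isHeight_heightOf {G : Submodule ℝ (Phase d)} (h : ∃ S, IsHeight G S) :
    IsHeight G (heightOf G) := by
  simpa only [heightOf, dif_pos h] using h.choose_spec

theorem LinearizedOrbit.hasFDerivAt_flow (hH : ContDiff ℝ 2 H) (hφ : IsConformalFlow H l φ)
    (h : LinearizedOrbit H l T (fun s => φ s x₀) Φ₀) {s : ℝ} (hs : s ∈ Icc (-T) 0) :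
    HasFDerivAt (φ s) (Φ₀ s) x₀ :=
  _root_.hasFDerivAt_flow (contDiff_hamVF hH l) hφ.1 hφ.2.2 h.apply_zero
    (fun s hs => by simpa only [(hasFDerivAt_hamVF hH l _).fderiv] using h.hasDerivAt_lin s hs) hs

theorem LinearizedOrbit.mem_greenT_iff (hH : ContDiff ℝ 2 H) (hφ : IsConformalFlow H l φ)
    (h : LinearizedOrbit H l T (fun s => φ s x₀) Φ₀) {t : ℝ} (ht : t ∈ Icc 0 T) (w : Phase d) :
    w ∈ GreenT φ t x₀ ↔ (Φ₀ (-t) w).1 = 0 := by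
  have h_inv (s : ℝ) : φ (-s) ∘ φ s = id := by
    funext x
    simp [hφ.2.1, hφ.1]
  have h_inv' : φ t ∘ φ (-t) = id := by simpa only [neg_neg] using h_inv (-t)
  have h_back : HasFDerivAt (φ (-t)) (Φ₀ (-t)) x₀ :=
    h.hasFDerivAt_flow hH hφ ⟨neg_le_neg ht.2, neg_nonpos.2 ht.1⟩
  have h_forth : HasFDerivAt (φ t) (fderiv ℝ (φ t) (φ (-t) x₀)) (φ (-t) x₀) :=
    (differentiable_flow (contDiff_hamVF hH l) hφ.1 hφ.2.2 t _).hasFDerivAt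
  have h_right : (fderiv ℝ (φ t) (φ (-t) x₀)).comp (Φ₀ (-t)) = .id ℝ (Phase d) :=
    (h_forth.comp x₀ h_back).unique (h_inv' ▸ hasFDerivAt_id x₀)
  have h_left : (Φ₀ (-t)).comp (fderiv ℝ (φ t) (φ (-t) x₀)) = .id ℝ (Phase d) := by
    have h_x₀ : φ t (φ (-t) x₀) = x₀ := congrFun h_inv' x₀
    rw [← h_x₀] at h_back
    exact (h_back.comp (φ (-t) x₀) h_forth).unique (h_inv t ▸ hasFDerivAt_id _)
  constructor
  · rintro ⟨y, hy, rfl⟩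
    have h_y : Φ₀ (-t) (fderiv ℝ (φ t) (φ (-t) x₀) y) = y := DFunLike.congr_fun h_left y
    exact (congrArg Prod.fst h_y).trans hy.1
  · exact fun hw => ⟨Φ₀ (-t) w, ⟨hw, trivial⟩, DFunLike.congr_fun h_right w⟩

theorem LinearizedOrbit.fst_apply_eq_zero_iff (hH : ContDiff ℝ 2 H) (hφ : IsConformalFlow H l φ)
    (h : LinearizedOrbit H l T (fun s => φ s x₀) Φ₀) {t : ℝ} (ht : t ∈ Icc 0 T)
    {S : Euc d →L[ℝ] Euc d} (hS : IsHeight (GreenT φ t x₀) S) (v w : Euc d) :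
    (Φ₀ (-t) (v, w)).1 = 0 ↔ w = S v := by
  rw [← h.mem_greenT_iff hH hφ ht, hS.2, LinearMap.mem_graph_iff]
  rfl

theorem norm_fst_apply_sub_le {A B : Phase d →L[ℝ] Phase d} {τ : ℝ} (h : ‖A - B‖ ≤ τ)
    (w : Phase d) : ‖(A w).1 - (B w).1‖ ≤ τ * ‖w‖ :=
  (norm_fst_le ((A - B) w)).trans ((A - B).le_of_opNorm_le h w)

theorem norm_prodMk_zero (k : Euc d) : ‖((k, 0) : Phase d)‖ = ‖k‖ := by
  simp [Prod.norm_def]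

theorem fst_apply_mk (A : Phase d →L[ℝ] Phase d) (v w : Euc d) :
    (A (v, w)).1 = (A (v, 0)).1 + (A (0, w)).1 := by
  rw [← Prod.fst_add, ← map_add, Prod.mk_add_mk, add_zero, zero_add]

theorem fst_apply_mk_neg_smul (A : Phase d →L[ℝ] Phase d) (v : Euc d) (K : ℝ) :
    (A (v, (-K) • v)).1 = (A (v, 0)).1 - K • (A (0, v)).1 := by
  have h_smul : ((0, (-K) • v) : Phase d) = (-K) • (0, v) := by simp
  rw [fst_apply_mk, h_smul, map_smul, Prod.smul_fst, neg_smul, sub_eq_add_neg]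

theorem apply_self_nonneg_of_norm_sub_le {E : Type*} [NormedAddCommGroup E] [NormedSpace ℝ E]
    {B : E →L[ℝ] E →L[ℝ] ℝ} {m C κ : ℝ} (hC : ‖B‖ ≤ C) (hκ : κ * C ≤ m) {x y : E}
    (hy : m * ‖y‖ ^ 2 ≤ B y y) (hxy : ‖x - y‖ ≤ κ * ‖y‖) : 0 ≤ B x y := by
  have hC₀ : 0 ≤ C := (norm_nonneg (E := E →L[ℝ] E →L[ℝ] ℝ) _).trans hC
  have h_diff : |B (x - y) y| ≤ C * (κ * ‖y‖) * ‖y‖ :=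
    (B.le_opNorm₂ (x - y) y).trans (by gcongr)
  have h_le : κ * C * ‖y‖ ^ 2 ≤ m * ‖y‖ ^ 2 := by gcongr
  rw [map_sub, sub_apply] at h_diff
  linarith [neg_le_of_abs_le h_diff]

theorem LinearizedOrbit.inner_fst_apply_vertical_nonpos
    (h : LinearizedOrbit H l T z₀ Φ₀) {m C κ : ℝ}
    (hm : ∀ s ∈ Icc (-T) 0, ∀ k : Euc d, m * ‖k‖ ^ 2 ≤ hessian H (z₀ s) (0, k) (0, k))
    (hC : ∀ s ∈ Icc (-T) 0, ‖hessian H (z₀ s)‖ ≤ C) (hκ : κ * C ≤ m)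
    (hΦ : ∀ s ∈ Icc (-T) 0, ‖Φ₀ s - .id ℝ (Phase d)‖ ≤ κ) {s : ℝ} (hs : s ∈ Icc (-T) 0)
    (v : Euc d) : ⟪(Φ₀ s (0, v)).1, v⟫ ≤ 0 := by
  have h_deriv (σ : ℝ) (hσ : σ ∈ Icc (-T) 0) : HasDerivAt (fun σ => ⟪(Φ₀ σ (0, v)).1, v⟫)
      (hessian H (z₀ σ) (Φ₀ σ (0, v)) (0, v)) σ :=
    ((hasDerivAt_phase_fst (h.hasDerivAt_lin_apply (0, v) hσ)).inner ℝ
      (hasDerivAt_const σ v)).congr_deriv (by rw [inner_zero_right, zero_add, inner_hamLin_fst])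
  have h_nonneg (σ : ℝ) (hσ : σ ∈ Icc (-T) 0) : 0 ≤ hessian H (z₀ σ) (Φ₀ σ (0, v)) (0, v) := by
    have h_sub : ‖Φ₀ σ (0, v) - (0, v)‖ ≤ κ * ‖((0, v) : Phase d)‖ :=
      ContinuousLinearMap.le_of_opNorm_le _ (hΦ σ hσ) ((0, v) : Phase d)
    have h_fiber : m * ‖((0, v) : Phase d)‖ ^ 2 ≤ hessian H (z₀ σ) (0, v) (0, v) := by
      rw [norm_zero_prodMk]
      exact hm σ hσ v
    exact apply_self_nonneg_of_norm_sub_le (hC σ hσ) hκ h_fiber h_sub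
  have h_mono : MonotoneOn (fun σ => ⟪(Φ₀ σ (0, v)).1, v⟫) (Icc (-T) 0) :=
    monotoneOn_of_hasDerivWithinAt_nonneg (convex_Icc _ _) (HasDerivAt.continuousOn h_deriv)
      (fun σ hσ => (h_deriv σ (interior_subset hσ)).hasDerivWithinAt)
      fun σ hσ => h_nonneg σ (interior_subset hσ)
  simpa [h.apply_zero] using h_mono hs ⟨neg_nonpos.2 h.nonneg, le_rfl⟩ hs.2

theorem eq_zero_of_inner_fst_apply_vertical_nonpos {A : Phase d →L[ℝ] Phase d}
    (hA : ‖A - .id ℝ (Phase d)‖ ≤ 1 / 2) {v : Euc d} (h_inner : ⟪(A (0, v)).1, v⟫ ≤ 0) {K : ℝ}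
    (hK : 0 ≤ K) (hv : (A (v, (-K) • v)).1 = 0) : v = 0 := by
  rw [fst_apply_mk_neg_smul, sub_eq_zero] at hv
  have h_sub : ‖(A (v, 0)).1 - v‖ ≤ 1 / 2 * ‖v‖ := by
    simpa only [norm_prodMk_zero, ContinuousLinearMap.id_apply] using
      norm_fst_apply_sub_le hA (v, 0)
  have h_inner_sub : |⟪(A (v, 0)).1 - v, v⟫| ≤ 1 / 2 * ‖v‖ * ‖v‖ :=
    (abs_real_inner_le_norm _ _).trans (by gcongr)
  rw [inner_sub_left, hv, real_inner_smul_left, real_inner_self_eq_norm_sq] at h_inner_sub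
  have h_sq : ‖v‖ ^ 2 ≤ 0 := by
    linarith [neg_le_of_abs_le h_inner_sub, mul_nonpos_of_nonneg_of_nonpos hK h_inner]
  exact norm_eq_zero.1 (pow_eq_zero_iff two_ne_zero |>.1 (le_antisymm h_sq (sq_nonneg _)))

theorem eq_zero_of_mul_norm_le_norm_fst_apply_vertical {A : Phase d →L[ℝ] Phase d} {c K R : ℝ}
    (hA : ‖A‖ ≤ R) {v : Euc d} (h_vert : c * ‖v‖ ≤ ‖(A (0, v)).1‖) (hK : 0 ≤ K)
    (hRK : R < K * c) (hv : (A (v, (-K) • v)).1 = 0) : v = 0 := by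
  rw [fst_apply_mk_neg_smul, sub_eq_zero] at hv
  have h_hor : ‖(A (v, 0)).1‖ ≤ R * ‖v‖ := by
    simpa only [norm_prodMk_zero] using
      (norm_fst_le (A (v, 0))).trans (A.le_of_opNorm_le hA (v, 0))
  rw [hv, norm_smul, Real.norm_of_nonneg hK] at h_hor
  by_contra h_ne
  have h_lt : R * ‖v‖ < K * c * ‖v‖ := mul_lt_mul_of_pos_right hRK (norm_pos_iff.2 h_ne)
  have h_le : K * (c * ‖v‖) ≤ K * ‖(A (0, v)).1‖ := by gcongr
  linarith

-- For small negative times, fiberwise convexity gives `⟪(Φ s (0, v)).1, v⟫ ≤ 0`, so that the two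
-- terms of `(Φ s (v, -K • v)).1 ≈ v - K • (Φ s (0, v)).1` cannot cancel.
theorem LinearizedOrbit.exists_forall_injective_near_zero (hH : TonelliHam H) (hT : 0 < T)
    (h₀ : LinearizedOrbit H l T z₀ Φ₀) :
    ∃ s₀ ∈ Ioc 0 T, ∃ τ > 0, ∀ l' z Φ, LinearizedOrbit H l' T z Φ →
      (∀ s ∈ Icc (-T) 0, ‖z s - z₀ s‖ ≤ τ ∧ ‖Φ s - Φ₀ s‖ ≤ τ) →
      ∀ K ≥ (0 : ℝ), ∀ s ∈ Icc (-s₀) 0, ∀ v : Euc d, (Φ s (v, (-K) • v)).1 = 0 → v = 0 := by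
  obtain ⟨R, -, h_bound⟩ := h₀.exists_forall_norm_le
  obtain ⟨m, hm, h_convex⟩ := hH.exists_forall_mul_sq_le_hessian_fiber (R + 1)
  obtain ⟨C, hC, h_hessian⟩ := exists_forall_norm_hessian_le hH.smooth
    (isCompact_closedBall (0 : Phase d) (R + 1)) continuousOn_id
  set κ := min (m / (2 * C)) (1 / 4)
  have hκ : 0 < κ := by positivity
  have hκC : (κ + κ) * C ≤ m := by
    have h_le := (le_div_iff₀ (by positivity)).1 (min_le_left (m / (2 * C)) (1 / 4))
    linarith
  have hκ_half : κ + κ ≤ 1 / 2 := by linarith [min_le_right (m / (2 * C)) (1 / 4)]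
  have h_cont : ContinuousAt Φ₀ 0 :=
    (h₀.hasDerivAt_lin 0 ⟨neg_nonpos.2 hT.le, le_rfl⟩).continuousAt
  obtain ⟨δ, hδ, h_near⟩ := Metric.continuousAt_iff.1 h_cont κ hκ
  refine ⟨min (δ / 2) T, ⟨by positivity, min_le_right _ _⟩, min κ 1, by positivity,
    fun l' z Φ h h_close K hK s hs v hv => ?_⟩
  have hs₀ : min (δ / 2) T ∈ Icc 0 T := ⟨by positivity, min_le_right _ _⟩
  have h_sub : Icc (-min (δ / 2) T) 0 ⊆ Icc (-T) 0 := Icc_subset_Icc_left (neg_le_neg hs₀.2)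
  have h_id (σ : ℝ) (hσ : σ ∈ Icc (-min (δ / 2) T) 0) : ‖Φ σ - .id ℝ (Phase d)‖ ≤ κ + κ := by
    refine (norm_sub_le_norm_sub_add_norm_sub _ (Φ₀ σ) _).trans (add_le_add
      ((h_close σ (h_sub hσ)).2.trans (min_le_left _ _)) ?_)
    rw [← h₀.apply_zero, ← dist_eq_norm]
    refine (h_near ?_).le
    rw [dist_zero_right, Real.norm_of_nonpos hσ.2]
    linarith [hσ.1, min_le_left (δ / 2) T]
  have h_ball (σ : ℝ) (hσ : σ ∈ Icc (-min (δ / 2) T) 0) : z σ ∈ closedBall 0 (R + 1) := by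
    rw [mem_closedBall_zero_iff]
    linarith [norm_sub_norm_le (z σ) (z₀ σ), (h_bound σ (h_sub hσ)).1,
      (h_close σ (h_sub hσ)).1.trans (min_le_right _ _)]
  exact eq_zero_of_inner_fst_apply_vertical_nonpos ((h_id s hs).trans hκ_half)
    ((h.mono hs₀).inner_fst_apply_vertical_nonpos (fun σ hσ => h_convex _ (h_ball σ hσ))
      (fun σ hσ => h_hessian _ (h_ball σ hσ)) hκC h_id hs v) hK hv

theorem exists_forall_mul_norm_le_norm_apply {α E F : Type*} [TopologicalSpace α]
    [NormedAddCommGroup E] [NormedSpace ℝ E] [FiniteDimensional ℝ E] [NormedAddCommGroup F]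
    [NormedSpace ℝ F] {I : Set α} (hI : IsCompact I) {M : α → E →L[ℝ] F}
    (hM : ContinuousOn M I) (h_inj : ∀ s ∈ I, ∀ v, M s v = 0 → v = 0) :
    ∃ c > 0, ∀ s ∈ I, ∀ v, c * ‖v‖ ≤ ‖M s v‖ := by
  have h_cont : ContinuousOn (fun x : α × E => ‖M x.1 x.2‖) (I ×ˢ sphere 0 1) :=
    ((hM.comp continuousOn_fst fun x hx => hx.1).clm_apply continuousOn_snd).norm
  obtain ⟨c, hc, h_le⟩ := (hI.prod (isCompact_sphere 0 1)).exists_forall_le' h_cont (a := 0)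
    fun x hx => norm_pos_iff.2 fun h_zero => ne_zero_of_mem_unit_sphere ⟨x.2, hx.2⟩
      (h_inj x.1 hx.1 x.2 h_zero)
  refine ⟨c, hc, fun s hs v => ?_⟩
  rcases eq_or_ne v 0 with rfl | hv
  · simp
  have h_unit := h_le (s, ‖v‖⁻¹ • v) ⟨hs, by simp [norm_smul, hv]⟩
  simp only [map_smul, norm_smul, norm_inv, norm_norm] at h_unit
  rwa [inv_mul_eq_div, le_div_iff₀ (norm_pos_iff.2 hv)] at h_unit

theorem exists_forall_mul_norm_le_norm_fst_apply_vertical {I : Set ℝ} (hI : IsCompact I)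
    (hΦ₀ : ContinuousOn Φ₀ I)
    (h_inj : ∀ s ∈ I, ∀ w : Euc d, (Φ₀ s (0, w)).1 = 0 → w = 0) :
    ∃ c > 0, ∀ Φ : ℝ → Phase d →L[ℝ] Phase d, ∀ s ∈ I, ‖Φ s - Φ₀ s‖ ≤ c →
      ∀ w : Euc d, c * ‖w‖ ≤ ‖(Φ s (0, w)).1‖ := by
  obtain ⟨c, hc, h_le⟩ := exists_forall_mul_norm_le_norm_apply hI
    (continuousOn_const.clm_comp (hΦ₀.clm_comp continuousOn_const) :
      ContinuousOn (fun s => (ContinuousLinearMap.fst ℝ (Euc d) (Euc d)).comp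
        ((Φ₀ s).comp (ContinuousLinearMap.inr ℝ (Euc d) (Euc d)))) I) h_inj
  refine ⟨c / 2, half_pos hc, fun Φ s hs h_close w => ?_⟩
  have h_low : c * ‖w‖ ≤ ‖(Φ₀ s (0, w)).1‖ := h_le s hs w
  have h_sub := norm_fst_apply_sub_le h_close (0, w)
  rw [norm_zero_prodMk, norm_sub_rev] at h_sub
  linarith [norm_sub_norm_le (Φ₀ s (0, w)).1 (Φ s (0, w)).1]

theorem LinearizedOrbit.exists_forall_injective (hH : TonelliHam H) (hT : 0 < T)
    (h₀ : LinearizedOrbit H l T z₀ Φ₀)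
    (h_vert : ∀ t ∈ Ioc 0 T, ∀ w : Euc d, (Φ₀ (-t) (0, w)).1 = 0 → w = 0) :
    ∃ τ > 0, ∃ K₁ : ℝ, ∃ c > 0, ∀ l' z Φ, LinearizedOrbit H l' T z Φ →
      (∀ s ∈ Icc (-T) 0, ‖z s - z₀ s‖ ≤ τ ∧ ‖Φ s - Φ₀ s‖ ≤ τ) →
      (∀ K ≥ K₁, ∀ s ∈ Icc (-T) 0, ∀ v : Euc d, (Φ s (v, (-K) • v)).1 = 0 → v = 0) ∧
      ∀ w : Euc d, c * ‖w‖ ≤ ‖(Φ (-T) (0, w)).1‖ := by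
  obtain ⟨R, hR, h_bound⟩ := h₀.exists_forall_norm_le
  obtain ⟨s₀, hs₀, τ, hτ, h_short⟩ := h₀.exists_forall_injective_near_zero hH hT
  have h_sub : Icc (-T) (-s₀) ⊆ Icc (-T) 0 := Icc_subset_Icc_right (neg_nonpos.2 hs₀.1.le)
  obtain ⟨c, hc, h_long⟩ := exists_forall_mul_norm_le_norm_fst_apply_vertical isCompact_Icc
    (h₀.continuousOn_lin.mono h_sub) fun s hs w hw =>
      h_vert (-s) ⟨by linarith [hs.2, hs₀.1], by linarith [hs.1]⟩ w (by rwa [neg_neg])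
  refine ⟨min τ (min c 1), by positivity, (R + 1) / c + 1, c, hc, fun l' z Φ h h_close => ?_⟩
  have h_low (s : ℝ) (hs : s ∈ Icc (-T) (-s₀)) (w : Euc d) : c * ‖w‖ ≤ ‖(Φ s (0, w)).1‖ :=
    h_long Φ s hs ((h_close s (h_sub hs)).2.trans ((min_le_right _ _).trans (min_le_left _ _))) w
  refine ⟨fun K hK s hs v hv => ?_, h_low (-T) ⟨le_rfl, neg_le_neg hs₀.2⟩⟩
  have hK₀ : 0 ≤ K := le_trans (by positivity) hK
  rcases le_total (-s₀) s with h_le | h_le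
  · exact h_short l' z Φ h (fun σ hσ => ⟨(h_close σ hσ).1.trans (min_le_left _ _),
      (h_close σ hσ).2.trans (min_le_left _ _)⟩) K hK₀ s ⟨h_le, hs.2⟩ v hv
  · have h_norm : ‖Φ s‖ ≤ R + 1 := by
      linarith [norm_sub_norm_le (Φ s) (Φ₀ s), (h_bound s hs).2,
        (h_close s hs).2.trans ((min_le_right _ _).trans (min_le_right _ _))]
    have hRK : R + 1 < K * c := (div_lt_iff₀ hc).1 ((lt_add_one _).trans_le hK)
    exact eq_zero_of_mul_norm_le_norm_fst_apply_vertical h_norm (h_low s ⟨hs.1, h_le⟩ v) hK₀ hRK hv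

theorem exists_forall_fst_apply_eq_zero {A : Phase d →L[ℝ] Phase d}
    (h_vert : ∀ w : Euc d, (A (0, w)).1 = 0 → w = 0) :
    ∃ Z : Euc d →L[ℝ] Euc d, ∀ v, (A (v, Z v)).1 = 0 := by
  set B := (ContinuousLinearMap.fst ℝ (Euc d) (Euc d)).comp
    (A.comp (ContinuousLinearMap.inr ℝ (Euc d) (Euc d)))
  have hB : IsUnit B := isUnit_of_forall_apply_eq_zero h_vert
  refine ⟨-(Ring.inverse B).comp ((ContinuousLinearMap.fst ℝ (Euc d) (Euc d)).comp
    (A.comp (ContinuousLinearMap.inl ℝ (Euc d) (Euc d)))), fun v => ?_⟩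
  have h_inv : B (Ring.inverse B (A (v, 0)).1) = (A (v, 0)).1 :=
    DFunLike.congr_fun (Ring.mul_inverse_cancel B hB) (A (v, 0)).1
  have h_neg : (A (0, -Ring.inverse B (A (v, 0)).1)).1 = -(A (v, 0)).1 :=
    (map_neg B _).trans (congrArg Neg.neg h_inv)
  rw [fst_apply_mk]
  exact (congrArg ((A (v, 0)).1 + ·) h_neg).trans (add_neg_cancel _)

theorem norm_apply_sub_le_of_fst_apply_eq_zero {A A₀ : Phase d →L[ℝ] Phase d}
    {Z S : Euc d →L[ℝ] Euc d} {c ε τ : ℝ} (hc : 0 < c)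
    (h_vert : ∀ w : Euc d, c * ‖w‖ ≤ ‖(A (0, w)).1‖) (hZ : ∀ v, (A (v, Z v)).1 = 0)
    (hS : ∀ v, (A₀ (v, S v)).1 = 0) (hA : ‖A - A₀‖ ≤ τ) (hτ : τ * (1 + ‖S‖) ≤ c * ε)
    (v : Euc d) : ‖Z v - S v‖ ≤ ε * ‖v‖ := by
  have hτ₀ : 0 ≤ τ := (norm_nonneg _).trans hA
  have h_eq : (A (0, Z v - S v)).1 = -((A (v, S v)).1 - (A₀ (v, S v)).1) := by
    have h_mk : ((0, Z v - S v) : Phase d) = (v, Z v) - (v, S v) := by simp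
    rw [h_mk, map_sub, Prod.fst_sub, hZ, hS, zero_sub, sub_zero]
  refine le_of_mul_le_mul_left ?_ hc
  calc c * ‖Z v - S v‖ ≤ ‖(A (0, Z v - S v)).1‖ := h_vert _
    _ ≤ τ * ‖(v, S v)‖ := by rw [h_eq, norm_neg]; exact norm_fst_apply_sub_le hA _
    _ ≤ τ * ((1 + ‖S‖) * ‖v‖) := by gcongr; exact norm_prodMk_apply_le le_rfl v
    _ ≤ c * (ε * ‖v‖) := by rw [← mul_assoc, ← mul_assoc]; gcongr

theorem inner_apply_le_add_of_norm_sub_le {Z S : Euc d →L[ℝ] Euc d} {ε : ℝ} {v : Euc d}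
    (h : ‖Z v - S v‖ ≤ ε * ‖v‖) : ⟪Z v, v⟫ ≤ ⟪S v, v⟫ + ε * ‖v‖ ^ 2 := by
  have h_inner : ⟪Z v - S v, v⟫ ≤ ε * ‖v‖ * ‖v‖ := (real_inner_le_norm _ _).trans (by gcongr)
  rw [inner_sub_left] at h_inner
  linarith

theorem LinearizedOrbit.inner_apply_le_of_forall_injective (hH : TonelliHam H) (hl : 0 ≤ l)
    (h : LinearizedOrbit H l T z₀ Φ₀) {f : Euc d → ℝ} {S Z : Euc d →L[ℝ] Euc d}
    (hf : HasAlexandrovAt f (z₀ 0).2 S (z₀ 0).1) {K₁ : ℝ}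
    (h_inj : ∀ K ≥ K₁, ∀ s ∈ Icc (-T) 0, ∀ v : Euc d, (Φ₀ s (v, (-K) • v)).1 = 0 → v = 0)
    (h_vert : ∀ w : Euc d, (Φ₀ (-T) (0, w)).1 = 0 → w = 0)
    (hZ : ∀ v : Euc d, (Φ₀ (-T) (v, Z v)).1 = 0) (h_near : HasNearMinimizers H l T f)
    (v : Euc d) : ⟪S v, v⟫ ≤ ⟪Z v, v⟫ := by
  set K := max K₁ (‖S‖ + 1)
  refine h.inner_apply_le hH hl (A := (-K) • ContinuousLinearMap.id ℝ (Euc d)) hf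
    (fun x y => ?_) one_pos (fun k => ?_)
    (fun s hs v hv => h_inj K (le_max_left _ _) s hs v hv) h_vert hZ h_near v
  · simp only [smul_apply, ContinuousLinearMap.id_apply, real_inner_smul_left]
    rw [real_inner_comm]
  · have h_S : |⟪S k, k⟫| ≤ ‖S‖ * ‖k‖ * ‖k‖ :=
      (abs_real_inner_le_norm _ _).trans (by gcongr; exact S.le_opNorm k)
    have h_K : (‖S‖ + 1) * ‖k‖ ^ 2 ≤ K * ‖k‖ ^ 2 := by gcongr; exact le_max_right _ _
    simp only [smul_apply, ContinuousLinearMap.id_apply, real_inner_smul_left,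
      real_inner_self_eq_norm_sq]
    linarith [neg_le_of_abs_le h_S]

theorem exists_forall_inner_le_of_isHeight (hH : TonelliHam H) (hφ : IsConformalFlow H 0 φ)
    (hT : 0 < T) (hG : ∀ t ∈ Ioc 0 T, ∃ S, IsHeight (GreenT φ t x₀) S) {S₀ : Euc d →L[ℝ] Euc d}
    (hS₀ : IsHeight (GreenT φ T x₀) S₀) {ε : ℝ} (hε : 0 < ε) :
    ∃ r > 0, ∀ x l f S, ‖(x, l) - (x₀, 0)‖ < r → 0 ≤ l → HasNearMinimizers H l T f →
      HasAlexandrovAt f x.2 S x.1 → ∀ v, ⟪S v, v⟫ ≤ ⟪S₀ v, v⟫ + ε * ‖v‖ ^ 2 := by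
  obtain ⟨Φ₀, h₀⟩ := exists_linearizedOrbit hH.smooth hT.le fun s _ => hφ.2.2 x₀ s
  have h_vert (t : ℝ) (ht : t ∈ Ioc 0 T) (w : Euc d) (hw : (Φ₀ (-t) (0, w)).1 = 0) : w = 0 := by
    obtain ⟨S, hS⟩ := hG t ht
    rw [(h₀.fst_apply_eq_zero_iff hH.smooth hφ ⟨ht.1.le, ht.2⟩ hS 0 w).1 hw, map_zero]
  have h_green (v : Euc d) : (Φ₀ (-T) (v, S₀ v)).1 = 0 :=
    (h₀.fst_apply_eq_zero_iff hH.smooth hφ ⟨hT.le, le_rfl⟩ hS₀ v _).2 rfl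
  obtain ⟨τ₀, hτ₀, K₁, c, hc, h_inj⟩ := h₀.exists_forall_injective hH hT h_vert
  set τ := min τ₀ (c * ε / (1 + ‖S₀‖))
  obtain ⟨r, hr, h_orbit⟩ := h₀.exists_norm_sub_le hH.smooth (τ := τ) (by positivity)
  simp only [hφ.1] at h_orbit
  refine ⟨r, hr, fun x l f S hx hl h_near hf v => ?_⟩
  obtain ⟨z, Φ, h, rfl, h_close⟩ := h_orbit x l hx
  obtain ⟨h_graph, h_low⟩ := h_inj l z Φ h fun s hs =>
    ⟨(h_close s hs).1.trans (min_le_left _ _), (h_close s hs).2.trans (min_le_left _ _)⟩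
  have h_vert' (w : Euc d) (hw : (Φ (-T) (0, w)).1 = 0) : w = 0 := by
    have h_w := h_low w
    rw [hw, norm_zero] at h_w
    exact norm_le_zero_iff.1 (nonpos_of_mul_nonpos_right h_w hc)
  obtain ⟨Z, hZ⟩ := exists_forall_fst_apply_eq_zero h_vert'
  have h_sub := norm_apply_sub_le_of_fst_apply_eq_zero hc h_low hZ h_green
    ((h_close (-T) ⟨le_rfl, neg_nonpos.2 hT.le⟩).2.trans (min_le_right _ _))
    (div_mul_cancel₀ _ (by positivity)).le v
  exact (h.inner_apply_le_of_forall_injective hH hl hf h_graph h_vert' hZ h_near v).trans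
    (inner_apply_le_add_of_norm_sub_le h_sub)

theorem exists_forall_inner_le_of_tendsto_heightOf (hH : TonelliHam H)
    (hφ : IsConformalFlow H 0 φ) (hG : ∀ t > 0, ∃ S, IsHeight (GreenT φ t x₀) S)
    {S₀ : Euc d →L[ℝ] Euc d}
    (hS₀ : Tendsto (fun t => heightOf (GreenT φ t x₀)) atTop (nhds S₀)) {ε : ℝ} (hε : 0 < ε) :
    ∃ r > 0, ∃ T > 0, ∀ x l f S, ‖(x, l) - (x₀, 0)‖ < r → 0 ≤ l → HasNearMinimizers H l T f →
      HasAlexandrovAt f x.2 S x.1 → ∀ v, ⟪S v, v⟫ ≤ ⟪S₀ v, v⟫ + ε * ‖v‖ ^ 2 := by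
  obtain ⟨T, hT_close, hT⟩ :=
    ((hS₀.eventually (ball_mem_nhds S₀ (half_pos hε))).and (eventually_gt_atTop 0)).exists
  obtain ⟨r, hr, h_le⟩ := exists_forall_inner_le_of_isHeight hH hφ hT (fun t ht => hG t ht.1)
    (isHeight_heightOf (hG T hT)) (half_pos hε)
  refine ⟨r, hr, T, hT, fun x l f S hx hl h_near hf v => ?_⟩
  rw [dist_eq_norm] at hT_close
  have h_limit := inner_apply_le_add_of_norm_sub_le
    ((heightOf (GreenT φ T x₀) - S₀).le_of_opNorm_le hT_close.le v)
  linarith [h_le x l f S hx hl h_near hf v]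

end Green

/-! ### Approximated solutions near an upper Green regular solution -/

section ApproxSolution

variable {d : ℕ} {H : Phase d → ℝ} {φ : ℝ → Phase d → Phase d} {w u : Euc d → ℝ} {δ ε η : ℝ}
  {p θ : Euc d} {R S : Euc d →L[ℝ] Euc d}

theorem HasAlexandrovAt.add_inner (h : HasAlexandrovAt u p S θ) (c : Euc d) :
    HasAlexandrovAt (fun q => u q + ⟪c, q⟫) (p + c) S θ := by
  refine hasAlexandrovAt_of_isLittleO (h.2.congr_left fun y => ?_)
  rw [inner_add_left, inner_sub_right c]
  ring

/-- `u` is a `δ`-approximation of `w`: it is `C¹`-close to `w` and, after adding a linear form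
(a cohomology class), it is nearly minimized over the time interval `[-δ⁻¹, 0]` by curves for the
Lagrangian with discount `l`. This covers the three families of approximated solutions. -/
structure IsApproxSolution (H : Phase d → ℝ) (w : Euc d → ℝ) (δ : ℝ) (u : Euc d → ℝ) : Prop where
  norm_sub_gradient_le : ∀ q p, HasGradientAt u p q → ‖p - gradient w q‖ ≤ δ
  exists_hasNearMinimizers : ∃ c : Euc d, ∃ l : ℝ, ‖c‖ < δ ∧ l ∈ Ico 0 δ ∧
    HasNearMinimizers H l δ⁻¹ (fun q => u q + ⟪c, q⟫)

theorem IsApproxSolution.mono {δ' : ℝ} (h : IsApproxSolution H w δ u) (hδ : 0 < δ)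
    (hδδ' : δ ≤ δ') : IsApproxSolution H w δ' u := by
  obtain ⟨c, l, hc, hl, h_near⟩ := h.exists_hasNearMinimizers
  exact ⟨fun q p hp => (h.norm_sub_gradient_le q p hp).trans hδδ', c, l, hc.trans_le hδδ',
    ⟨hl.1, hl.2.trans_le hδδ'⟩,
    h_near.mono (inv_nonneg.2 (hδ.le.trans hδδ')) (inv_anti₀ hδ hδδ')⟩

theorem TonelliHam.exists_hasNearMinimizers (hH : TonelliHam H) (hδ : 0 < δ)
    (hu : (∃ l : ℝ, 0 < l ∧ l < δ ∧ IsDiscountedSol H l u) ∨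
      (∃ t ≥ δ⁻¹, ∃ U : Euc d → ℝ, Continuous U ∧ PerFun U ∧
        u = LaxOleinik (LegendreL H) 0 (maneCritical H) 0 U t) ∨
      ∃ c : Euc d, ‖c‖ < δ ∧ IsFixedPtModified H c u) :
    ∃ c : Euc d, ∃ l : ℝ, ‖c‖ < δ ∧ l ∈ Ico 0 δ ∧
      HasNearMinimizers H l δ⁻¹ (fun q => u q + ⟪c, q⟫) := by
  have h_inv : 0 < δ⁻¹ := inv_pos.2 hδ
  have h_zero : ‖(0 : Euc d)‖ < δ := by rwa [norm_zero]
  rcases hu with ⟨l, hl, hlδ, h⟩ | ⟨t, ht, U, hU, hU_per, rfl⟩ | ⟨c, hc, h⟩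
  · refine ⟨0, l, h_zero, ⟨hl.le, hlδ⟩, ?_⟩
    simpa only [inner_zero_left, add_zero] using h.hasNearMinimizers hH hl h_inv.le
  · exact ⟨0, 0, h_zero, ⟨le_rfl, hδ⟩,
      hH.hasNearMinimizers_laxOleinik hU hU_per h_inv.le ht 0 (maneCritical H)⟩
  · exact ⟨c, 0, hc, ⟨le_rfl, hδ⟩, h.hasNearMinimizers hH h_inv⟩

theorem continuous_gradient (hw : ContDiff ℝ 1 w) : Continuous (gradient w) :=
  (LinearIsometryEquiv.continuous _).comp (hw.continuous_fderiv one_ne_zero)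

theorem exists_eventually_inner_le (hH : TonelliHam H) (hφ : IsConformalFlow H 0 φ)
    (hw : ContDiff ℝ 1 w) (hp : HasGradientAt w p θ)
    (hG : ∀ t > (0 : ℝ), ∃ S', IsHeight (GreenT φ t (θ, p)) S')
    (hS : Tendsto (fun t : ℝ => heightOf (GreenT φ t (θ, p))) atTop (nhds S)) (hε : 0 < ε) :
    ∃ δ > 0, ∀ᶠ q in nhds θ, ∀ u, IsApproxSolution H w δ u → ∀ p' S',
      HasAlexandrovAt u p' S' q → ∀ v, ⟪S' v, v⟫ ≤ ⟪S v, v⟫ + ε * ‖v‖ ^ 2 := by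
  obtain ⟨r, hr, T, hT, h_le⟩ := exists_forall_inner_le_of_tendsto_heightOf hH hφ hG hS hε
  have h_grad : ∀ᶠ q in nhds θ, ‖gradient w q - p‖ < r / 4 := by
    rw [← hp.gradient]
    simpa only [dist_eq_norm] using
      (continuous_gradient hw).continuousAt.eventually (ball_mem_nhds _ (by positivity : 0 < r / 4))
  refine ⟨min (r / 4) T⁻¹, by positivity, ?_⟩
  filter_upwards [h_grad, ball_mem_nhds θ hr] with q hq_grad hq_ball u hu p' S' hS'
  obtain ⟨c, l, hc, hl, h_near⟩ := hu.exists_hasNearMinimizers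
  have hlr : l < r / 4 := hl.2.trans_le (min_le_left _ _)
  have h_momentum : ‖p' + c - p‖ < r := by
    rw [show p' + c - p = (p' - gradient w q) + (gradient w q - p) + c by abel]
    linarith [norm_add₃_le (a := p' - gradient w q) (b := gradient w q - p) (c := c),
      (hu.norm_sub_gradient_le q p' hS'.1).trans (min_le_left _ _), hc.trans_le (min_le_left _ _)]
  have h_time : T ≤ (min (r / 4) T⁻¹)⁻¹ :=
    (le_inv_comm₀ hT (by positivity)).2 (min_le_right _ _)
  refine h_le (q, p' + c) l _ S' ?_ hl.1 (h_near.mono hT.le h_time) (hS'.add_inner c)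
  simp only [Prod.mk_sub_mk, sub_zero, Prod.norm_def, sup_lt_iff, Real.norm_of_nonneg hl.1]
  exact ⟨⟨by rwa [← dist_eq_norm], h_momentum⟩, by linarith⟩

/-- The points where `w` agrees with the quadratic Taylor polynomial of Hessian `R`, up to an error
`η ‖h‖²` for increments `‖h‖ < r`. These sets are closed, and make the merely pointwise second
differentiability of `w` uniform. -/
def taylorSet (w : Euc d → ℝ) (η : ℝ) (R : Euc d →L[ℝ] Euc d) (r : ℝ) : Set (Euc d) :=
  {θ | ∀ h ∈ ball (0 : Euc d) r,
    |w (θ + h) - w θ - ⟪gradient w θ, h⟫ - 1 / 2 * ⟪R h, h⟫| ≤ η * ‖h‖ ^ 2}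

theorem isClosed_taylorSet (hw : ContDiff ℝ 1 w) (η : ℝ) (R : Euc d →L[ℝ] Euc d) (r : ℝ) :
    IsClosed (taylorSet w η R r) := by
  have h_cont := hw.continuous
  have h_grad := continuous_gradient hw
  simp only [taylorSet, ofPred_forall]
  exact isClosed_biInter fun h _ => isClosed_le (by fun_prop) continuous_const

theorem taylorSet_antitone (w : Euc d → ℝ) (η : ℝ) (R : Euc d →L[ℝ] Euc d) :
    Antitone (taylorSet w η R) := fun _ _ h_le _ hθ h hh => hθ h (ball_subset_ball h_le hh)

theorem HasAlexandrovAt.exists_mem_taylorSet (h : HasAlexandrovAt w p S θ) (hη : 0 < η)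
    (hR : ‖S - R‖ ≤ η) : ∃ r > 0, θ ∈ taylorSet w η R r := by
  obtain ⟨r, hr, h_taylor⟩ := Metric.eventually_nhds_iff.1 (isLittleO_iff.1 h.2 (half_pos hη))
  refine ⟨r, hr, fun k hk => ?_⟩
  have h_S : |w (θ + k) - w θ - ⟪p, k⟫ - 1 / 2 * ⟪S k, k⟫| ≤ η / 2 * ‖k‖ ^ 2 := by
    simpa only [add_sub_cancel_left, norm_pow, norm_norm, Real.norm_eq_abs, abs_norm] using
      h_taylor (y := θ + k) (by simpa using hk)
  have h_SR := inner_apply_le_add_of_norm_sub_le ((S - R).le_of_opNorm_le hR k)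
  have h_RS := inner_apply_le_add_of_norm_sub_le
    ((R - S).le_of_opNorm_le ((norm_sub_rev R S).trans_le hR) k)
  rw [h.1.gradient]
  rw [abs_le] at h_S ⊢
  constructor <;> linarith

theorem HasAlexandrovAt.inner_le_of_mem_taylorSet (h : HasAlexandrovAt w p S θ) (hη : 0 < η)
    {r : ℝ} (hr : 0 < r) (hθ : θ ∈ taylorSet w η R r) (v : Euc d) :
    ⟪R v, v⟫ ≤ ⟪S v, v⟫ + 4 * η * ‖v‖ ^ 2 := by
  obtain ⟨r', hr', hθ'⟩ := h.exists_mem_taylorSet hη (R := S) (by simpa using hη.le)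
  refine inner_apply_le_add_of_eventually ?_ v
  filter_upwards [ball_mem_nhds 0 hr, ball_mem_nhds 0 hr'] with k hk hk'
  linarith [(abs_le.1 (hθ k hk)).1, (abs_le.1 (hθ' k hk')).2]

/-- The points at which the quadratic form of `R`, up to `ε`, dominates the second derivatives of
all `δ`-approximations of `w`. -/
def hessianBoundSet (H : Phase d → ℝ) (w : Euc d → ℝ) (ε : ℝ) (R : Euc d →L[ℝ] Euc d) (δ : ℝ) :
    Set (Euc d) :=
  {θ | ∀ u, IsApproxSolution H w δ u → ∀ p S, HasAlexandrovAt u p S θ →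
    ∀ v, ⟪S v, v⟫ ≤ ⟪R v, v⟫ + ε * ‖v‖ ^ 2}

theorem hessianBoundSet_subset {δ' : ℝ} (hδ : 0 < δ) (hδδ' : δ ≤ δ') :
    hessianBoundSet H w ε R δ' ⊆ hessianBoundSet H w ε R δ :=
  fun _ hθ u hu => hθ u (hu.mono hδ hδδ')

/-- The points near which a single Hessian `R`, taken from a fixed countable dense set, both
dominates the second derivatives of the `δ`-approximations of `w` and is almost that of `w`.
Countability is what makes this set measurable. -/
def goodSet (H : Phase d → ℝ) (w : Euc d → ℝ) (ε δ : ℝ) : Set (Euc d) :=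
  ⋃ j, taylorSet w (ε / 16) (TopologicalSpace.denseSeq (Euc d →L[ℝ] Euc d) j) δ ∩
    interior (hessianBoundSet H w (ε / 2) (TopologicalSpace.denseSeq (Euc d →L[ℝ] Euc d) j) δ)

theorem measurableSet_goodSet (hw : ContDiff ℝ 1 w) (ε δ : ℝ) :
    MeasurableSet (goodSet H w ε δ) :=
  .iUnion fun _ => (isClosed_taylorSet hw _ _ _).measurableSet.inter
    isOpen_interior.measurableSet

theorem goodSet_subset {δ' : ℝ} (hδ : 0 < δ) (hδδ' : δ ≤ δ') :
    goodSet H w ε δ' ⊆ goodSet H w ε δ :=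
  iUnion_mono fun _ => inter_subset_inter (taylorSet_antitone _ _ _ hδδ')
    (interior_mono (hessianBoundSet_subset hδ hδδ'))

theorem ae_exists_mem_goodSet (hH : TonelliHam H) (hφ : IsConformalFlow H 0 φ)
    (hw : ContDiff ℝ 1 w) (h_reg : UpperGreenRegular φ w) (hε : 0 < ε) :
    ∀ᵐ θ ∂(volume : Measure (Euc d)), ∃ δ > 0, θ ∈ goodSet H w ε δ := by
  filter_upwards [h_reg] with θ ⟨p, S, hp, hG, hS, h_alex⟩
  obtain ⟨δ, hδ, h_bound⟩ :=
    exists_eventually_inner_le hH hφ hw hp hG hS (by positivity : 0 < ε / 4)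
  obtain ⟨j, hj⟩ := (TopologicalSpace.denseRange_denseSeq
    (Euc d →L[ℝ] Euc d)).exists_dist_lt S (by positivity : 0 < ε / 16)
  rw [dist_eq_norm] at hj
  obtain ⟨r, hr, h_taylor⟩ := h_alex.exists_mem_taylorSet (by positivity) hj.le
  have h_interior : θ ∈ interior (hessianBoundSet H w (ε / 2)
      (TopologicalSpace.denseSeq (Euc d →L[ℝ] Euc d) j) δ) := by
    rw [mem_interior_iff_mem_nhds]
    filter_upwards [h_bound] with q hq u hu p' S' hS' v
    have h_dense := inner_apply_le_add_of_norm_sub_le ((S - _).le_of_opNorm_le hj.le v)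
    have h_nonneg : 0 ≤ ε * ‖v‖ ^ 2 := by positivity
    linarith [hq u hu p' S' hS' v]
  exact ⟨min r δ, by positivity, mem_iUnion.2 ⟨j,
    taylorSet_antitone _ _ _ (min_le_left _ _) h_taylor,
    interior_mono (hessianBoundSet_subset (by positivity) (min_le_right _ _)) h_interior⟩⟩

theorem symLT_sub_of_mem_goodSet {p' : Euc d} {S' : Euc d →L[ℝ] Euc d} (hε : 0 < ε) (hδ : 0 < δ)
    (hθ : θ ∈ goodSet H w ε δ) (hu : IsApproxSolution H w δ u) (hS : HasAlexandrovAt u p S θ)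
    (hS' : HasAlexandrovAt w p' S' θ) : SymLT (S - S') (ε • .id ℝ (Euc d)) := by
  intro v hv
  obtain ⟨j, h_taylor, h_bound⟩ := mem_iUnion.1 hθ
  have h_upper := interior_subset h_bound u hu p S hS v
  have h_lower := hS'.inner_le_of_mem_taylorSet (by positivity) hδ h_taylor v
  have h_pos : 0 < ε * ‖v‖ ^ 2 := by positivity
  rw [sub_apply, smul_apply, ContinuousLinearMap.id_apply, inner_sub_left, real_inner_smul_left,
    real_inner_self_eq_norm_sq]
  linarith

theorem exists_measure_diff_lt {α : Type*} [MeasurableSpace α] {μ : Measure α} {G : ℝ → Set α}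
    (hG : ∀ δ, MeasurableSet (G δ)) (hG_anti : ∀ ⦃δ δ'⦄, 0 < δ → δ ≤ δ' → G δ' ⊆ G δ)
    (hG_ae : ∀ᵐ x ∂μ, ∃ δ > 0, x ∈ G δ) {K : Set α} (hK : MeasurableSet K) (hμK : μ K ≠ ⊤)
    {ε : ENNReal} (hε : 0 < ε) : ∃ δ > 0, μ (K \ G δ) < ε := by
  have h_lim := tendsto_measure_biInter_gt (μ := μ) (s := fun δ => K \ G δ) (a := 0)
    (fun δ _ => (hK.diff (hG δ)).nullMeasurableSet)
    (fun δ δ' hδ hδδ' => sdiff_subset_sdiff_right (hG_anti hδ hδδ'))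
    ⟨1, one_pos, ne_top_of_le_ne_top hμK (measure_mono sdiff_subset)⟩
  have h_null : μ (⋂ δ > 0, K \ G δ) = 0 := by
    refine measure_mono_null (fun x hx => ?_) (ae_iff.1 hG_ae)
    rintro ⟨δ, hδ, h_mem⟩
    exact (mem_iInter₂.1 hx δ hδ).2 h_mem
  rw [h_null] at h_lim
  obtain ⟨δ, h_lt, hδ⟩ := ((h_lim.eventually_lt_const hε).and self_mem_nhdsWithin).exists
  exact ⟨δ, hδ, h_lt⟩

end ApproxSolution

theorem stmt_17_general {d : ℕ} {H : Phase d → ℝ} (hH : TonelliHam H)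
    {φ : ℝ → Phase d → Phase d} (hφ : IsConformalFlow H 0 φ) {w : Euc d → ℝ}
    (hw : ContDiff ℝ 1 w) (h_reg : UpperGreenRegular φ w) {ε : ℝ} (hε : 0 < ε) :
    ∃ δ > 0, ∀ u : Euc d → ℝ, SemiConcave u → IsApproxSolution H w δ u →
      volume {θ : Euc d | θ ∈ fundCube d ∧
        ¬ ∃ p S p' S', HasAlexandrovAt u p S θ ∧ HasAlexandrovAt w p' S' θ ∧
          SymLT (S - S') (ε • .id ℝ (Euc d))} < ENNReal.ofReal ε := by
  obtain ⟨δ, hδ, h_lt⟩ := exists_measure_diff_lt (measurableSet_goodSet hw ε)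
    (fun _ _ => goodSet_subset) (ae_exists_mem_goodSet hH hφ hw h_reg hε)
    measurableSet_closedBall measure_closedBall_lt_top.ne (ENNReal.ofReal_pos.2 hε)
  refine ⟨δ, hδ, fun u hu_semi hu => (measure_mono_ae ?_).trans_lt h_lt⟩
  filter_upwards [hu_semi.ae_exists_hasAlexandrovAt, h_reg]
    with θ ⟨p, S, hS⟩ ⟨p', S', _, _, _, hS'⟩ ⟨h_cube, h_bad⟩
  exact ⟨fundCube_subset_closedBall h_cube, fun h_good =>
    h_bad ⟨p, S, p', S', hS, hS', symLT_sub_of_mem_goodSet hε hδ h_good hu hS hS'⟩⟩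

/-- **Lemma (a.e. upper bound on `D²u - D²u_∞`).** Let `u_∞` be a `C¹` upper Green
regular weak K.A.M. solution of the Tonelli Hamiltonian `H` on `𝕋^d × ℝ^d`.  For every
sufficiently small `ε > 0`, every semi-concave approximated solution `u` — a discounted
solution `u_λ` with `λ` small enough, an image `T_t U` of the Lax–Oleinik semigroup with
`t` large enough, or a fixed point `u_c` of the modified semigroup with `c` close enough
to `0` — which is close enough to `u_∞` in the uniform `C¹` topology satisfies
`Leb{θ : D²u(θ) - D²u_∞(θ) ≮ ε·Id} < ε`. -/
theorem stmt_17 {d : ℕ} (H : Phase d → ℝ) (hH : TonelliHam H)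
    (φ : ℝ → Phase d → Phase d) (hφ : IsConformalFlow H 0 φ)
    (uinf : Euc d → ℝ) (h1 : ContDiff ℝ 1 uinf) (hperu : PerFun uinf)
    (hKAM : IsWeakKAM H uinf) (hreg : UpperGreenRegular φ uinf) :
    ∃ ε0 > (0:ℝ), ∀ ε : ℝ, 0 < ε → ε < ε0 →
      ∃ δ > (0:ℝ), ∃ T > (0:ℝ), ∀ u : Euc d → ℝ, SemiConcave u → PerFun u →
        (∀ q, |u q - uinf q| ≤ δ) →
        (∀ q p, HasGradientAt u p q → ‖p - gradient uinf q‖ ≤ δ) →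
        ((∃ lam : ℝ, 0 < lam ∧ lam < δ ∧ IsDiscountedSol H lam u) ∨
         (∃ t ≥ T, ∃ U : Euc d → ℝ, Continuous U ∧ PerFun U ∧
            u = LaxOleinik (LegendreL H) 0 (maneCritical H) 0 U t) ∨
         (∃ c : Euc d, ‖c‖ < δ ∧ IsFixedPtModified H c u)) →
        volume {θ : Euc d | θ ∈ fundCube d ∧
          ¬ ∃ p S p' S', HasAlexandrovAt u p S θ ∧ HasAlexandrovAt uinf p' S' θ ∧
            SymLT (S - S') (ε • ContinuousLinearMap.id ℝ (Euc d))}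
          < ENNReal.ofReal ε := by
  refine ⟨1, one_pos, fun ε hε _ => ?_⟩
  obtain ⟨δ, hδ, h_lt⟩ := stmt_17_general hH hφ h1 hreg hε
  exact ⟨δ, hδ, δ⁻¹, inv_pos.2 hδ, fun u hu _ _ h_grad h_approx =>
    h_lt u hu ⟨h_grad, hH.exists_hasNearMinimizers hδ h_approx⟩⟩
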